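/- arXiv:2406.13780 — 3 statements merged into one kernel-verified Lean document; each statement's English description precedes it below -/
import Mathlib

section
/- For every positive integer a there exist constants C > 0 and N such that for every integer n > N, f_{K_{a,a},K_4}(n) ≤ C · n^{1/2 − 1/(16a−10)} · (log n)^{3}. -/
/-!
The graph is built in the manner of Mattheus and Verstraëte. For a prime `q`, `unital_exists` takes
the affine points of the Hermitian curve over `𝔽_{q²}` together with the lines meeting the curve in
at least `q` of them: at most `q³` points and about `q⁴` lines, `q` to `q + 1` points on each line,
any two lines sharing at most one point. By `onan` this geometry contains no four lines that meet
pairwise in six distinct points. Colour the flags (point, line) with two colours and join two lines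
when they meet in a point where their colours differ (`cutGraph`). Four pairwise adjacent lines
would include three through one point, which would need three different colours, so the graph is
`K₄`-free (`cutGraph_K4`).

A random colouring splits every set `X` of at least `4q²` lines evenly enough: the minority colour
classes at the points have total size at least `q|X| / 16` (`exists_cut`). Cutting these classes
into `2a`-tuples of equal blocks (`exists_blocks`) gives a linear system of disjoint parts, and a set
of lines carrying no `K_{a,a}` of the graph misses a part of every tuple. For such systems a
container argument (`container_step`) produces few sets `Z`, each a positive proportion of `X`, such
that every admissible set avoids one of them. Iterating it (`iterate_containers`) covers all
`K_{a,a}`-free sets of lines by `exp(O(s log² q))` containers of size `O(q²)`, where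
`s ≈ q ^ (2 - 1 / (2a - 1))`.

Finally, a random map from `n ≈ q ^ (4 - 1 / (2a - 1))` vertices to the lines (`exists_map`) sends
fewer than `t ≈ q ^ (2 - 1 / (2a - 1)) log² q` vertices into any container. The graph pulled back
along it is `K₄`-free and its `K_{a,a}`-independence number is at most `t`; the exponent in terms of
`n` is `(4a - 3) / (8a - 5) = 1/2 - 1 / (16a - 10)`. Bertrand's postulate supplies a suitable prime
`q` for every large `n`.
-/

/-- `G` contains a copy of `F` as a (not necessarily induced) subgraph, i.e. there is an
injective graph homomorphism from `F` to `G`. -/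
def ContainsCopy {α β : Type*} (F : SimpleGraph α) (G : SimpleGraph β) : Prop :=
  ∃ f : α → β, Function.Injective f ∧ ∀ ⦃a b : α⦄, F.Adj a b → G.Adj (f a) (f b)

/-- The `F`-independence number of a finite graph `G`: the maximum size of a set `S` of
vertices such that the induced subgraph `G[S]` contains no copy of `F`. -/
noncomputable def fIndepNum {α β : Type*} [Fintype β] (F : SimpleGraph α) (G : SimpleGraph β) :
    ℕ :=
  sSup {k | ∃ S : Finset β, S.card = k ∧ ¬ ContainsCopy F (G.induce (S : Set β))}

/-- `f_{F,H}(n)`: the minimum of the `F`-independence number over all `H`-free graphs on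
`n` vertices. -/
noncomputable def minFIndep {α γ : Type*} (F : SimpleGraph α) (H : SimpleGraph γ) (n : ℕ) : ℕ :=
  sInf {k | ∃ G : SimpleGraph (Fin n), ¬ ContainsCopy H G ∧ fIndepNum F G = k}

/-- The Turán number `ex(n, F)`: the maximum number of edges of an `F`-free graph on `n`
vertices. -/
noncomputable def turanNum (n : ℕ) {α : Type*} (F : SimpleGraph α) : ℕ :=
  sSup {k | ∃ G : SimpleGraph (Fin n), ¬ ContainsCopy F G ∧ k = Nat.card G.edgeSet}


/-! ### Hermitian curve: points, secant lines, and the absence of O’Nan configurations -/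

section Geometry
open scoped Classical

/-- Let `σ` be the conjugation and `⟨u, v⟩ = y_u + σ y_v - x_u σ x_v` the Hermitian form, so that the
isotropic points are those of the curve. Suppose `u`, `v`, `P` are isotropic points on one line
`y = c x + d` and a second line `y = c4 x + d4` also passes through `P`; let
`e z = y_z - c4 x_z - d4`. Then `e_v σ(e_u) ⟨u, v⟩` is negated by `σ`: the vector `e_v u - e_u v` is a
multiple of `P`, hence isotropic, and expanding its norm leaves only the two cross terms. -/
lemma onan_edge {K : Type} [Field K] (σ : K →+* K) (hσ : ∀ x, σ (σ x) = x)
    (xu yu xv yv x y c d c4 d4 : K)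
    (hu : yu + σ yu = xu * σ xu) (hv : yv + σ yv = xv * σ xv) (hP : y + σ y = x * σ x)
    (lu : yu = c * xu + d) (lv : yv = c * xv + d) (lP : y = c * x + d)
    (lP4 : y = c4 * x + d4) :
    σ ((yv - c4 * xv - d4) * σ (yu - c4 * xu - d4) * (yu + σ yv - xu * σ xv)) =
      - ((yv - c4 * xv - d4) * σ (yu - c4 * xu - d4) * (yu + σ yv - xu * σ xv)) := by
  obtain ⟨eu, heu⟩ : ∃ e, e = yu - c4 * xu - d4 := ⟨_, rfl⟩
  obtain ⟨ev, hev⟩ : ∃ e, e = yv - c4 * xv - d4 := ⟨_, rfl⟩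
  have h1 : (ev - eu) * x = ev * xu - eu * xv := by
    have : (c - c4) * x = d4 - d := by linear_combination lP4 - lP
    rw [heu, hev, lu, lv]; linear_combination (xv - xu) * this
  have h2 : (ev - eu) * y = ev * yu - eu * yv := by
    rw [lP, lu, lv]; linear_combination c * h1
  have h1' := congrArg σ h1
  have h2' := congrArg σ h2
  simp only [map_mul, map_sub] at h1' h2'
  rw [← heu, ← hev]
  simp only [map_mul, map_sub, map_add, hσ]
  linear_combination -(ev - eu) * (σ ev - σ eu) * hP + (σ ev - σ eu) * h2 + (ev - eu) * h2'
    - (ev * xu - eu * xv) * h1' - (σ ev - σ eu) * σ x * h1 + ev * σ ev * hu + eu * σ eu * hv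

/-- For isotropic `u`, `v`, `w` the Gram determinant of the Hermitian form is
`h + σ h` with `h = ⟨u, v⟩⟨v, w⟩⟨w, u⟩`, and up to sign it equals `D σ(D)`, where `D` is the
determinant whose vanishing means that the three points are collinear. -/
lemma onan_gram {K : Type} [Field K] (σ : K →+* K) (hσ : ∀ x, σ (σ x) = x)
    (xu yu xv yv xw yw : K)
    (hu : yu + σ yu = xu * σ xu) (hv : yv + σ yv = xv * σ xv) (hw : yw + σ yw = xw * σ xw)
    (h0 : (yu + σ yv - xu * σ xv) * (yv + σ yw - xv * σ xw) * (yw + σ yu - xw * σ xu) +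
      σ ((yu + σ yv - xu * σ xv) * (yv + σ yw - xv * σ xw) * (yw + σ yu - xw * σ xu)) = 0) :
    (xv - xu) * (yw - yu) - (xw - xu) * (yv - yu) = 0 := by
  set D := (xv - xu) * (yw - yu) - (xw - xu) * (yv - yu) with hD
  have hDD : D * σ D = 0 := by
    rw [hD]
    simp only [map_mul, map_sub, map_add, hσ] at h0 ⊢
    have hu' : σ yu = xu * σ xu - yu := by linear_combination hu
    have hv' : σ yv = xv * σ xv - yv := by linear_combination hv
    have hw' : σ yw = xw * σ xw - yw := by linear_combination hw
    rw [hu', hv', hw'] at h0 ⊢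
    linear_combination h0
  rcases mul_eq_zero.1 hDD with h | h
  · exact h
  · exact (map_eq_zero σ).1 h

/-- Four lines of the affine plane cannot meet pairwise in six points of the Hermitian curve
none of which lies on a third of the lines. Multiplying the three identities of `onan_edge` for the
triangle formed by the lines `0`, `1`, `2`, cut by the line `3`, shows through `onan_gram` that its
vertices are collinear. -/
lemma onan {K : Type} [Field K] (σ : K →+* K) (hσ : ∀ x, σ (σ x) = x)
    (c d : Fin 4 → K) (x y : Fin 4 → Fin 4 → K)
    (hiso : ∀ i j, i < j → y i j + σ (y i j) = x i j * σ (x i j))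
    (hl : ∀ i j, i < j → y i j = c i * x i j + d i)
    (hr : ∀ i j, i < j → y i j = c j * x i j + d j)
    (hno : ∀ i j k, i < j → i ≠ k → j ≠ k → y i j ≠ c k * x i j + d k) : False := by
  have A := onan_edge σ hσ (x 0 1) (y 0 1) (x 0 2) (y 0 2) (x 0 3) (y 0 3) (c 0) (d 0) (c 3) (d 3)
    (hiso _ _ (by decide)) (hiso _ _ (by decide)) (hiso _ _ (by decide)) (hl _ _ (by decide))
    (hl _ _ (by decide)) (hl _ _ (by decide)) (hr _ _ (by decide))
  have B := onan_edge σ hσ (x 0 2) (y 0 2) (x 1 2) (y 1 2) (x 2 3) (y 2 3) (c 2) (d 2) (c 3) (d 3)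
    (hiso _ _ (by decide)) (hiso _ _ (by decide)) (hiso _ _ (by decide)) (hr _ _ (by decide))
    (hr _ _ (by decide)) (hl _ _ (by decide)) (hr _ _ (by decide))
  have C := onan_edge σ hσ (x 1 2) (y 1 2) (x 0 1) (y 0 1) (x 1 3) (y 1 3) (c 1) (d 1) (c 3) (d 3)
    (hiso _ _ (by decide)) (hiso _ _ (by decide)) (hiso _ _ (by decide)) (hl _ _ (by decide))
    (hr _ _ (by decide)) (hl _ _ (by decide)) (hr _ _ (by decide))
  have nz : ∀ i j, i < j → i ≠ 3 → j ≠ 3 → y i j - c 3 * x i j - d 3 ≠ 0 := by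
    intro i j h1 h2 h3 h4
    exact hno i j 3 h1 h2 h3 (by linear_combination h4)
  have n1 := nz 0 1 (by decide) (by decide) (by decide)
  have n2 := nz 0 2 (by decide) (by decide) (by decide)
  have n3 := nz 1 2 (by decide) (by decide) (by decide)
  obtain ⟨e1, he1⟩ : ∃ e, e = y 0 1 - c 3 * x 0 1 - d 3 := ⟨_, rfl⟩
  obtain ⟨e2, he2⟩ : ∃ e, e = y 0 2 - c 3 * x 0 2 - d 3 := ⟨_, rfl⟩
  obtain ⟨e3, he3⟩ : ∃ e, e = y 1 2 - c 3 * x 1 2 - d 3 := ⟨_, rfl⟩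
  rw [← he1] at A C n1
  rw [← he2] at A B n2
  rw [← he3] at B C n3
  have hD := onan_gram σ hσ (x 0 1) (y 0 1) (x 0 2) (y 0 2) (x 1 2) (y 1 2)
    (hiso _ _ (by decide)) (hiso _ _ (by decide)) (hiso _ _ (by decide)) (by
      obtain ⟨a, ha⟩ : ∃ a, a = y 0 1 + σ (y 0 2) - x 0 1 * σ (x 0 2) := ⟨_, rfl⟩
      obtain ⟨b, hb⟩ : ∃ a, a = y 0 2 + σ (y 1 2) - x 0 2 * σ (x 1 2) := ⟨_, rfl⟩
      obtain ⟨g, hg⟩ : ∃ a, a = y 1 2 + σ (y 0 1) - x 1 2 * σ (x 0 1) := ⟨_, rfl⟩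
      rw [← ha] at A
      rw [← hb] at B
      rw [← hg] at C
      rw [← ha, ← hb, ← hg]
      have hN : e1 * e2 * e3 * σ (e1 * e2 * e3) ≠ 0 :=
        mul_ne_zero (by simp [n1, n2, n3]) (by simp [n1, n2, n3])
      refine (mul_eq_zero.1 (?_ : (e1 * e2 * e3 * σ (e1 * e2 * e3)) * _ = 0)).resolve_left hN
      simp only [map_mul, hσ] at A B C ⊢
      have hABC : (σ e2 * e1 * σ a) * (σ e3 * e2 * σ b) * (σ e1 * e3 * σ g) =
        (-(e2 * σ e1 * a)) * (-(e3 * σ e2 * b)) * (-(e1 * σ e3 * g)) := by rw [A, B, C]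
      linear_combination hABC)
  have hne : x 0 2 - x 0 1 ≠ 0 := by
    intro h
    have hxx : x 0 2 = x 0 1 := by linear_combination h
    refine hno 0 1 2 (by decide) (by decide) (by decide) ?_
    have h1 := hl 0 1 (by decide)
    have h2 := hl 0 2 (by decide)
    have h3 := hr 0 2 (by decide)
    rw [hxx] at h2 h3
    rw [h1, ← h2, h3]
  refine hno 1 2 0 (by decide) (by decide) (by decide) ?_
  have h1 := hl 0 1 (by decide)
  have h2 := hl 0 2 (by decide)
  have h3 : (x 0 2 - x 0 1) * (y 1 2 - (c 0 * x 1 2 + d 0)) = 0 := by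
    rw [h1, h2] at hD
    linear_combination hD
  exact sub_eq_zero.1 ((mul_eq_zero.1 h3).resolve_left hne)

/-- A polynomial root count: every fibre of the trace `y ↦ y + y ^ p` has at most `p` elements. -/
lemma card_trace_le {K : Type} [Field K] [Fintype K] (p : ℕ) (hp : 2 ≤ p) (e : K) :
    (Finset.univ.filter fun y : K => y + y ^ p = e).card ≤ p := by
  open Polynomial in
  set f : K[X] := X ^ p + (X - C e) with hf
  have hdl : (X - C e : K[X]).degree < (X ^ p : K[X]).degree := by
    rw [degree_X_sub_C, degree_X_pow]; exact_mod_cast hp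
  have hd : f.natDegree = p := by
    rw [hf, natDegree_add_eq_left_of_degree_lt hdl, natDegree_X_pow]
  have hne : f ≠ 0 := by
    intro h; rw [h] at hd; simp at hd; omega
  calc _ ≤ f.roots.toFinset.card := by
        refine Finset.card_le_card fun y hy => ?_
        have := (Finset.mem_filter.1 hy).2
        rw [Multiset.mem_toFinset, mem_roots hne, IsRoot.def, hf]
        simp
        linear_combination this
    _ ≤ f.roots.card := Multiset.toFinset_card_le _
    _ ≤ f.natDegree := card_roots' f
    _ = p := hd

lemma card_norm_le {K : Type} [Field K] [Fintype K] (n : ℕ) (hn : 0 < n) (e : K) :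
    (Finset.univ.filter fun y : K => y ^ n = e).card ≤ n := by
  calc _ ≤ (Polynomial.nthRoots n e).toFinset.card := by
        refine Finset.card_le_card fun y hy => ?_
        rw [Multiset.mem_toFinset, Polynomial.mem_nthRoots hn]
        exact (Finset.mem_filter.1 hy).2
    _ ≤ _ := Multiset.toFinset_card_le _
    _ ≤ n := Polynomial.card_nthRoots n e

/-- The norm `w ↦ w ^ (p + 1)` of `𝔽_{p²}` over `𝔽_p` is onto the nonzero elements of `𝔽_p`. -/
lemma norm_surj {K : Type} [Field K] [Fintype K] (p : ℕ) (hp : 2 ≤ p)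
    (hK : Fintype.card K = p ^ 2) (τ : K) (h0 : τ ≠ 0) (h : τ ^ p = τ) :
    ∃ w : K, w ≠ 0 ∧ w ^ (p + 1) = τ := by
  obtain ⟨g, hg⟩ := IsCyclic.exists_generator (α := Kˣ)
  obtain ⟨k, hk⟩ := (mem_powers_iff_mem_zpowers.2 (hg (Units.mk0 τ h0)) :
    Units.mk0 τ h0 ∈ Submonoid.powers g)
  have hgk : g ^ k = Units.mk0 τ h0 := hk
  have ho : orderOf g = p ^ 2 - 1 := by
    rw [orderOf_eq_card_of_forall_mem_zpowers hg, Nat.card_eq_fintype_card, Fintype.card_units, hK]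
  have h1 : g ^ (k * (p - 1)) = 1 := by
    rw [pow_mul, hgk]
    ext
    have : τ * τ ^ (p - 1) = τ * 1 := by
      rw [← pow_succ', Nat.sub_add_cancel (by omega), h, mul_one]
    simpa using mul_left_cancel₀ h0 this
  have h2 := orderOf_dvd_of_pow_eq_one h1
  rw [ho, show p ^ 2 - 1 = (p + 1) * (p - 1) by
    simpa using Nat.sq_sub_sq p 1] at h2
  obtain ⟨j, hj⟩ := Nat.dvd_of_mul_dvd_mul_right (by omega) h2
  refine ⟨(g ^ j : Kˣ), Units.ne_zero _, ?_⟩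
  rw [← Units.val_pow_eq_pow_val, ← pow_mul, mul_comm, ← hj, hgk]
  rfl

/-- There are in fact exactly `p + 1` elements of norm one, since the unit group is cyclic of order
`(p + 1) (p - 1)`; the bound `p` is enough here. -/
lemma card_norm_one {K : Type} [Field K] [Fintype K] (p : ℕ)
    (hK : Fintype.card K = p ^ 2) :
    p ≤ (Finset.univ.filter fun z : K => z ^ (p + 1) = 1).card := by
  have h1 := IsCyclic.card_powMonoidHom_ker (G := Kˣ) (p + 1)
  rw [Nat.card_eq_fintype_card (α := Kˣ), Fintype.card_units, hK,
    show p ^ 2 - 1 = (p + 1) * (p - 1) by simpa using Nat.sq_sub_sq p 1,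
    Nat.gcd_mul_right_left, Nat.card_eq_fintype_card] at h1
  have h2 : Fintype.card (powMonoidHom (p + 1) : Kˣ →* Kˣ).ker ≤
      (Finset.univ.filter fun z : K => z ^ (p + 1) = 1).card := by
    rw [← Finset.card_univ]
    refine Finset.card_le_card_of_injOn (fun z => ((z : Kˣ) : K)) ?_ ?_
    · intro z _
      have h3 : (z : Kˣ) ^ (p + 1) = 1 := by simpa using (MonoidHom.mem_ker.1 z.2)
      simp only [Finset.coe_filter, Finset.mem_univ, true_and, Set.mem_ofPred_eq]
      rw [← Units.val_pow_eq_pow_val, h3]; rfl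
    · intro z _ z' _ h
      exact Subtype.ext (Units.ext h)
  omega

/-- The geometry of the Hermitian curve. Points are the `(x, y)` over `𝔽_{p²}` with
`y + y ^ p = x ^ (p + 1)`; lines are the `y = c x + d` for which the trace of `d` plus the norm of `c`
is nonzero, that is, the non-vertical lines that are not tangent to the curve. The last conjunct says
that there is no O’Nan configuration. -/
theorem unital_exists (p : ℕ) (hp : p.Prime) :
    ∃ (P L : Type) (_ : Fintype P) (_ : Fintype L) (Inc : P → L → Prop),
      Fintype.card P ≤ p ^ 3 ∧ Fintype.card L ≤ p ^ 4 ∧ p ^ 4 ≤ 2 * Fintype.card L ∧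
      (∀ l, p ≤ (Finset.univ.filter fun x => Inc x l).card) ∧
      (∀ l, (Finset.univ.filter fun x => Inc x l).card ≤ p + 1) ∧
      (∀ x x' l l', l ≠ l' → Inc x l → Inc x l' → Inc x' l → Inc x' l' → x = x') ∧
      (∀ (l : Fin 4 → L) (x : Fin 4 → Fin 4 → P),
        (∀ i j, i < j → Inc (x i j) (l i) ∧ Inc (x i j) (l j)) →
        ∃ i j k, i < j ∧ i ≠ k ∧ j ≠ k ∧ Inc (x i j) (l k)) := by
  have : Fact p.Prime := ⟨hp⟩
  have hp2 := hp.two_le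
  let K := GaloisField p 2
  let _ : Fintype K := Fintype.ofFinite K
  have hK : Fintype.card K = p ^ 2 := by
    rw [← Nat.card_eq_fintype_card]; exact GaloisField.card p 2 two_ne_zero
  let σ : K →+* K := frobenius K p
  have hσp : ∀ x, σ x = x ^ p := fun x => rfl
  have hσ : ∀ x, σ (σ x) = x := by
    intro x
    rw [hσp, hσp, ← pow_mul, ← sq, ← hK]
    exact FiniteField.pow_card x
  have hN : ∀ x : K, x * σ x = x ^ (p + 1) := fun x => by rw [hσp, pow_succ']
  let P := {z : K × K // z.2 + σ z.2 = z.1 * σ z.1}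
  let L := {l : K × K // ∃ w : K, w ≠ 0 ∧ l.2 + σ l.2 + l.1 * σ l.1 = w * σ w}
  have hKK : Fintype.card (K × K) = p ^ 4 := by rw [Fintype.card_prod, hK]; ring
  have hfib : ∀ f : K → K, (Finset.univ.filter fun z : K × K => z.2 + σ z.2 = f z.1).card ≤ p ^ 3 := by
    intro f
    have h1 := Finset.card_le_mul_card_image_of_maps_to
      (s := Finset.univ.filter fun z : K × K => z.2 + σ z.2 = f z.1) (t := Finset.univ)
      (f := Prod.fst) (fun _ _ => Finset.mem_univ _) p (by
        intro a _
        refine le_trans (Finset.card_le_card_of_injOn (t := Finset.univ.filter fun y : K => y + y ^ p = f a)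
          Prod.snd ?_ ?_) (card_trace_le p hp2 (f a))
        · intro z hz
          simp only [Finset.coe_filter, Finset.mem_filter, Finset.mem_univ, true_and,
            Set.mem_ofPred_eq] at hz ⊢
          rw [← hz.2, ← hz.1, hσp]
        · intro z hz z' hz' h
          simp only [Finset.coe_filter, Finset.mem_filter, Finset.mem_univ, true_and,
            Set.mem_ofPred_eq] at hz hz'
          exact Prod.ext (hz.2.trans hz'.2.symm) h)
    rw [Finset.card_univ, hK] at h1
    calc _ ≤ _ := h1
      _ = p ^ 3 := by ring
  refine ⟨P, L, inferInstance, inferInstance,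
    fun x l => x.1.2 = l.1.1 * x.1.1 + l.1.2, ?_, ?_, ?_, ?_, ?_, ?_, ?_⟩
  · rw [Fintype.card_subtype]
    exact hfib fun x => x * σ x
  · rw [← hKK]; exact Fintype.card_subtype_le _
  -- the excluded (tangent) lines are those with `d + σ d = - c σ c`, at most `p ^ 3` of them
  · have h1 : (Finset.univ.filter fun l : K × K => ¬ ∃ w : K, w ≠ 0 ∧
        l.2 + σ l.2 + l.1 * σ l.1 = w * σ w).card ≤ p ^ 3 := by
      refine le_trans (Finset.card_le_card ?_) (hfib fun c => - (c * σ c))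
      intro l hl
      simp only [Finset.mem_filter, Finset.mem_univ, true_and] at hl ⊢
      by_contra hcon
      apply hl
      have h0 : l.2 + σ l.2 + l.1 * σ l.1 ≠ 0 := fun h => hcon (by linear_combination h)
      obtain ⟨w, hw, hw'⟩ := norm_surj p hp2 hK _ h0 (by
        rw [← hσp]; simp only [map_add, map_mul, hσ]; ring)
      exact ⟨w, hw, by rw [hN w, hw']⟩
    have h2 := Finset.card_filter_add_card_filter_not (s := (Finset.univ : Finset (K × K)))
      (fun l : K × K => ∃ w : K, w ≠ 0 ∧ l.2 + σ l.2 + l.1 * σ l.1 = w * σ w)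
    rw [Finset.card_univ, hKK] at h2
    rw [Fintype.card_subtype]
    have h3 : 2 * p ^ 3 ≤ p ^ 4 := by
      calc 2 * p ^ 3 ≤ p * p ^ 3 := Nat.mul_le_mul_right _ hp2
        _ = p ^ 4 := by ring
    omega
  -- on the line `(c, d)` the curve is parametrised by `x = σ c + w z` with `z` of norm one
  · rintro ⟨⟨c, d⟩, w, hw, hcd⟩
    refine (card_norm_one p hK).trans ?_
    have hpt : ∀ z : K, z ^ (p + 1) = 1 →
        (c * (σ c + w * z) + d) + σ (c * (σ c + w * z) + d) = (σ c + w * z) * σ (σ c + w * z) := by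
      intro z hz
      rw [← hN] at hz
      simp only [map_add, map_mul, hσ] at hcd ⊢
      linear_combination hcd - w * σ w * hz
    refine Finset.card_le_card_of_injOn (fun z => if hz : z ^ (p + 1) = 1 then
      (⟨(σ c + w * z, c * (σ c + w * z) + d), hpt z hz⟩ : P) else ⟨(0, 0), by simp⟩) ?_ ?_
    · intro z hz
      simp only [Finset.coe_filter, Finset.mem_univ, true_and, Set.mem_ofPred_eq] at hz ⊢
      simp [hz]
    · intro z hz z' hz' h
      simp only [Finset.coe_filter, Finset.mem_univ, true_and, Set.mem_ofPred_eq] at hz hz'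
      simp only [hz, hz', dif_pos] at h
      exact mul_left_cancel₀ hw (add_left_cancel (congrArg (fun x : P => x.1.1) h))
  · rintro ⟨⟨c, d⟩, w, hw, hcd⟩
    refine le_trans (Finset.card_le_card_of_injOn (fun x : P => x.1.1 - σ c) ?_ ?_)
      (card_norm_le (p + 1) (by omega) (w ^ (p + 1)))
    · rintro ⟨⟨x, y⟩, hx⟩ h
      simp only [Finset.coe_filter, Finset.mem_univ, true_and, Set.mem_ofPred_eq] at h hx hcd ⊢
      rw [← hN, ← hN, ← hcd]
      subst h
      simp only [map_add, map_mul, map_sub, hσ] at hx ⊢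
      linear_combination -hx
    · rintro ⟨⟨x, y⟩, hx⟩ h ⟨⟨x', y'⟩, hx'⟩ h' he
      simp only [Finset.coe_filter, Finset.mem_univ, true_and, Set.mem_ofPred_eq] at h h' he
      have : x = x' := by linear_combination he
      subst this
      simp [h, h']
  · rintro ⟨⟨x, y⟩, hx⟩ ⟨⟨x', y'⟩, hx'⟩ ⟨⟨c, d⟩, hl⟩ ⟨⟨c', d'⟩, hl'⟩ hne h1 h2 h3 h4
    simp only [ne_eq] at hne h1 h2 h3 h4
    have hc : c ≠ c' := by
      rintro rfl
      exact hne (Subtype.ext (Prod.ext rfl (by linear_combination h2 - h1)))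
    have hxx : (c - c') * (x - x') = 0 := by linear_combination h2 - h1 - h4 + h3
    have hx0 : x = x' := sub_eq_zero.1 ((mul_eq_zero.1 hxx).resolve_left (sub_ne_zero.2 hc))
    exact Subtype.ext (Prod.ext hx0 (by show y = y'; rw [h1, h3, hx0]))
  · intro l x hx
    by_contra hcon
    push Not at hcon
    exact onan σ hσ (fun i => (l i).1.1) (fun i => (l i).1.2) (fun i j => (x i j).1.1)
      (fun i j => (x i j).1.2) (fun i j _ => (x i j).2) (fun i j h => (hx i j h).1)
      (fun i j h => (hx i j h).2) (fun i j k h1 h2 h3 => hcon i j k h1 h2 h3)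

end Geometry

/-! ### Containers for linear systems of blocks -/

section Containers
open scoped Classical

/-- A linear system of blocks inside `X`, indexed by `I`: each `i ∈ I` has `r + 1` disjoint parts
`B i 0, …, B i r ⊆ X` of size `c`, every vertex lies in the parts of at most `Δ` indices, and two
distinct vertices lie together in the parts of at most one index. Values of `B i j` with `i ∉ I` or
`r < j` are irrelevant. -/
structure BlockSys {V ι : Type} (X : Finset V) (r c Δ : ℕ) (I : Finset ι)
    (B : ι → ℕ → Finset V) : Prop where
  sub : ∀ i ∈ I, ∀ j ≤ r, B i j ⊆ X
  card : ∀ i ∈ I, ∀ j ≤ r, (B i j).card = c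
  disj : ∀ i ∈ I, ∀ j ≤ r, ∀ j' ≤ r, j ≠ j' → Disjoint (B i j) (B i j')
  deg : ∀ u, (I.filter fun i => ∃ j ≤ r, u ∈ B i j).card ≤ Δ
  lin : ∀ i ∈ I, ∀ k ∈ I, ∀ u v, u ≠ v → (∃ j ≤ r, u ∈ B i j) → (∃ j ≤ r, v ∈ B i j) →
    (∃ j ≤ r, u ∈ B k j) → (∃ j ≤ r, v ∈ B k j) → i = k

/-- `T` misses at least one of the `r + 1` parts of every index `i ∈ I`; equivalently, `T` contains
no transversal of the parts of an index. -/
def FreeOf {V ι : Type} (r : ℕ) (I : Finset ι) (B : ι → ℕ → Finset V) (T : Finset V) : Prop :=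
  ∀ i ∈ I, ∃ j ≤ r, Disjoint (B i j) T

/-- Double counting of the incidences between vertices of `S` and indices of the system. -/
lemma sum_deg_le {V ι : Type} {X : Finset V} {r c Δ : ℕ} {I : Finset ι}
    {B : ι → ℕ → Finset V} (h : BlockSys X r c Δ I B) (S : Finset V) :
    ∑ u ∈ S, (I.filter fun i => ∃ j ≤ r, u ∈ B i j).card ≤ I.card * ((r + 1) * c) := by
  have h1 : ∑ u ∈ S, (I.filter fun i => ∃ j ≤ r, u ∈ B i j).card
      = ∑ i ∈ I, (S.filter fun u => ∃ j ≤ r, u ∈ B i j).card := by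
    simp only [Finset.card_filter]
    exact Finset.sum_comm
  rw [h1, ← smul_eq_mul, ← Finset.sum_const]
  refine Finset.sum_le_sum fun i hi => ?_
  calc (S.filter fun u => ∃ j ≤ r, u ∈ B i j).card
      ≤ ((Finset.range (r + 1)).biUnion fun j => B i j).card := by
        refine Finset.card_le_card fun u hu => ?_
        obtain ⟨_, j, hj, huj⟩ := Finset.mem_filter.1 hu
        exact Finset.mem_biUnion.2 ⟨j, Finset.mem_range.2 (by omega), huj⟩
    _ ≤ ∑ j ∈ Finset.range (r + 1), (B i j).card := Finset.card_biUnion_le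
    _ = ∑ j ∈ Finset.range (r + 1), c :=
        Finset.sum_congr rfl fun j hj => h.card i hi j (by have := Finset.mem_range.1 hj; omega)
    _ = (r + 1) * c := by simp

/-- One greedy pick. A system `I'` with one part fewer has been extracted from `I`. A picked vertex
`v ∈ T` kills the last part of every index `i` with `v ∈ B i (r + 1)`, so that for those indices `T`
must miss one of the other parts. The indices `E` that are new and whose other parts keep `c`
unsaturated vertices are added to `I'`, with parts shrunk to `c` unsaturated vertices each.
Linearity makes a vertex other than `v` occur in at most one index of `E`, so the degree bound `Δ'`
survives. -/
lemma extend_state {V ι : Type} {X : Finset V} {r c Δ Δ' : ℕ} {I I' : Finset ι}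
    {B B' : ι → ℕ → Finset V} (h : BlockSys X (r + 1) (2 * c) Δ I B)
    (h' : BlockSys X r c Δ' I' B') (hI : I' ⊆ I) (hB : ∀ i ∈ I', ∀ j ≤ r, B' i j ⊆ B i j)
    (sat : Finset V)
    (hsat : sat = X.filter fun u => Δ' ≤ (I'.filter fun i => ∃ j ≤ r, u ∈ B' i j).card)
    (v : V) (E : Finset ι)
    (hE : E = I.filter fun i => (i ∉ I' ∧ ∀ j ≤ r, c ≤ (B i j \ sat).card) ∧ v ∈ B i (r + 1)) :
    ∃ B'' : ι → ℕ → Finset V, BlockSys X r c Δ' (I' ∪ E) B'' ∧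
      (∀ i ∈ I' ∪ E, ∀ j ≤ r, B'' i j ⊆ B i j) ∧
      (I' ∪ E).card = I'.card + E.card ∧ E.card ≤ Δ ∧
      ∀ T : Finset V, FreeOf (r + 1) I B T → FreeOf r I' B' T → v ∈ T →
        FreeOf r (I' ∪ E) B'' T := by
  have hEI : ∀ i ∈ E, i ∈ I ∧ i ∉ I' ∧ (∀ j ≤ r, c ≤ (B i j \ sat).card) ∧ v ∈ B i (r + 1) := by
    intro i hi
    rw [hE] at hi
    have := Finset.mem_filter.1 hi
    exact ⟨this.1, this.2.1.1, this.2.1.2, this.2.2⟩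
  have hch : ∀ i j, ∃ s : Finset V, i ∈ E → j ≤ r → s ⊆ B i j \ sat ∧ s.card = c := by
    intro i j
    by_cases hi : i ∈ E ∧ j ≤ r
    · obtain ⟨s, hs, hc⟩ := Finset.exists_subset_card_eq ((hEI i hi.1).2.2.1 j hi.2)
      exact ⟨s, fun _ _ => ⟨hs, hc⟩⟩
    · exact ⟨∅, fun h1 h2 => absurd ⟨h1, h2⟩ hi⟩
  choose C hC using hch
  set B'' : ι → ℕ → Finset V := fun i j => if i ∈ I' then B' i j else C i j with hB''
  have e1 : ∀ i ∈ I', ∀ j, B'' i j = B' i j := fun i hi j => by simp [hB'', hi]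
  have e2 : ∀ i ∈ E, ∀ j, B'' i j = C i j := fun i hi j => by simp [hB'', (hEI i hi).2.1]
  have hsub : ∀ i ∈ I' ∪ E, ∀ j ≤ r, B'' i j ⊆ B i j := by
    intro i hi j hj
    rcases Finset.mem_union.1 hi with hi | hi
    · rw [e1 i hi]; exact hB i hi j hj
    · rw [e2 i hi]; exact ((hC i j hi hj).1).trans Finset.sdiff_subset
  have hUI : ∀ i ∈ I' ∪ E, i ∈ I := by
    intro i hi
    rcases Finset.mem_union.1 hi with hi | hi
    · exact hI hi
    · exact (hEI i hi).1
  have hdisj : Disjoint I' E := by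
    rw [Finset.disjoint_right]; exact fun i hi => (hEI i hi).2.1
  refine ⟨B'', ⟨?_, ?_, ?_, ?_, ?_⟩, hsub, Finset.card_union_of_disjoint hdisj, ?_, ?_⟩
  · exact fun i hi j hj => (hsub i hi j hj).trans (h.sub i (hUI i hi) j (by omega))
  · intro i hi j hj
    rcases Finset.mem_union.1 hi with hi | hi
    · rw [e1 i hi]; exact h'.card i hi j hj
    · rw [e2 i hi]; exact (hC i j hi hj).2
  · intro i hi j hj j' hj' hne
    exact (h.disj i (hUI i hi) j (by omega) j' (by omega) hne).mono (hsub i hi j hj)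
      (hsub i hi j' hj')
  -- a vertex that gains an index of `E` was unsaturated, and it gains only one by linearity at `v`
  · intro u
    rw [Finset.filter_union]
    have hA : (I'.filter fun i => ∃ j ≤ r, u ∈ B'' i j)
        = I'.filter fun i => ∃ j ≤ r, u ∈ B' i j :=
      Finset.filter_congr fun i hi => by simp only [e1 i hi]
    rw [hA]
    by_cases hne : (E.filter fun i => ∃ j ≤ r, u ∈ B'' i j) = ∅
    · rw [hne, Finset.union_empty]; exact h'.deg u
    obtain ⟨i₀, hi₀⟩ := Finset.nonempty_iff_ne_empty.2 hne
    obtain ⟨hi₀E, j₀, hj₀, huj₀⟩ := Finset.mem_filter.1 hi₀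
    rw [e2 _ hi₀E] at huj₀
    have hu1 := (hC _ _ hi₀E hj₀).1 huj₀
    have hu2 := Finset.mem_sdiff.1 hu1
    have huX : u ∈ X := h.sub _ (hEI _ hi₀E).1 j₀ (by omega) hu2.1
    have hlt : (I'.filter fun i => ∃ j ≤ r, u ∈ B' i j).card < Δ' := by
      by_contra hcon
      apply hu2.2
      rw [hsat]
      exact Finset.mem_filter.2 ⟨huX, by omega⟩
    have hone : (E.filter fun i => ∃ j ≤ r, u ∈ B'' i j).card ≤ 1 := by
      rw [Finset.card_le_one]
      intro x hx y hy
      obtain ⟨hxE, j, hj, hxj⟩ := Finset.mem_filter.1 hx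
      obtain ⟨hyE, j', hj', hyj⟩ := Finset.mem_filter.1 hy
      have hxB := hsub x (Finset.mem_union_right _ hxE) j hj hxj
      have hyB := hsub y (Finset.mem_union_right _ hyE) j' hj' hyj
      have huv : u ≠ v := by
        rintro rfl
        exact Finset.disjoint_left.1 (h.disj x (hEI x hxE).1 j (by omega) (r + 1) le_rfl
          (by omega)) hxB (hEI x hxE).2.2.2
      exact h.lin x (hEI x hxE).1 y (hEI y hyE).1 u v huv ⟨j, by omega, hxB⟩
        ⟨r + 1, le_rfl, (hEI x hxE).2.2.2⟩ ⟨j', by omega, hyB⟩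
        ⟨r + 1, le_rfl, (hEI y hyE).2.2.2⟩
    exact (Finset.card_union_le _ _).trans (by omega)
  · rintro i hi i' hi' u w huw ⟨j1, h1, k1⟩ ⟨j2, h2, k2⟩ ⟨j3, h3, k3⟩ ⟨j4, h4, k4⟩
    exact h.lin i (hUI i hi) i' (hUI i' hi') u w huw ⟨j1, by omega, hsub i hi _ h1 k1⟩
      ⟨j2, by omega, hsub i hi _ h2 k2⟩ ⟨j3, by omega, hsub i' hi' _ h3 k3⟩
      ⟨j4, by omega, hsub i' hi' _ h4 k4⟩
  · refine le_trans (Finset.card_le_card fun i hi => ?_) (h.deg v)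
    exact Finset.mem_filter.2 ⟨(hEI i hi).1, r + 1, le_rfl, (hEI i hi).2.2.2⟩
  · intro T hT hT' hv i hi
    rcases Finset.mem_union.1 hi with hi' | hi'
    · obtain ⟨j, hj, hd⟩ := hT' i hi'
      exact ⟨j, hj, by rw [e1 i hi']; exact hd⟩
    · obtain ⟨j, hj, hd⟩ := hT i (hUI i hi)
      have hjr : j ≠ r + 1 := by
        rintro rfl
        exact Finset.disjoint_left.1 hd (hEI i hi').2.2.2 hv
      exact ⟨j, by omega, hd.mono_left (hsub i hi j (by omega))⟩

/-- As long as few indices have been used, many vertices bring a large gain, i.e. would add at least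
`g` indices to the extracted system. Few vertices are saturated, so most indices of `I` are still
eligible; the gains of all vertices then sum to at least a constant times `c |I|`, while a single
gain is at most `Δ`. -/
lemma gain_large {V ι : Type} {X : Finset V} {r c b Δ Δ' : ℕ} {I I' : Finset ι}
    {B B' : ι → ℕ → Finset V} (h : BlockSys X (r + 1) (2 * c) Δ I B)
    (h' : BlockSys X r c Δ' I' B') (hbc : b ≤ c) (hb : 0 < b)
    (sat : Finset V)
    (hsat : sat = X.filter fun u => Δ' ≤ (I'.filter fun i => ∃ j ≤ r, u ∈ B' i j).card)
    (hused : 4 * I'.card ≤ I.card) (hcap : 4 * ((r + 1) * I'.card * Δ) ≤ I.card * Δ')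
    (hΔ' : 0 < Δ')
    (gain : V → ℕ) (hgain : gain = fun v =>
      (I.filter fun i => (i ∉ I' ∧ ∀ j ≤ r, c ≤ (B i j \ sat).card) ∧ v ∈ B i (r + 1)).card)
    (g : ℝ) (hg : 2 * X.card * g ≤ b * I.card) :
    (b * I.card : ℝ) ≤ 2 * ((X.filter fun v => g ≤ gain v).card * Δ) := by
  set E := I.filter fun i => i ∉ I' ∧ ∀ j ≤ r, c ≤ (B i j \ sat).card with hE
  -- the sum of the gains counts incidences of eligible blocks
  have hsum : ∑ v ∈ X, gain v = E.card * (2 * c) := by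
    have h1 : ∀ v, gain v = (E.filter fun i => v ∈ B i (r + 1)).card := by
      intro v; rw [hgain, hE, Finset.filter_filter]
    simp only [h1]
    have h2 : ∑ u ∈ X, (E.filter fun i => u ∈ B i (r + 1)).card
        = ∑ i ∈ E, (X.filter fun u => u ∈ B i (r + 1)).card := by
      simp only [Finset.card_filter]
      exact Finset.sum_comm
    rw [h2, ← smul_eq_mul, ← Finset.sum_const]
    refine Finset.sum_congr rfl fun i hi => ?_
    have hiI := (Finset.mem_filter.1 hi).1
    rw [← h.card i hiI (r + 1) le_rfl]
    congr 1
    ext u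
    simp only [Finset.mem_filter, and_iff_right_iff_imp]
    exact fun hu => h.sub i hiI (r + 1) le_rfl hu
  -- indices some part of which has lost too many vertices to saturation
  set D := I.filter fun i => ¬ ∀ j ≤ r, c ≤ (B i j \ sat).card with hD
  have hcard : I.card ≤ E.card + I'.card + D.card := by
    refine le_trans (Finset.card_le_card (t := (E ∪ I') ∪ D) fun i hi => ?_)
      ((Finset.card_union_le _ _).trans (Nat.add_le_add_right (Finset.card_union_le _ _) _))
    simp only [Finset.mem_union, hE, hD, Finset.mem_filter]
    tauto
  have hDc : D.card * c ≤ sat.card * Δ := by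
    calc D.card * c = ∑ i ∈ D, c := by simp
      _ ≤ ∑ i ∈ D, (sat.filter fun u => ∃ j ≤ r + 1, u ∈ B i j).card := by
          refine Finset.sum_le_sum fun i hi => ?_
          obtain ⟨hiI, hbad⟩ := Finset.mem_filter.1 hi
          push Not at hbad
          obtain ⟨j, hj, hlt⟩ := hbad
          have h1 := Finset.card_sdiff_add_card_inter (B i j) sat
          have h2 := h.card i hiI j (by omega)
          refine le_trans (b := (B i j ∩ sat).card) (by omega) (Finset.card_le_card fun u hu => ?_)
          have := Finset.mem_inter.1 hu
          exact Finset.mem_filter.2 ⟨this.2, j, by omega, this.1⟩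
      _ = ∑ u ∈ sat, (D.filter fun i => ∃ j ≤ r + 1, u ∈ B i j).card := by
          simp only [Finset.card_filter]
          exact Finset.sum_comm
      _ ≤ ∑ u ∈ sat, Δ := by
          refine Finset.sum_le_sum fun u _ => le_trans (Finset.card_le_card ?_) (h.deg u)
          exact Finset.filter_subset_filter _ (Finset.filter_subset _ _)
      _ = sat.card * Δ := by simp
  have hsatc : sat.card * Δ' ≤ I'.card * ((r + 1) * c) := by
    refine le_trans ?_ (sum_deg_le h' sat)
    rw [← smul_eq_mul, ← Finset.sum_const]
    refine Finset.sum_le_sum fun u hu => ?_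
    rw [hsat] at hu
    exact (Finset.mem_filter.1 hu).2
  have hc : 0 < c := by omega
  have hDcard : 4 * D.card ≤ I.card := by
    have h1 : D.card * Δ' * c ≤ (r + 1) * I'.card * Δ * c := by
      calc D.card * Δ' * c = D.card * c * Δ' := by ring
        _ ≤ sat.card * Δ * Δ' := Nat.mul_le_mul_right _ hDc
        _ = sat.card * Δ' * Δ := by ring
        _ ≤ I'.card * ((r + 1) * c) * Δ := Nat.mul_le_mul_right _ hsatc
        _ = (r + 1) * I'.card * Δ * c := by ring
    have h2 := Nat.le_of_mul_le_mul_right h1 hc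
    have h3 : (4 * D.card) * Δ' ≤ I.card * Δ' := by
      calc (4 * D.card) * Δ' = 4 * (D.card * Δ') := by ring
        _ ≤ 4 * ((r + 1) * I'.card * Δ) := Nat.mul_le_mul_left _ h2
        _ ≤ _ := hcap
    exact Nat.le_of_mul_le_mul_right h3 hΔ'
  have hEc : I.card ≤ 2 * E.card := by omega
  have hgd : ∀ v, gain v ≤ Δ := by
    intro v
    rw [hgain]
    refine le_trans (Finset.card_le_card fun i hi => ?_) (h.deg v)
    have := Finset.mem_filter.1 hi
    exact Finset.mem_filter.2 ⟨this.1, r + 1, le_rfl, this.2.2⟩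
  have hup : (∑ v ∈ X, gain v : ℝ) ≤ (X.filter fun v => g ≤ gain v).card * Δ + X.card * max g 0 := by
    rw [← Finset.sum_filter_add_sum_filter_not X (fun v => g ≤ gain v)]
    refine add_le_add ?_ ?_
    · rw [← nsmul_eq_mul, ← Finset.sum_const]
      exact Finset.sum_le_sum fun v _ => by exact_mod_cast hgd v
    · calc (∑ v ∈ X.filter (fun v => ¬ g ≤ gain v), (gain v : ℝ))
          ≤ ∑ v ∈ X.filter (fun v => ¬ g ≤ gain v), max g 0 := by
            refine Finset.sum_le_sum fun v hv => ?_
            exact (not_le.1 (Finset.mem_filter.1 hv).2).le.trans (le_max_left _ _)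
        _ = (X.filter (fun v => ¬ g ≤ gain v)).card * max g 0 := by simp
        _ ≤ X.card * max g 0 := by
            refine mul_le_mul_of_nonneg_right ?_ (le_max_right _ _)
            exact_mod_cast Finset.card_filter_le _ _
  have hmax : (X.card : ℝ) * max g 0 * 2 ≤ b * I.card := by
    rcases le_total g 0 with h0 | h0
    · rw [max_eq_right h0]; simp; positivity
    · rw [max_eq_left h0]; linarith
  have hsumR : (∑ v ∈ X, gain v : ℝ) = E.card * (2 * c) := by exact_mod_cast hsum
  have hlow : (b * I.card : ℝ) ≤ E.card * (2 * c) := by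
    have : b * I.card ≤ E.card * (2 * c) := by
      calc b * I.card ≤ c * (2 * E.card) := Nat.mul_le_mul hbc hEc
        _ = _ := by ring
    exact_mod_cast this
  linarith

/-- The container step. For a dense system with `r + 1` parts there are few sets `Z`, each of
proportion at least `δ` in `X`, such that every `T` missing a part of each index avoids one of them.

The proof is by induction on `r`. For `r = 0` the union of the parts is the only `Z`. Otherwise,
`s` times in a row, consider the set `Z₀` of vertices of large gain: either `T` avoids `Z₀`, which is
then recorded, or some `v ∈ T ∩ Z₀` is picked and the extracted system grows. After `s` picks that
system is dense, with one part fewer and with degree cap `Δ' = ⌈K s b Δ / |X|⌉`, and the induction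
hypothesis applies. Branching over `v` costs a factor `|X| + 1` per pick, hence `r s` factors in
total. The blocks have size `2 ^ r b` because they are halved at each level. -/
lemma container_step (r : ℕ) : ∀ ρ : ℝ, 0 < ρ → ∃ δ κ : ℝ, 0 < δ ∧ 0 < κ ∧
    ∀ (V ι : Type) (X : Finset V) (b s Δ : ℕ) (I : Finset ι) (B : ι → ℕ → Finset V),
      BlockSys X r (2 ^ r * b) Δ I B → 0 < b → 0 < s → 0 < X.card →
      ρ * X.card * Δ ≤ b * I.card → (s * b : ℝ) ≤ κ * X.card →
      (X.card : ℝ) ^ r ≤ Δ * (s * b) ^ r →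
      ∃ 𝒵 : Finset (Finset V), 𝒵.card ≤ (X.card + 1) ^ (r * s) ∧
        (∀ Z ∈ 𝒵, Z ⊆ X ∧ δ * X.card ≤ Z.card) ∧
        ∀ T, FreeOf r I B T → ∃ Z ∈ 𝒵, Disjoint T Z := by
  induction r with
  | zero =>
    intro ρ hρ
    refine ⟨ρ, 1, hρ, one_pos, fun V ι X b s Δ I B h hb hs hX hden _ hΔ => ?_⟩
    have hΔ0 : (0 : ℝ) < Δ := by simp at hΔ; exact_mod_cast hΔ
    set Z := I.biUnion fun i => B i 0 with hZ
    refine ⟨{Z}, by simp, ?_, ?_⟩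
    · intro Y hY
      rw [Finset.mem_singleton.1 hY]
      refine ⟨Finset.biUnion_subset.2 fun i hi => h.sub i hi 0 le_rfl, ?_⟩
      have h1 : b * I.card ≤ Z.card * Δ := by
        calc b * I.card = ∑ i ∈ I, (Z.filter fun u => ∃ j ≤ 0, u ∈ B i j).card := by
              rw [mul_comm, ← smul_eq_mul, ← Finset.sum_const]
              refine Finset.sum_congr rfl fun i hi => ?_
              have h2 := h.card i hi 0 le_rfl
              rw [pow_zero, one_mul] at h2
              rw [← h2]
              congr 1
              ext u
              simp only [Finset.mem_filter, hZ, Finset.mem_biUnion]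
              constructor
              · exact fun hu => ⟨⟨i, hi, hu⟩, 0, le_rfl, hu⟩
              · rintro ⟨_, j, hj, hu⟩
                obtain rfl : j = 0 := by omega
                exact hu
          _ = ∑ u ∈ Z, (I.filter fun i => ∃ j ≤ 0, u ∈ B i j).card := by
              simp only [Finset.card_filter]
              exact Finset.sum_comm
          _ ≤ ∑ u ∈ Z, Δ := Finset.sum_le_sum fun u _ => by
              refine le_trans (le_of_eq ?_) (h.deg u)
              congr
          _ = Z.card * Δ := by simp
      have h2 : (b * I.card : ℝ) ≤ Z.card * Δ := by exact_mod_cast h1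
      exact le_of_mul_le_mul_right (hden.trans h2) hΔ0
    · intro T hT
      refine ⟨Z, Finset.mem_singleton_self _, ?_⟩
      rw [hZ, Finset.disjoint_biUnion_right]
      intro i hi
      obtain ⟨j, hj, hd⟩ := hT i hi
      obtain rfl : j = 0 := by omega
      exact hd.symm
  | succ r ih =>
    intro ρ hρ
    set K : ℝ := 4 * (r + 1) / ρ + 1 with hK
    have hK1 : 1 ≤ K := by rw [hK]; have : 0 ≤ 4 * ((r : ℝ) + 1) / ρ := by positivity
                           linarith
    have hK0 : 0 < K := by linarith
    obtain ⟨δ', κ', hδ', hκ', hrec⟩ := ih (ρ / (4 * K)) (by positivity)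
    refine ⟨min (ρ / 2) δ', min κ' (min (ρ / 4) 1), by positivity, by positivity, ?_⟩
    intro V ι X b s Δ I B h hb hs hX hden hsb hΔ
    have hX0 : (0 : ℝ) < X.card := by exact_mod_cast hX
    have hb0 : (0 : ℝ) < b := by exact_mod_cast hb
    have hs0 : (0 : ℝ) < s := by exact_mod_cast hs
    have hsb0 : (0 : ℝ) < s * b := by positivity
    have hsb1 : (s * b : ℝ) ≤ κ' * X.card :=
      hsb.trans (mul_le_mul_of_nonneg_right (min_le_left _ _) hX0.le)
    have hsb2 : (s * b : ℝ) ≤ ρ / 4 * X.card :=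
      hsb.trans (mul_le_mul_of_nonneg_right ((min_le_right _ _).trans (min_le_left _ _)) hX0.le)
    have hsb3 : (s * b : ℝ) ≤ X.card := by
      have := hsb.trans (mul_le_mul_of_nonneg_right
        ((min_le_right _ _).trans (min_le_right _ _)) hX0.le)
      linarith
    have hΔ0 : (0 : ℝ) < Δ := by
      by_contra hcon
      have : (Δ : ℝ) = 0 := le_antisymm (not_lt.1 hcon) (Nat.cast_nonneg _)
      rw [this, zero_mul] at hΔ
      exact absurd hΔ (not_le.2 (by positivity))
    have hIm : (0 : ℝ) < I.card := by
      by_contra hcon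
      have : (I.card : ℝ) = 0 := le_antisymm (not_lt.1 hcon) (Nat.cast_nonneg _)
      rw [this, mul_zero] at hden
      exact absurd hden (not_le.2 (by positivity))
    -- the degree cap for the next stage
    set x : ℝ := s * b * Δ / X.card with hx
    have hx1 : 1 ≤ x := by
      rw [hx, one_le_div hX0]
      have h1 : (X.card : ℝ) ^ (r + 1) ≤ (s * b * Δ) * X.card ^ r := by
        calc (X.card : ℝ) ^ (r + 1) ≤ Δ * (s * b) ^ (r + 1) := hΔ
          _ = (s * b * Δ) * (s * b) ^ r := by ring
          _ ≤ (s * b * Δ) * X.card ^ r := by gcongr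
      rw [pow_succ, mul_comm] at h1
      exact le_of_mul_le_mul_right h1 (by positivity)
    set Δ' : ℕ := ⌈K * x⌉₊ with hΔ'
    have hKx : 1 ≤ K * x := one_le_mul_of_one_le_of_one_le hK1 hx1
    have hlo : K * x ≤ Δ' := Nat.le_ceil _
    have hhi : (Δ' : ℝ) ≤ 2 * (K * x) := by
      have := Nat.ceil_lt_add_one (a := K * x) (by linarith)
      linarith
    have hΔ'0 : 0 < Δ' := by
      have : (0 : ℝ) < Δ' := by linarith
      exact_mod_cast this
    have hxX : x * X.card = s * b * Δ := by rw [hx]; field_simp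
    set g : ℝ := b * I.card / (2 * X.card) with hg
    have hg0 : 0 < g := by positivity
    have hgX : 2 * X.card * g = b * I.card := by rw [hg]; field_simp
    -- at most `s * Δ` indices are ever used, which keeps the hypotheses of `gain_large` valid
    have hused : ∀ n : ℕ, n ≤ s * Δ → 4 * n ≤ I.card ∧ 4 * ((r + 1) * n * Δ) ≤ I.card * Δ' := by
      intro n hn
      have hnR : (n : ℝ) ≤ s * Δ := by exact_mod_cast hn
      constructor
      · have : (4 * n : ℝ) ≤ I.card := by
          refine le_of_mul_le_mul_left ?_ hb0
          calc (b * (4 * n) : ℝ) ≤ b * (4 * (s * Δ)) := by gcongr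
            _ = 4 * (s * b) * Δ := by ring
            _ ≤ 4 * (ρ / 4 * X.card) * Δ := by gcongr
            _ = ρ * X.card * Δ := by ring
            _ ≤ _ := hden
        exact_mod_cast this
      · have : (4 * ((r + 1) * n * Δ) : ℝ) ≤ I.card * Δ' := by
          refine le_of_mul_le_mul_left ?_ hb0
          calc (b * (4 * ((r + 1) * n * Δ)) : ℝ) ≤ b * (4 * ((r + 1) * (s * Δ) * Δ)) := by gcongr
            _ = 4 * (r + 1) * (s * b * Δ) * Δ := by ring
            _ = (4 * (r + 1) / ρ) * x * (ρ * X.card * Δ) := by rw [← hxX]; field_simp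
            _ ≤ K * x * (b * I.card) := by
                have : 4 * ((r : ℝ) + 1) / ρ ≤ K := by rw [hK]; linarith
                gcongr
            _ ≤ Δ' * (b * I.card) := by gcongr
            _ = b * (I.card * Δ') := by ring
        exact_mod_cast this
    have hpow : 2 ^ (r + 1) * b = 2 * (2 ^ r * b) := by ring
    rw [hpow] at h
    have hbc : b ≤ 2 ^ r * b := Nat.le_mul_of_pos_left _ (by positivity)
    -- `k` is the number of picks still to be made
    have key : ∀ k ≤ s, ∀ (I' : Finset ι) (B' : ι → ℕ → Finset V),
        BlockSys X r (2 ^ r * b) Δ' I' B' → I' ⊆ I → (∀ i ∈ I', ∀ j ≤ r, B' i j ⊆ B i j) →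
        ((s - k : ℕ) * g ≤ I'.card) → I'.card ≤ (s - k) * Δ →
        ∃ 𝒵 : Finset (Finset V), 𝒵.card ≤ (X.card + 1) ^ (k + r * s) ∧
          (∀ Z ∈ 𝒵, Z ⊆ X ∧ min (ρ / 2) δ' * X.card ≤ Z.card) ∧
          ∀ T, FreeOf (r + 1) I B T → FreeOf r I' B' T → ∃ Z ∈ 𝒵, Disjoint T Z := by
      intro k
      induction k with
      | zero =>
        intro _ I' B' hS hI hB hlow _
        rw [Nat.sub_zero] at hlow
        have hden' : ρ / (4 * K) * X.card * Δ' ≤ b * I'.card := by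
          calc ρ / (4 * K) * X.card * Δ' ≤ ρ / (4 * K) * X.card * (2 * (K * x)) := by gcongr
            _ = ρ / 2 * (x * X.card) := by field_simp; ring
            _ = s * (ρ * X.card * Δ) * b / (2 * X.card) := by rw [hxX]; field_simp
            _ ≤ s * (b * I.card) * b / (2 * X.card) := by gcongr
            _ = b * (s * g) := by rw [hg]; field_simp
            _ ≤ b * I'.card := by gcongr
        have hpow' : (X.card : ℝ) ^ r ≤ Δ' * (s * b) ^ r := by
          refine le_of_mul_le_mul_left ?_ hX0
          calc (X.card : ℝ) * X.card ^ r = X.card ^ (r + 1) := by ring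
            _ ≤ Δ * (s * b) ^ (r + 1) := hΔ
            _ = (x * X.card) * (s * b) ^ r := by rw [hxX]; ring
            _ ≤ (Δ' * X.card) * (s * b) ^ r := by
                have : x ≤ Δ' := le_trans (le_mul_of_one_le_left (by linarith) hK1) hlo
                gcongr
            _ = X.card * (Δ' * (s * b) ^ r) := by ring
        obtain ⟨𝒵, h1, h2, h3⟩ := hrec V ι X b s Δ' I' B' hS hb hs hX hden' hsb1 hpow'
        refine ⟨𝒵, by simpa using h1, fun Z hZ => ⟨(h2 Z hZ).1, le_trans ?_ (h2 Z hZ).2⟩,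
          fun T _ hT => h3 T hT⟩
        exact mul_le_mul_of_nonneg_right (min_le_right _ _) hX0.le
      | succ k ihk =>
        intro hks I' B' hS hI hB hlow hupp
        have hsk : s - k = (s - (k + 1)) + 1 := by omega
        set sat := X.filter fun u => Δ' ≤ (I'.filter fun i => ∃ j ≤ r, u ∈ B' i j).card with hsat
        set gain : V → ℕ := fun v => (I.filter fun i =>
          (i ∉ I' ∧ ∀ j ≤ r, 2 ^ r * b ≤ (B i j \ sat).card) ∧ v ∈ B i (r + 1)).card with hgain
        have hu := hused I'.card (hupp.trans (Nat.mul_le_mul_right _ (Nat.sub_le _ _)))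
        have hbig := gain_large h hS hbc hb sat hsat hu.1 hu.2 hΔ'0 gain hgain g hgX.le
        set Z₀ := X.filter fun v => g ≤ gain v with hZ₀
        have hZ₀c : min (ρ / 2) δ' * X.card ≤ Z₀.card := by
          refine le_trans (mul_le_mul_of_nonneg_right (min_le_left _ _) hX0.le) ?_
          refine le_of_mul_le_mul_right ?_ hΔ0
          linarith
        have hstep : ∀ v, ∃ 𝒵 : Finset (Finset V), v ∈ Z₀ → 𝒵.card ≤ (X.card + 1) ^ (k + r * s) ∧
          (∀ Z ∈ 𝒵, Z ⊆ X ∧ min (ρ / 2) δ' * X.card ≤ Z.card) ∧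
          ∀ T, FreeOf (r + 1) I B T → FreeOf r I' B' T → v ∈ T → ∃ Z ∈ 𝒵, Disjoint T Z := by
          intro v
          by_cases hv : v ∈ Z₀
          swap
          · exact ⟨∅, fun h => absurd h hv⟩
          obtain ⟨B'', hS'', hB'', hc1, hc2, hT''⟩ := extend_state h hS hI hB sat hsat v _ rfl
          have hgv : g ≤ gain v := (Finset.mem_filter.1 hv).2
          obtain ⟨𝒵, h1, h2, h3⟩ := ihk (by omega) _ B'' hS''
            (Finset.union_subset hI (Finset.filter_subset _ _)) hB''
            (by
              rw [hc1, hsk]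
              push_cast
              rw [add_mul, one_mul]
              exact add_le_add hlow hgv)
            (by
              rw [hc1, hsk, add_mul, one_mul]
              exact add_le_add hupp hc2)
          exact ⟨𝒵, fun _ => ⟨h1, h2, fun T hT hT' hvT => h3 T hT (hT'' T hT hT' hvT)⟩⟩
        choose 𝒵 h𝒵 using hstep
        refine ⟨insert Z₀ (Z₀.biUnion 𝒵), ?_, ?_, ?_⟩
        · have hc : (Z₀.biUnion 𝒵).card ≤ Z₀.card * (X.card + 1) ^ (k + r * s) :=
            Finset.card_biUnion_le_card_mul _ _ _ fun v hv => (h𝒵 v hv).1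
          have hc' : Z₀.card ≤ X.card := Finset.card_filter_le _ _
          have hpos : 1 ≤ (X.card + 1) ^ (k + r * s) := Nat.one_le_pow _ _ (by omega)
          calc _ ≤ (Z₀.biUnion 𝒵).card + 1 := Finset.card_insert_le _ _
            _ ≤ X.card * (X.card + 1) ^ (k + r * s) + (X.card + 1) ^ (k + r * s) :=
                add_le_add (hc.trans (Nat.mul_le_mul_right _ hc')) hpos
            _ = (X.card + 1) ^ (k + 1 + r * s) := by ring
        · intro Z hZ
          rcases Finset.mem_insert.1 hZ with rfl | hZ
          · exact ⟨Finset.filter_subset _ _, hZ₀c⟩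
          · obtain ⟨v, hv, hZv⟩ := Finset.mem_biUnion.1 hZ
            exact (h𝒵 v hv).2.1 Z hZv
        · intro T hT hT'
          by_cases hd : Disjoint T Z₀
          · exact ⟨Z₀, Finset.mem_insert_self _ _, hd⟩
          · obtain ⟨v, hvT, hvZ⟩ := Finset.not_disjoint_iff.1 hd
            obtain ⟨Z, hZ, hdZ⟩ := (h𝒵 v hvZ).2.2 T hT hT' hvT
            exact ⟨Z, Finset.mem_insert_of_mem (Finset.mem_biUnion.2 ⟨v, hvZ, hZ⟩), hdZ⟩
    obtain ⟨𝒵, h1, h2, h3⟩ := key s le_rfl ∅ (fun _ _ => ∅)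
      ⟨by simp, by simp, by simp, by simp, by simp⟩ (by simp) (by simp) (by simp) (by simp)
    refine ⟨𝒵, ?_, h2, fun T hT => h3 T hT (by simp [FreeOf])⟩
    rwa [show (r + 1) * s = s + r * s by ring]
end Containers

/-! ### Random two-colourings of the flags -/

section RandomCut
open scoped Classical

/-- The lines of `X` through the point `x` whose flag with `x` has colour `ε`. -/
noncomputable def fib {P L : Type} (Inc : P → L → Prop) (χ : P × L → Bool) (X : Finset L) (x : P)
    (ε : Bool) : Finset L :=
  X.filter fun l => Inc x l ∧ χ (x, l) = ε

/-- A Chernoff bound: few colourings `χ` agree with `τ` on at most a sixteenth of `S`. The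
exponential moment uses weight `1 / 16` for each agreement. -/
lemma count_bad {E : Type} [Fintype E] [DecidableEq E] (S : Finset E) (τ : E → Bool) :
    ((Finset.univ.filter fun χ : E → Bool =>
      16 * (S.filter fun e => χ e = τ e).card ≤ S.card).card : ℝ) ≤
      2 ^ Fintype.card E * (2 / 3) ^ S.card := by
  have key : ∑ χ : E → Bool, ∏ e, (if e ∈ S then (if χ e = τ e then (1 / 16 : ℝ) else 1) else 1)
      = 2 ^ Fintype.card E * (17 / 32) ^ S.card := by
    have h2 := Finset.prod_univ_sum (fun _ : E => (Finset.univ : Finset Bool))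
      (fun e v => if e ∈ S then (if v = τ e then (1 / 16 : ℝ) else 1) else 1)
    rw [Fintype.piFinset_univ] at h2
    rw [← h2]
    have h3 : ∀ e, ∑ v : Bool, (if e ∈ S then (if v = τ e then (1 / 16 : ℝ) else 1) else 1)
        = 2 * (if e ∈ S then 17 / 32 else 1) := by
      intro e
      rw [Fintype.sum_bool]
      cases τ e <;> split_ifs <;> simp_all <;> norm_num
    simp_rw [h3, Finset.prod_mul_distrib]
    rw [Finset.prod_ite]
    simp [div_pow]
  have low : ∀ χ ∈ (Finset.univ.filter fun χ : E → Bool =>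
      16 * (S.filter fun e => χ e = τ e).card ≤ S.card), ((5 / 6 : ℝ)) ^ S.card ≤
      ∏ e, (if e ∈ S then (if χ e = τ e then (1 / 16 : ℝ) else 1) else 1) := by
    intro χ hχ
    have hχ := (Finset.mem_filter.1 hχ).2
    have h1 : ∏ e, (if e ∈ S then (if χ e = τ e then (1 / 16 : ℝ) else 1) else 1)
        = (1 / 16) ^ (S.filter fun e => χ e = τ e).card := by
      rw [Finset.prod_ite_mem, Finset.univ_inter, Finset.prod_ite]
      simp
    rw [h1]
    calc (5 / 6 : ℝ) ^ S.card ≤ (5 / 6 : ℝ) ^ (16 * (S.filter fun e => χ e = τ e).card) :=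
          pow_le_pow_of_le_one (by norm_num) (by norm_num) hχ
      _ = ((5 / 6 : ℝ) ^ 16) ^ (S.filter fun e => χ e = τ e).card := pow_mul _ _ _
      _ ≤ _ := pow_le_pow_left₀ (by positivity) (by norm_num) _
  have h4 : ((Finset.univ.filter fun χ : E → Bool =>
      16 * (S.filter fun e => χ e = τ e).card ≤ S.card).card : ℝ) * (5 / 6 : ℝ) ^ S.card ≤
      2 ^ Fintype.card E * (17 / 32) ^ S.card := by
    rw [← key, ← nsmul_eq_mul]
    refine (Finset.card_nsmul_le_sum _ _ _ low).trans ?_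
    refine Finset.sum_le_sum_of_subset_of_nonneg (Finset.filter_subset _ _) fun χ _ _ => ?_
    refine Finset.prod_nonneg fun e _ => ?_
    split_ifs <;> norm_num
  have h5 : ((17 : ℝ) / 32) ^ S.card ≤ (2 / 3) ^ S.card * (5 / 6) ^ S.card := by
    rw [← mul_pow]
    exact pow_le_pow_left₀ (by norm_num) (by norm_num) _
  have h6 : (0 : ℝ) < (5 / 6 : ℝ) ^ S.card := by positivity
  refine le_of_mul_le_mul_right (h4.trans ?_) h6
  calc _ ≤ (2 : ℝ) ^ Fintype.card E * ((2 / 3) ^ S.card * (5 / 6) ^ S.card) := by gcongr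
    _ = _ := by ring

/-- Some two-colouring of the flags is balanced on every set `X` of at least `4 q ^ 2` lines: the
minority colours at all points together account for at least a sixteenth of `q |X|`. This is a union
bound over `X` and over the `2 ^ |P|` choices `τ` of a minority colour at each point; since
`|P| ≤ q ^ 3` and `4 q ^ 2 ≤ |X|`, the factor `2 ^ |P|` is absorbed by passing from `2 / 3` to
`4 / 5` in the bound of `count_bad`. -/
lemma exists_cut {P L : Type} [Fintype P] [Fintype L] (Inc : P → L → Prop) (q : ℕ)
    (hP : Fintype.card P ≤ q ^ 3)
    (hq : (Fintype.card L : ℝ) * (4 / 5) ^ q ≤ 1 / 2)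
    (hdeg : ∀ l, q ≤ (Finset.univ.filter fun x => Inc x l).card) :
    ∃ χ : P × L → Bool, ∀ X : Finset L, 4 * q ^ 2 ≤ X.card →  0 < X.card →
      q * X.card ≤ 16 * ∑ x, min (fib Inc χ X x true).card (fib Inc χ X x false).card := by
  by_contra hcon
  push Not at hcon
  -- incidences of `X`
  let S : Finset L → Finset (P × L) := fun X =>
    (Finset.univ ×ˢ X).filter fun e => Inc e.1 e.2
  have hS : ∀ X, q * X.card ≤ (S X).card := by
    intro X
    have : (S X).card = ∑ l ∈ X, (Finset.univ.filter fun x => Inc x l).card := by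
      simp only [S, Finset.card_filter]
      rw [Finset.sum_product_right]
    rw [this, mul_comm, ← smul_eq_mul]
    exact Finset.card_nsmul_le_sum _ _ _ fun l _ => hdeg l
  have hfib : ∀ (χ : P × L → Bool) (X : Finset L) (τ : P → Bool),
      ((S X).filter fun e => χ e = τ e.1).card = ∑ x, (fib Inc χ X x (τ x)).card := by
    intro χ X τ
    simp only [S, fib, Finset.filter_filter, Finset.card_filter]
    rw [Finset.sum_product]
  -- every colouring is bad for some `X` and some choice of minority colours
  let F : Finset (Finset L) := Finset.univ.filter fun X => 4 * q ^ 2 ≤ X.card ∧ 0 < X.card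
  have hcover : (Finset.univ : Finset (P × L → Bool)) ⊆ F.biUnion fun X =>
      (Finset.univ : Finset (P → Bool)).biUnion fun τ => Finset.univ.filter fun χ =>
        16 * ((S X).filter fun e => χ e = τ e.1).card ≤ (S X).card := by
    intro χ _
    obtain ⟨X, h1, h2, h3⟩ := hcon χ
    simp only [Finset.mem_biUnion, Finset.mem_filter, Finset.mem_univ, true_and]
    refine ⟨X, by simp [F, h1, Finset.card_pos.1 h2], fun x =>
      decide ((fib Inc χ X x true).card ≤ (fib Inc χ X x false).card), ?_⟩
    have e := hfib χ X fun x =>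
      decide ((fib Inc χ X x true).card ≤ (fib Inc χ X x false).card)
    rw [e]
    refine le_trans (le_of_eq ?_) (h3.le.trans (hS X))
    congr 1
    refine Finset.sum_congr rfl fun x _ => ?_
    by_cases h : (fib Inc χ X x true).card ≤ (fib Inc χ X x false).card
    · simp [h]
    · simp [h]; omega
  have hbad : ∀ X ∈ F, (((Finset.univ : Finset (P → Bool)).biUnion fun τ =>
      Finset.univ.filter fun χ : P × L → Bool =>
        16 * ((S X).filter fun e => χ e = τ e.1).card ≤ (S X).card).card : ℝ) ≤
      2 ^ Fintype.card (P × L) * ((4 / 5) ^ q) ^ X.card := by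
    intro X hX
    obtain ⟨hX1, hX2⟩ := (Finset.mem_filter.1 hX).2
    have h1 : (((Finset.univ : Finset (P → Bool)).biUnion fun τ =>
      Finset.univ.filter fun χ : P × L → Bool =>
        16 * ((S X).filter fun e => χ e = τ e.1).card ≤ (S X).card).card : ℝ) ≤
        2 ^ Fintype.card P * (2 ^ Fintype.card (P × L) * (2 / 3) ^ (S X).card) := by
      refine (Nat.cast_le.2 Finset.card_biUnion_le).trans ?_
      rw [Nat.cast_sum]
      refine (Finset.sum_le_card_nsmul _ _ _ fun τ _ =>
        count_bad (S X) fun e => τ e.1).trans (le_of_eq ?_)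
      rw [nsmul_eq_mul]; simp
    refine h1.trans ?_
    have h2 : (2 / 3 : ℝ) ^ (S X).card ≤ (2 / 3) ^ (q * X.card) :=
      pow_le_pow_of_le_one (by norm_num) (by norm_num) (hS X)
    -- `(6 / 5) ^ 4 ≥ 2` is where the bound `4 * q ^ 2 ≤ |X|` enters
    have h3 : (2 : ℝ) ^ Fintype.card P ≤ (6 / 5) ^ (q * X.card) := by
      calc (2 : ℝ) ^ Fintype.card P ≤ 2 ^ q ^ 3 := pow_le_pow_right₀ (by norm_num) hP
        _ ≤ ((6 / 5 : ℝ) ^ 4) ^ q ^ 3 := pow_le_pow_left₀ (by norm_num) (by norm_num) _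
        _ = (6 / 5) ^ (4 * q ^ 3) := (pow_mul _ _ _).symm
        _ ≤ _ := pow_le_pow_right₀ (by norm_num) (by nlinarith)
    calc _ ≤ (6 / 5 : ℝ) ^ (q * X.card) *
          (2 ^ Fintype.card (P × L) * (2 / 3) ^ (q * X.card)) := by gcongr
      _ = 2 ^ Fintype.card (P × L) * ((6 / 5) * (2 / 3)) ^ (q * X.card) := by rw [mul_pow]; ring
      _ = _ := by rw [show (6 / 5 : ℝ) * (2 / 3) = 4 / 5 by norm_num, pow_mul]
  have htot : (2 : ℝ) ^ Fintype.card (P × L) ≤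
      ∑ X ∈ F, 2 ^ Fintype.card (P × L) * (((4 : ℝ) / 5) ^ q) ^ X.card := by
    have h1 := (Finset.card_le_card hcover).trans Finset.card_biUnion_le
    have h2 : ((Finset.univ : Finset (P × L → Bool)).card : ℝ) = 2 ^ Fintype.card (P × L) := by
      simp
    rw [← h2]
    refine (Nat.cast_le.2 h1).trans ?_
    rw [Nat.cast_sum, h2]
    exact Finset.sum_le_sum hbad
  rw [← Finset.mul_sum] at htot
  have h1 : (1 : ℝ) ≤ ∑ X ∈ F, (((4 : ℝ) / 5) ^ q) ^ X.card := by
    have : (0 : ℝ) < 2 ^ Fintype.card (P × L) := by positivity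
    exact le_of_mul_le_mul_left (by linarith) this
  have h2 : 1 + ∑ X ∈ F, (((4 : ℝ) / 5) ^ q) ^ X.card ≤ (1 + (4 / 5) ^ q) ^ Fintype.card L := by
    have e : ((1 : ℝ) + (4 / 5) ^ q) ^ Fintype.card L =
        ∑ X : Finset L, (((4 : ℝ) / 5) ^ q) ^ X.card := by
      rw [← Finset.card_univ, ← Finset.prod_const, Finset.prod_one_add, Finset.powerset_univ]
      simp
    have hn : (∅ : Finset L) ∉ F := by simp [F]
    have h5 : ∑ X ∈ insert ∅ F, (((4 : ℝ) / 5) ^ q) ^ X.card =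
        1 + ∑ X ∈ F, (((4 : ℝ) / 5) ^ q) ^ X.card := by
      rw [Finset.sum_insert hn]; simp
    rw [e, ← h5]
    exact Finset.sum_le_sum_of_subset_of_nonneg (Finset.subset_univ _)
      fun _ _ _ => by positivity
  have h3 : ((1 : ℝ) + (4 / 5) ^ q) ^ Fintype.card L ≤ Real.exp (1 / 2) := by
    calc ((1 : ℝ) + (4 / 5) ^ q) ^ Fintype.card L ≤ (Real.exp ((4 / 5) ^ q)) ^ Fintype.card L := by
          refine pow_le_pow_left₀ (by positivity) ?_ _
          linarith [Real.add_one_le_exp ((4 / 5 : ℝ) ^ q)]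
      _ = Real.exp (Fintype.card L * (4 / 5) ^ q) := by rw [← Real.exp_nat_mul]
      _ ≤ _ := Real.exp_le_exp.2 hq
  have h4 : Real.exp (1 / 2) < 2 := by
    have h := Real.exp_one_lt_d9
    have : Real.exp (1 / 2) ^ 2 = Real.exp 1 := by
      rw [← Real.exp_nat_mul]; norm_num
    nlinarith [Real.exp_pos (1 / 2)]
  linarith

end RandomCut

/-! ### Iterating containers and random maps -/

section Iteration
open scoped Classical

/-- Repeatedly replacing each container `C` of size at least `M` by the sets `C \ Z` shrinks every
container below `M`, or to `(1 - δ) ^ J` of the whole after `J` rounds. -/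
lemma iterate_containers {V : Type} [Fintype V] (Free : Finset V → Prop) (M D : ℕ) (δ : ℝ)
    (hM0 : 0 < M)
    (hD : 0 < D)
    (step : ∀ X : Finset V, M ≤ X.card → ∃ 𝒵 : Finset (Finset V), 𝒵.card ≤ D ∧
      (∀ Z ∈ 𝒵, Z ⊆ X ∧ δ * X.card ≤ Z.card) ∧ ∀ T, Free T → ∃ Z ∈ 𝒵, Disjoint T Z) (J : ℕ) :
    ∃ 𝒞 : Finset (Finset V), 𝒞.card ≤ D ^ J ∧
      (∀ C ∈ 𝒞, C.card < M ∨ (C.card : ℝ) ≤ (1 - δ) ^ J * Fintype.card V) ∧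
      ∀ T, Free T → ∃ C ∈ 𝒞, T ⊆ C := by
  induction J with
  | zero =>
    refine ⟨{Finset.univ}, by simp, fun C hC => ?_, fun T _ => ⟨Finset.univ, by simp⟩⟩
    simp at hC
    subst hC
    right; simp
  | succ J ih =>
    obtain ⟨𝒞, h1, h2, h3⟩ := ih
    choose! 𝒵 z1 z2 z3 using step
    refine ⟨𝒞.biUnion fun C => if M ≤ C.card then (𝒵 C).image (fun Z => C \ Z) else {C},
      ?_, ?_, ?_⟩
    · rw [pow_succ]
      refine (Finset.card_biUnion_le_card_mul _ _ D ?_).trans (Nat.mul_le_mul_right _ h1)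
      intro C _
      split_ifs with h
      · exact Finset.card_image_le.trans (z1 C h)
      · rw [Finset.card_singleton]; exact hD
    · intro C' hC'
      obtain ⟨C, hC, hC'⟩ := Finset.mem_biUnion.1 hC'
      split_ifs at hC' with h
      · obtain ⟨Z, hZ, rfl⟩ := Finset.mem_image.1 hC'
        obtain ⟨hs, hc⟩ := z2 C h Z hZ
        have hcard : ((C \ Z).card : ℝ) = C.card - Z.card := by
          rw [Finset.card_sdiff_of_subset hs, Nat.cast_sub (Finset.card_le_card hs)]
        by_cases hlt : (C \ Z).card < M
        · exact Or.inl hlt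
        right
        rcases h2 C hC with h' | h'
        · omega
        by_cases hd : δ ≤ 1
        · rw [hcard, pow_succ]
          nlinarith
        · have hC0 : (0 : ℝ) ≤ C.card := Nat.cast_nonneg _
          have : (C.card : ℝ) = 0 := by
            have : (Z.card : ℝ) ≤ C.card := by exact_mod_cast Finset.card_le_card hs
            nlinarith
          have hC00 : C = ∅ := by
            rw [← Finset.card_eq_zero]; exact_mod_cast this
          simp [hC00] at h; omega
      · simp at hC'
        subst hC'
        left; omega
    · intro T hT
      obtain ⟨C, hC, hTC⟩ := h3 T hT
      by_cases h : M ≤ C.card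
      · obtain ⟨Z, hZ, hdis⟩ := z3 C h T hT
        refine ⟨C \ Z, Finset.mem_biUnion.2 ⟨C, hC, ?_⟩, ?_⟩
        · rw [if_pos h]
          exact Finset.mem_image_of_mem _ hZ
        · exact Finset.subset_sdiff.2 ⟨hTC, hdis⟩
      · exact ⟨C, Finset.mem_biUnion.2 ⟨C, hC, by rw [if_neg h]; simp⟩, hTC⟩

/-- First-moment argument for a random map `f : Fin n → V`: the average of `2 ^ |f⁻¹(C)|` over all `f`
is `((|V| + |C|) / |V|) ^ n`, so some `f` keeps all preimages below `t`. -/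
lemma exists_map {V : Type} [Fintype V] [Nonempty V] (𝒞 : Finset (Finset V)) (M n t : ℕ)
    (hM : ∀ C ∈ 𝒞, C.card ≤ M)
    (h : 𝒞.card * (Fintype.card V + M) ^ n < 2 ^ t * Fintype.card V ^ n) :
    ∃ f : Fin n → V, ∀ C ∈ 𝒞, (Finset.univ.filter fun i => f i ∈ C).card < t := by
  by_contra hcon
  push Not at hcon
  have key : ∀ C : Finset V, ∑ f : Fin n → V, 2 ^ (Finset.univ.filter fun i => f i ∈ C).card
      = (Fintype.card V + C.card) ^ n := by
    intro C
    have h1 : ∀ f : Fin n → V, 2 ^ (Finset.univ.filter fun i => f i ∈ C).card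
        = ∏ i, (if f i ∈ C then 2 else 1) := by
      intro f
      rw [Finset.prod_ite]; simp
    simp_rw [h1]
    have h2 := Finset.prod_univ_sum (fun _ : Fin n => (Finset.univ : Finset V))
      (fun _ v => if v ∈ C then 2 else 1)
    rw [Fintype.piFinset_univ] at h2
    rw [← h2]
    have h3 : ∑ v : V, (if v ∈ C then 2 else 1) = Fintype.card V + C.card := by
      have : ∀ v : V, (if v ∈ C then 2 else 1) = 1 + (if v ∈ C then 1 else 0) := by
        intro v; split_ifs <;> rfl
      simp_rw [this, Finset.sum_add_distrib]
      simp
    rw [h3]; simp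
  have h1 : 2 ^ t * Fintype.card V ^ n ≤
      ∑ f : Fin n → V, ∑ C ∈ 𝒞, 2 ^ (Finset.univ.filter fun i => f i ∈ C).card := by
    calc 2 ^ t * Fintype.card V ^ n = ∑ f : Fin n → V, 2 ^ t := by simp [mul_comm]
      _ ≤ _ := by
        refine Finset.sum_le_sum fun f _ => ?_
        obtain ⟨C, hC, hc⟩ := hcon f
        exact (Nat.pow_le_pow_right (by norm_num) hc).trans
          (Finset.single_le_sum (f := fun C => 2 ^ (Finset.univ.filter fun i => f i ∈ C).card)
            (fun _ _ => Nat.zero_le _) hC)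
  rw [Finset.sum_comm] at h1
  simp_rw [key] at h1
  have h2 : ∑ C ∈ 𝒞, (Fintype.card V + C.card) ^ n ≤ 𝒞.card * (Fintype.card V + M) ^ n := by
    rw [← smul_eq_mul]
    refine Finset.sum_le_card_nsmul _ _ _ fun C hC => ?_
    exact Nat.pow_le_pow_left (Nat.add_le_add_left (hM C hC) _) _
  omega

end Iteration

/-! ### Blocks inside the colour classes at the points -/

section Blocks
open scoped Classical

/-- Pairwise disjoint pieces of size `ℓ`, as many as fit into `A`; later pieces may be smaller or
empty. -/
lemma chunks {V : Type} (A : Finset V) (ℓ : ℕ) (hℓ : 0 < ℓ) : ∃ g : ℕ → Finset V,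
    (∀ k, g k ⊆ A) ∧ (∀ k k' u, u ∈ g k → u ∈ g k' → k = k') ∧
    ∀ k, (k + 1) * ℓ ≤ A.card → (g k).card = ℓ := by
  obtain ⟨e⟩ : Nonempty (A ≃ Fin A.card) := ⟨A.equivFin⟩
  refine ⟨fun k => A.filter fun v => ∃ h : v ∈ A, (e ⟨v, h⟩ : ℕ) / ℓ = k,
    fun k => Finset.filter_subset _ _, ?_, ?_⟩
  · intro k k' u h1 h2
    obtain ⟨_, _, h1⟩ := Finset.mem_filter.1 h1
    obtain ⟨_, _, h2⟩ := Finset.mem_filter.1 h2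
    exact h1.symm.trans h2
  · intro k hk
    have : ((Finset.Ico (k * ℓ) ((k + 1) * ℓ)).card) = ℓ := by
      rw [Nat.card_Ico, Nat.add_mul]; omega
    refine Eq.trans ?_ this
    refine Finset.card_bij (fun v hv => (e ⟨v, (Finset.mem_filter.1 hv).1⟩ : ℕ)) ?_ ?_ ?_
    · intro v hv
      obtain ⟨h0, h1, h2⟩ := Finset.mem_filter.1 hv
      rw [Finset.mem_Ico]
      rw [Nat.div_eq_iff hℓ] at h2
      constructor
      · exact h2.1
      · have := h2.2
        rw [Nat.add_mul]; omega
    · intro v hv v' hv' h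
      simpa using e.injective (Fin.ext h)
    · intro n hn
      rw [Finset.mem_Ico] at hn
      refine ⟨(e.symm ⟨n, by omega⟩ : A), ?_, by simp⟩
      refine Finset.mem_filter.2 ⟨Subtype.property _, Subtype.property _, ?_⟩
      simp only [Subtype.coe_eta, Equiv.apply_symm_apply]
      rw [Nat.div_eq_iff hℓ]
      have := hn.2
      rw [Nat.add_mul] at this
      omega

/-- `T` contains no `K_{a,a}` of `cutGraph Inc χ`: there are no `a + a` distinct lines in `T` such that
any two from different sides meet in a point where their flags have different colours. -/
def BicliqueFree {P L : Type} (Inc : P → L → Prop) (χ : P × L → Bool) (a : ℕ) (T : Finset L) :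
    Prop :=
  ¬ ∃ f : Fin a ⊕ Fin a → L, Function.Injective f ∧ (∀ i, f i ∈ T) ∧
    ∀ i j, ∃ x, Inc x (f (Sum.inl i)) ∧ Inc x (f (Sum.inr j)) ∧
      χ (x, f (Sum.inl i)) ≠ χ (x, f (Sum.inr j))

/-- At each point the two colour classes of `X` are cut into pieces of size `ℓ`, and `a` pieces of
each colour form one index. One line from each of the `2 a` parts would give a `K_{a,a}` through a
single point, so a set without `K_{a,a}` misses a part. Rounding loses less than one index at each
point, whence the extra `Fintype.card P`. -/
lemma exists_blocks {P L : Type} [Fintype P] (Inc : P → L → Prop)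
    (χ : P × L → Bool) (a ℓ q : ℕ) (ha : 0 < a) (hℓ : 0 < ℓ)
    (hdeg : ∀ l, (Finset.univ.filter fun x => Inc x l).card ≤ q + 1)
    (hlin : ∀ x x' l l', l ≠ l' → Inc x l → Inc x l' → Inc x' l → Inc x' l' → x = x')
    (X : Finset L) :
    ∃ (I : Finset (Σ _ : P, ℕ)) (B : (Σ _ : P, ℕ) → ℕ → Finset L),
      BlockSys X (2 * a - 1) ℓ (q + 1) I B ∧
      ∑ x, min (fib Inc χ X x true).card (fib Inc χ X x false).card ≤
        a * ℓ * (I.card + Fintype.card P) ∧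
      ∀ T, BicliqueFree Inc χ a T → FreeOf (2 * a - 1) I B T := by
  choose g g1 g2 g3 using fun (x : P) (ε : Bool) => chunks (fib Inc χ X x ε) ℓ hℓ
  let μ : P → ℕ := fun x => min (fib Inc χ X x true).card (fib Inc χ X x false).card
  let I : Finset (Σ _ : P, ℕ) := Finset.univ.sigma fun x => Finset.range (μ x / (a * ℓ))
  let B : (Σ _ : P, ℕ) → ℕ → Finset L := fun i j =>
    if j < a then g i.1 true (i.2 * a + j) else g i.1 false (i.2 * a + (j - a))
  have haℓ : 0 < a * ℓ := Nat.mul_pos ha hℓ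
  have mem : ∀ i j u, u ∈ B i j → u ∈ X ∧ Inc i.1 u ∧ χ (i.1, u) = decide (j < a) := by
    intro i j u hu
    simp only [B] at hu
    split_ifs at hu with h
    · have := g1 _ _ _ hu
      simpa [fib, h] using this
    · have := g1 _ _ _ hu
      simpa [fib, h] using this
  have uniq : ∀ x k k' j j' u, j ≤ 2 * a - 1 → j' ≤ 2 * a - 1 → u ∈ B ⟨x, k⟩ j →
      u ∈ B ⟨x, k'⟩ j' → k = k' ∧ j = j' := by
    intro x k k' j j' u hj hj' hu hu'
    have h1 := (mem _ _ _ hu).2.2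
    have h2 := (mem _ _ _ hu').2.2
    simp only at h1 h2
    have h3 : (j < a) ↔ (j' < a) := by
      rw [h1] at h2; simpa using h2
    have aux : ∀ y y' : ℕ, y < a → y' < a → k * a + y = k' * a + y' → k = k' ∧ y = y' := by
      intro y y' hy hy' h
      have e1 : (k * a + y) / a = k := by
        rw [Nat.div_eq_iff ha]; omega
      have e2 : (k' * a + y') / a = k' := by
        rw [Nat.div_eq_iff ha]; omega
      have e3 : k = k' := by rw [← e1, h, e2]
      subst e3
      exact ⟨rfl, by omega⟩
    simp only [B] at hu hu'
    by_cases h : j < a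
    · rw [if_pos h] at hu
      rw [if_pos (h3.1 h)] at hu'
      exact aux _ _ h (h3.1 h) (g2 _ _ _ _ _ hu hu')
    · have h' : ¬ j' < a := fun h'' => h (h3.2 h'')
      rw [if_neg h] at hu
      rw [if_neg h'] at hu'
      have := aux _ _ (by omega) (by omega) (g2 _ _ _ _ _ hu hu')
      omega
  refine ⟨I, B, ⟨?_, ?_, ?_, ?_, ?_⟩, ?_, ?_⟩
  · intro i _ j _ u hu
    exact (mem i j u hu).1
  · intro i hi j hj
    have hk : i.2 < μ i.1 / (a * ℓ) := by simpa [I] using hi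
    have hk : (i.2 + 1) * (a * ℓ) ≤ μ i.1 := (Nat.le_div_iff_mul_le haℓ).1 hk
    have hle : ∀ y, y < a → (i.2 * a + y + 1) * ℓ ≤ μ i.1 := by
      intro y hy
      calc (i.2 * a + y + 1) * ℓ ≤ ((i.2 + 1) * a) * ℓ := by
            apply Nat.mul_le_mul_right; rw [Nat.add_mul]; omega
        _ ≤ μ i.1 := by rw [mul_assoc]; exact hk
    simp only [B]
    split_ifs with h
    · exact g3 _ _ _ ((hle _ h).trans (min_le_left _ _))
    · exact g3 _ _ _ ((hle _ (by omega)).trans (min_le_right _ _))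
  · intro i _ j hj j' hj' hne
    rw [Finset.disjoint_left]
    intro u hu hu'
    exact hne (uniq i.1 i.2 i.2 j j' u hj hj' hu hu').2
  · intro u
    refine le_trans ?_ (hdeg u)
    refine Finset.card_le_card_of_injOn (fun i => i.1) ?_ ?_
    · intro i hi
      obtain ⟨_, j, _, hu⟩ := Finset.mem_filter.1 (Finset.mem_coe.1 hi)
      simpa using (mem i j u hu).2.1
    · rintro ⟨x, k⟩ hi ⟨x', k'⟩ hi' h
      obtain ⟨_, j, hj, hu⟩ := Finset.mem_filter.1 (Finset.mem_coe.1 hi)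
      obtain ⟨_, j', hj', hu'⟩ := Finset.mem_filter.1 (Finset.mem_coe.1 hi')
      simp only at h
      subst h
      rw [(uniq x k k' j j' u hj hj' hu hu').1]
  · rintro ⟨x, k⟩ _ ⟨x', k'⟩ _ u v huv ⟨j1, hj1, h1⟩ ⟨j2, _, h2⟩ ⟨j3, hj3, h3⟩ ⟨j4, _, h4⟩
    have hx : x = x' := hlin x x' u v huv (mem _ _ _ h1).2.1 (mem _ _ _ h2).2.1
      (mem _ _ _ h3).2.1 (mem _ _ _ h4).2.1
    subst hx
    rw [(uniq x k k' j1 j3 u hj1 hj3 h1 h3).1]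
  · have hc : I.card = ∑ x, μ x / (a * ℓ) := by
      simp [I, Finset.card_sigma]
    have : I.card + Fintype.card P = ∑ x, (μ x / (a * ℓ) + 1) := by
      rw [Finset.sum_add_distrib, hc]; simp
    rw [this, Finset.mul_sum]
    refine Finset.sum_le_sum fun x _ => ?_
    exact (Nat.lt_mul_div_succ (μ x) haℓ).le
  · intro T hT i hi
    by_contra hcon
    push Not at hcon
    apply hT
    have : ∀ j, ∃ w, j ≤ 2 * a - 1 → w ∈ B i j ∧ w ∈ T := by
      intro j
      by_cases hj : j ≤ 2 * a - 1
      · obtain ⟨w, h1, h2⟩ := Finset.not_disjoint_iff.1 (hcon j hj)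
        exact ⟨w, fun _ => ⟨h1, h2⟩⟩
      · obtain ⟨w, _, _⟩ := Finset.not_disjoint_iff.1 (hcon 0 (Nat.zero_le _))
        exact ⟨w, fun h => absurd h hj⟩
    choose w hw using this
    let φ : Fin a ⊕ Fin a → ℕ := Sum.elim (fun i => i.1) (fun i => a + i.1)
    have hφ : ∀ z, φ z ≤ 2 * a - 1 := by
      rintro (z | z) <;> simp [φ] <;> omega
    refine ⟨fun z => w (φ z), ?_, fun z => (hw _ (hφ z)).2, ?_⟩
    · intro z z' h
      simp only at h
      have h1 := (hw _ (hφ z)).1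
      have h2 := (hw _ (hφ z')).1
      rw [← h] at h2
      have h3 := (uniq i.1 i.2 i.2 _ _ _ (hφ z) (hφ z') h1 h2).2
      rcases z with z | z <;> rcases z' with z' | z' <;> simp [φ] at h3 ⊢ <;> omega
    · intro z z'
      have h1 := mem _ _ _ (hw _ (hφ (Sum.inl z))).1
      have h2 := mem _ _ _ (hw _ (hφ (Sum.inr z'))).1
      refine ⟨i.1, h1.2.1, h2.2.1, ?_⟩
      rw [h1.2.2, h2.2.2]
      simp [φ]

end Blocks

/-! ### The graph on the lines and its containers -/

section Cut
open scoped Classical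

/-- The container step for sets of lines without `K_{a,a}`, inside a set `X` on which the colouring
is balanced. The blocks have size `2 ^ (2 a - 1) b` with `b ≈ |X| / (K q ^ 2)` and
`K = 32 a 2 ^ (2 a - 1)`, so that rounding costs at most half of the density. -/
lemma biclique_step (a : ℕ) (ha : 0 < a) : ∃ δ κ : ℝ, 0 < δ ∧ 0 < κ ∧
    ∀ (P L : Type) [Fintype P] [Fintype L] (Inc : P → L → Prop) (χ : P × L → Bool) (q s : ℕ)
      (X : Finset L), 0 < q → 0 < s → Fintype.card P ≤ q ^ 3 →
      (∀ l, (Finset.univ.filter fun x => Inc x l).card ≤ q + 1) →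
      (∀ x x' l l', l ≠ l' → Inc x l → Inc x l' → Inc x' l → Inc x' l' → x = x') →
      (32 * a * 2 ^ (2 * a - 1)) * q ^ 2 ≤ X.card →
      q * X.card ≤ 16 * ∑ x, min (fib Inc χ X x true).card (fib Inc χ X x false).card →
      (2 * (32 * a * 2 ^ (2 * a - 1)) * q ^ 2) ^ (2 * a - 1) ≤ q * s ^ (2 * a - 1) →
      (s : ℝ) ≤ κ * q ^ 2 →
      ∃ 𝒵 : Finset (Finset L), 𝒵.card ≤ (Fintype.card L + 1) ^ ((2 * a - 1) * s) ∧
        (∀ Z ∈ 𝒵, Z ⊆ X ∧ δ * X.card ≤ Z.card) ∧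
        ∀ T, BicliqueFree Inc χ a T → ∃ Z ∈ 𝒵, Disjoint T Z := by
  obtain ⟨r, hr⟩ : ∃ r, r = 2 * a - 1 := ⟨_, rfl⟩
  obtain ⟨K, hK⟩ : ∃ K, K = 32 * a * 2 ^ r := ⟨_, rfl⟩
  have hK0 : 0 < K := by rw [hK]; positivity
  have hKR : (0 : ℝ) < K := by exact_mod_cast hK0
  obtain ⟨δ, κ, hδ, hκ, H⟩ := container_step r (1 / (2 * K)) (by positivity)
  refine ⟨δ, κ * K, hδ, by positivity, ?_⟩
  intro P L _ _ Inc χ q s X hq hs hP hdeg hlin hX hcut hsr hsκ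
  rw [← hr] at hX hsr ⊢
  rw [← hK] at hX hsr
  have hKq : 0 < K * q ^ 2 := by positivity
  obtain ⟨b, hb⟩ : ∃ b, b = X.card / (K * q ^ 2) := ⟨_, rfl⟩
  have hb0 : 0 < b := by rw [hb]; exact Nat.div_pos hX hKq
  have hb1 : K * q ^ 2 * b ≤ X.card := by rw [hb]; exact Nat.mul_div_le _ _
  have hb2 : X.card ≤ 2 * K * q ^ 2 * b := by
    have := Nat.lt_mul_div_succ X.card hKq
    rw [← hb] at this
    nlinarith
  obtain ⟨I, B, hB, hI, hT⟩ := exists_blocks Inc χ a (2 ^ r * b) q ha (by positivity) hdeg hlin X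
  rw [← hr] at hB hT
  have hden : q * X.card ≤ K * (b * I.card) := by
    have h1 : q * X.card ≤ 16 * (a * (2 ^ r * b) * (I.card + q ^ 3)) :=
      hcut.trans (Nat.mul_le_mul_left _ (hI.trans (Nat.mul_le_mul_left _ (by omega))))
    have h2 : 2 * (16 * (a * (2 ^ r * b) * (I.card + q ^ 3))) =
        K * (b * I.card) + q * (K * q ^ 2 * b) := by rw [hK]; ring
    have h3 := Nat.mul_le_mul_left q hb1
    omega
  have hq1 : (1 : ℝ) ≤ q := by exact_mod_cast hq
  have c1 : 1 / (2 * (K : ℝ)) * X.card * ((q + 1 : ℕ) : ℝ) ≤ b * I.card := by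
    have h1 : (q : ℝ) * X.card ≤ K * (b * I.card) := by exact_mod_cast hden
    have h2 : (X.card : ℝ) * (q + 1) ≤ 2 * (q * X.card) := by
      have : (0 : ℝ) ≤ X.card := Nat.cast_nonneg _
      nlinarith
    rw [div_mul_eq_mul_div, div_mul_eq_mul_div, div_le_iff₀ (by positivity)]
    push_cast
    linarith
  have hb1' : (K : ℝ) * q ^ 2 * b ≤ X.card := by exact_mod_cast hb1
  have c2 : (s * b : ℝ) ≤ κ * X.card := by
    calc (s * b : ℝ) ≤ κ * K * q ^ 2 * b := by gcongr
      _ = κ * (K * q ^ 2 * b) := by ring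
      _ ≤ _ := by gcongr
  have c3 : (X.card : ℝ) ^ r ≤ ((q + 1 : ℕ) : ℝ) * (s * b) ^ r := by
    have : X.card ^ r ≤ (q + 1) * (s * b) ^ r := by
      calc X.card ^ r ≤ (2 * K * q ^ 2 * b) ^ r := Nat.pow_le_pow_left hb2 _
        _ = (2 * K * q ^ 2) ^ r * b ^ r := mul_pow _ _ _
        _ ≤ q * s ^ r * b ^ r := Nat.mul_le_mul_right _ hsr
        _ = q * (s * b) ^ r := by rw [mul_pow]; ring
        _ ≤ _ := Nat.mul_le_mul_right _ (by omega)
    exact_mod_cast this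
  obtain ⟨𝒵, z1, z2, z3⟩ := H L _ X b s (q + 1) I B hB hb0 hs (by omega) c1 c2 c3
  refine ⟨𝒵, z1.trans (Nat.pow_le_pow_left ?_ _), z2, fun T hTf => z3 T (hT T hTf)⟩
  have := Finset.card_le_univ X
  omega

/-- The graph on the lines in which two lines are adjacent when they meet in a point at which their
flags have different colours. -/
def cutGraph {P L : Type} (Inc : P → L → Prop) (χ : P × L → Bool) : SimpleGraph L where
  Adj l l' := ∃ x, Inc x l ∧ Inc x l' ∧ χ (x, l) ≠ χ (x, l')
  symm := ⟨fun _ _ ⟨x, h1, h2, h3⟩ => ⟨x, h2, h1, h3.symm⟩⟩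
  loopless := ⟨fun _ ⟨_, _, _, h⟩ => h rfl⟩

/-- Without O’Nan configurations, four pairwise adjacent lines contain three through a common
point, and two colours cannot be pairwise different on three flags. -/
lemma cutGraph_K4 {P L : Type} (Inc : P → L → Prop) (χ : P × L → Bool)
    (hlin : ∀ x x' l l', l ≠ l' → Inc x l → Inc x l' → Inc x' l → Inc x' l' → x = x')
    (honan : ∀ (l : Fin 4 → L) (x : Fin 4 → Fin 4 → P),
        (∀ i j, i < j → Inc (x i j) (l i) ∧ Inc (x i j) (l j)) →
        ∃ i j k, i < j ∧ i ≠ k ∧ j ≠ k ∧ Inc (x i j) (l k))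
    (l : Fin 4 → L) (h : ∀ i j, i ≠ j → (cutGraph Inc χ).Adj (l i) (l j)) : False := by
  choose x h1 h2 h3 using h
  obtain ⟨i, j, k, hij, hik, hjk, hI⟩ := honan l
    (fun i j => if h : i ≠ j then x i j h else x 0 1 (by decide)) (by
      intro i j hij
      simp only [dif_pos hij.ne]
      exact ⟨h1 _ _ _, h2 _ _ _⟩)
  simp only [dif_pos hij.ne] at hI
  have hne : ∀ i j, i ≠ j → l i ≠ l j := by
    intro i j hij he
    exact h3 i j hij (by rw [he])
  have e1 : x i k hik = x i j hij.ne :=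
    hlin _ _ _ _ (hne i k hik) (h1 _ _ _) (h2 _ _ _) (h1 _ _ _) hI
  have e2 : x j k hjk = x i j hij.ne :=
    hlin _ _ _ _ (hne j k hjk) (h1 _ _ _) (h2 _ _ _) (h2 _ _ _) hI
  have a1 := h3 i j hij.ne
  have a2 := h3 i k hik
  have a3 := h3 j k hjk
  rw [e1] at a2
  rw [e2] at a3
  revert a1 a2 a3
  generalize χ (x i j hij.ne, l i) = u
  generalize χ (x i j hij.ne, l j) = v
  generalize χ (x i j hij.ne, l k) = w
  revert u v w
  decide

end Cut

/-! ### Bounding the independence number -/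

section Assembly
open scoped Classical

/-- The pullback of `cutGraph` along `f` is `K₄`-free, and the image under `f` of a `K_{a,a}`-free set
of vertices is biclique-free: a biclique in the image consists of distinct lines and therefore lifts
to distinct vertices. -/
lemma minFIndep_le_of_map {P L : Type} (Inc : P → L → Prop) (χ : P × L → Bool) (a n t : ℕ)
    (hlin : ∀ x x' l l', l ≠ l' → Inc x l → Inc x l' → Inc x' l → Inc x' l' → x = x')
    (honan : ∀ (l : Fin 4 → L) (x : Fin 4 → Fin 4 → P),
        (∀ i j, i < j → Inc (x i j) (l i) ∧ Inc (x i j) (l j)) →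
        ∃ i j k, i < j ∧ i ≠ k ∧ j ≠ k ∧ Inc (x i j) (l k))
    (𝒞 : Finset (Finset L)) (h𝒞 : ∀ T, BicliqueFree Inc χ a T → ∃ C ∈ 𝒞, T ⊆ C)
    (f : Fin n → L) (hf : ∀ C ∈ 𝒞, (Finset.univ.filter fun i => f i ∈ C).card < t) :
    minFIndep (completeBipartiteGraph (Fin a) (Fin a)) (⊤ : SimpleGraph (Fin 4)) n ≤ t := by
  have h1 : fIndepNum (completeBipartiteGraph (Fin a) (Fin a)) ((cutGraph Inc χ).comap f) ≤ t := by
    refine csSup_le' ?_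
    rintro k ⟨S, rfl, hS⟩
    have hfree : BicliqueFree Inc χ a (S.image f) := by
      rintro ⟨g, hg, hgS, hadj⟩
      apply hS
      have : ∀ z, ∃ i : (S : Set (Fin n)), f i = g z := by
        intro z
        obtain ⟨i, hi, h⟩ := Finset.mem_image.1 (hgS z)
        exact ⟨⟨i, hi⟩, h⟩
      choose h hh using this
      refine ⟨h, fun z z' e => hg (by rw [← hh, ← hh, e]), ?_⟩
      have key : ∀ i j, (cutGraph Inc χ).Adj (g (Sum.inl i)) (g (Sum.inr j)) := hadj
      intro z z' hz
      show (cutGraph Inc χ).Adj (f (h z)) (f (h z'))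
      rw [hh, hh]
      rcases z with z | z <;> rcases z' with z' | z'
      · simp at hz
      · exact key _ _
      · exact (key _ _).symm
      · simp at hz
    obtain ⟨C, hC, hSC⟩ := h𝒞 _ hfree
    refine le_trans (Finset.card_le_card fun i hi => ?_) (hf C hC).le
    exact Finset.mem_filter.2 ⟨Finset.mem_univ _, hSC (Finset.mem_image_of_mem f hi)⟩
  refine le_trans (Nat.sInf_le ⟨(cutGraph Inc χ).comap f, ?_, rfl⟩) h1
  rintro ⟨g, _, hadj⟩
  exact cutGraph_K4 Inc χ hlin honan (fun i => f (g i)) fun i j hij => hadj hij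

/-- The bound `t` for explicit parameters: `J` rounds of containers with `s` picks for each part, using
`|L| + 1 ≤ q ^ 5` to count the containers and `1 + x ≤ exp x` for the random map. -/
lemma minFIndep_le (a : ℕ) (ha : 0 < a) : ∃ δ κ : ℝ, 0 < δ ∧ δ ≤ 1 / 2 ∧ 0 < κ ∧
    ∀ q s J n t : ℕ, q.Prime → (q : ℝ) ^ 4 * (4 / 5) ^ q ≤ 1 / 2 → 0 < s →
      (2 * (32 * a * 2 ^ (2 * a - 1)) * q ^ 2) ^ (2 * a - 1) ≤ q * s ^ (2 * a - 1) →
      (s : ℝ) ≤ κ * q ^ 2 → (1 - δ) ^ J * (q : ℝ) ^ 4 ≤ 1 →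
      5 * (2 * a - 1 : ℕ) * s * J * Real.log q +
        2 * n * (32 * a * 2 ^ (2 * a - 1) : ℕ) / (q : ℝ) ^ 2 < t * Real.log 2 →
      minFIndep (completeBipartiteGraph (Fin a) (Fin a)) (⊤ : SimpleGraph (Fin 4)) n ≤ t := by
  obtain ⟨δ, κ, hδ, hκ, H⟩ := biclique_step a ha
  refine ⟨min δ (1 / 2), κ, lt_min hδ (by norm_num), min_le_right _ _, hκ, ?_⟩
  obtain ⟨K, hK⟩ : ∃ K, K = 32 * a * 2 ^ (2 * a - 1) := ⟨_, rfl⟩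
  intro q s J n t hq hq1 hs hsr hsκ hJ ht
  obtain ⟨P, L, _, _, Inc, hP, hL, hL', hd1, hd2, hlin, honan⟩ := unital_exists q hq
  have hq2 := hq.two_le
  have hLpos : 0 < Fintype.card L := by
    have : 0 < q ^ 4 := by positivity
    omega
  have : Nonempty L := Fintype.card_pos_iff.1 hLpos
  have hLR : (Fintype.card L : ℝ) ≤ (q : ℝ) ^ 4 := by exact_mod_cast hL
  have hLR' : (q : ℝ) ^ 4 ≤ 2 * Fintype.card L := by exact_mod_cast hL'
  obtain ⟨χ, hχ⟩ := exists_cut Inc q hP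
    (le_trans (mul_le_mul_of_nonneg_right hLR (by positivity)) hq1) hd1
  have hK4 : 4 ≤ K := by
    rw [hK]
    have : 1 ≤ 2 ^ (2 * a - 1) := Nat.one_le_two_pow
    nlinarith
  have hM0 : 0 < K * q ^ 2 := by positivity
  obtain ⟨𝒞, c1, c2, c3⟩ := iterate_containers (BicliqueFree Inc χ a) (K * q ^ 2)
    ((Fintype.card L + 1) ^ ((2 * a - 1) * s)) (min δ (1 / 2)) hM0 (by positivity) (by
      intro X hX
      have h4 : 4 * q ^ 2 ≤ X.card := (Nat.mul_le_mul_right _ hK4).trans hX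
      obtain ⟨𝒵, z1, z2, z3⟩ := H P L Inc χ q s X hq.pos hs hP hd2 hlin (by rw [← hK]; exact hX)
        (hχ X h4 (by omega)) hsr hsκ
      refine ⟨𝒵, z1, fun Z hZ => ⟨(z2 Z hZ).1, le_trans ?_ (z2 Z hZ).2⟩, z3⟩
      exact mul_le_mul_of_nonneg_right (min_le_left _ _) (Nat.cast_nonneg _)) J
  have c2' : ∀ C ∈ 𝒞, C.card ≤ K * q ^ 2 := by
    intro C hC
    rcases c2 C hC with h | h
    · exact h.le
    · have h0 : (0 : ℝ) ≤ (1 - min δ (1 / 2)) ^ J := by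
        apply pow_nonneg
        linarith [min_le_right δ (1 / 2)]
      have : (C.card : ℝ) ≤ 1 := h.trans ((mul_le_mul_of_nonneg_left hLR h0).trans hJ)
      have : C.card ≤ 1 := by exact_mod_cast this
      omega
  obtain ⟨f, hf⟩ := exists_map 𝒞 (K * q ^ 2) n t c2' (by
    have e1 : (𝒞.card : ℝ) ≤ Real.exp (5 * (2 * a - 1 : ℕ) * s * J * Real.log q) := by
      have h1 : 𝒞.card ≤ q ^ (5 * (2 * a - 1) * s * J) := by
        refine c1.trans ?_
        rw [← pow_mul]
        calc (Fintype.card L + 1) ^ ((2 * a - 1) * s * J)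
            ≤ (q ^ 5) ^ ((2 * a - 1) * s * J) := by
              refine Nat.pow_le_pow_left ?_ _
              have : 1 ≤ q ^ 4 := Nat.one_le_pow _ _ hq.pos
              calc Fintype.card L + 1 ≤ q ^ 4 * 2 := by omega
                _ ≤ q ^ 4 * q := Nat.mul_le_mul_left _ hq2
                _ = q ^ 5 := by ring
          _ = _ := by rw [← pow_mul]; congr 1; ring
      calc (𝒞.card : ℝ) ≤ (q : ℝ) ^ (5 * (2 * a - 1) * s * J) := by exact_mod_cast h1
        _ = Real.exp (Real.log q) ^ (5 * (2 * a - 1) * s * J) := by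
          rw [Real.exp_log (by exact_mod_cast hq.pos)]
        _ = _ := by rw [← Real.exp_nat_mul]; push_cast; rfl
    have hqR : (0 : ℝ) < q := by exact_mod_cast hq.pos
    have e2 : ((Fintype.card L : ℝ) + K * q ^ 2) ^ n ≤
        Real.exp (2 * n * K / (q : ℝ) ^ 2) * (Fintype.card L : ℝ) ^ n := by
      have h1 : (Fintype.card L : ℝ) + K * q ^ 2 ≤
          Real.exp (2 * K / (q : ℝ) ^ 2) * Fintype.card L := by
        have h2 := Real.add_one_le_exp (2 * K / (q : ℝ) ^ 2)
        have h3 : (K : ℝ) * q ^ 2 ≤ 2 * K / (q : ℝ) ^ 2 * Fintype.card L := by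
          rw [div_mul_eq_mul_div, le_div_iff₀ (by positivity)]
          have : (0 : ℝ) ≤ K := Nat.cast_nonneg _
          nlinarith
        have : (0 : ℝ) ≤ Fintype.card L := Nat.cast_nonneg _
        nlinarith
      calc ((Fintype.card L : ℝ) + K * q ^ 2) ^ n
          ≤ (Real.exp (2 * K / (q : ℝ) ^ 2) * Fintype.card L) ^ n :=
            pow_le_pow_left₀ (by positivity) h1 _
        _ = _ := by
          rw [mul_pow, ← Real.exp_nat_mul]; congr 2; ring
    have e3 : Real.exp (5 * (2 * a - 1 : ℕ) * s * J * Real.log q) *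
        Real.exp (2 * n * K / (q : ℝ) ^ 2) < 2 ^ t := by
      rw [← Real.exp_add]
      have : (2 : ℝ) ^ t = Real.exp (t * Real.log 2) := by
        rw [Real.exp_nat_mul, Real.exp_log (by norm_num)]
      rw [this, Real.exp_lt_exp, hK]
      exact ht
    have hLp : (0 : ℝ) < (Fintype.card L : ℝ) ^ n := by positivity
    have : (𝒞.card : ℝ) * ((Fintype.card L : ℝ) + K * q ^ 2) ^ n <
        2 ^ t * (Fintype.card L : ℝ) ^ n := by
      calc (𝒞.card : ℝ) * ((Fintype.card L : ℝ) + K * q ^ 2) ^ n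
          ≤ Real.exp (5 * (2 * a - 1 : ℕ) * s * J * Real.log q) *
            (Real.exp (2 * n * K / (q : ℝ) ^ 2) * (Fintype.card L : ℝ) ^ n) := by gcongr
        _ = _ * (Fintype.card L : ℝ) ^ n := (mul_assoc _ _ _).symm
        _ < _ := mul_lt_mul_of_pos_right e3 hLp
    exact_mod_cast this)
  exact minFIndep_le_of_map Inc χ a n t hlin honan 𝒞 c3 f hf

end Assembly

/-! ### Choice of the parameters -/

section Numerics
open Filter Topology

lemma eventually_large (κ c ε : ℝ) (hκ : 0 < κ) (hε : 0 < ε) :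
    ∃ Q : ℕ, ∀ q : ℕ, Q ≤ q → (q : ℝ) ^ 4 * (4 / 5) ^ q ≤ 1 / 2 ∧ c ≤ κ * (q : ℝ) ^ ε ∧ 3 ≤ q := by
  have h1 : ∀ᶠ q : ℕ in atTop, (q : ℝ) ^ 4 * (4 / 5) ^ q ≤ 1 / 2 :=
    (tendsto_pow_const_mul_const_pow_of_lt_one 4 (r := (4 / 5 : ℝ)) (by norm_num)
      (by norm_num)).eventually_le_const (by norm_num)
  have h2 : ∀ᶠ q : ℕ in atTop, c ≤ κ * (q : ℝ) ^ ε :=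
    (((tendsto_rpow_atTop hε).comp tendsto_natCast_atTop_atTop).const_mul_atTop hκ).eventually_ge_atTop c
  obtain ⟨Q, hQ⟩ := eventually_atTop.1 (h1.and (h2.and (eventually_ge_atTop 3)))
  exact ⟨Q, hQ⟩

/-- With `r = 2 a - 1` and `e = 2 - 1 / r`, the choices `s ≈ 2 K q ^ e`, `J ≈ 4 log q / δ` and
`t ≈ 2 A q ^ e log² q` meet all requirements of `minFIndep_le`. -/
lemma parameters (r K q n : ℕ) (δ κ e : ℝ) (hr : 0 < r) (hK : 0 < K) (hδ : 0 < δ)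
    (hδ' : δ ≤ 1 / 2) (he : e = 2 - 1 / (r : ℝ)) (hq : 3 ≤ q)
    (hκ : 3 * K ≤ κ * (q : ℝ) ^ (1 / (r : ℝ))) (hn : (n : ℝ) ≤ (q : ℝ) ^ (2 + e)) :
    ∃ s J t : ℕ, 0 < s ∧ (2 * K * q ^ 2) ^ r ≤ q * s ^ r ∧ (s : ℝ) ≤ κ * q ^ 2 ∧
      (1 - δ) ^ J * (q : ℝ) ^ 4 ≤ 1 ∧
      5 * r * s * J * Real.log q + 2 * n * K / (q : ℝ) ^ 2 < t * Real.log 2 ∧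
      (t : ℝ) ≤ (2 * (15 * r * K * (4 / δ + 1) + 2 * K) + 2) * (q : ℝ) ^ e * Real.log q ^ 2 := by
  have hr1 : (1 : ℝ) ≤ r := by exact_mod_cast hr
  have hK1 : (1 : ℝ) ≤ K := by exact_mod_cast hK
  have hq3 : (3 : ℝ) ≤ q := by exact_mod_cast hq
  have hq0 : (0 : ℝ) < q := by linarith
  have he1 : 1 ≤ e := by
    have : 1 / (r : ℝ) ≤ 1 := by rw [div_le_one (by linarith)]; exact hr1
    linarith
  obtain ⟨y, hy⟩ : ∃ y, y = (q : ℝ) ^ e := ⟨_, rfl⟩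
  have hy1 : 1 ≤ y := by rw [hy]; exact Real.one_le_rpow (by linarith) (by linarith)
  have hlog : 1 ≤ Real.log q := by
    rw [Real.le_log_iff_exp_le hq0]
    linarith [Real.exp_one_lt_d9]
  have hyr : (q : ℝ) * y ^ r = (q ^ 2) ^ r := by
    rw [hy, ← Real.rpow_natCast ((q : ℝ) ^ e), ← Real.rpow_mul hq0.le, ← pow_mul,
      ← Real.rpow_natCast (q : ℝ) (2 * r)]
    nth_rewrite 1 [← Real.rpow_one (q : ℝ)]
    rw [← Real.rpow_add hq0]
    congr 1
    rw [he]; push_cast; field_simp; ring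
  have hy2 : y * (q : ℝ) ^ (1 / (r : ℝ)) = q ^ 2 := by
    rw [hy, ← Real.rpow_add hq0, he, ← Real.rpow_natCast]
    congr 1; push_cast; ring
  obtain ⟨s, hs⟩ : ∃ s, s = ⌈2 * K * y⌉₊ := ⟨_, rfl⟩
  have hs1 : 2 * K * y ≤ s := by rw [hs]; exact Nat.le_ceil _
  have hs2 : (s : ℝ) ≤ 3 * K * y := by
    have := (Nat.ceil_lt_add_one (a := 2 * K * y) (by positivity)).le
    rw [← hs] at this
    nlinarith
  obtain ⟨J, hJ⟩ : ∃ J, J = ⌈4 * Real.log q / δ⌉₊ := ⟨_, rfl⟩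
  have hJ1 : 4 * Real.log q / δ ≤ J := by rw [hJ]; exact Nat.le_ceil _
  have hJ2 : (J : ℝ) ≤ (4 / δ + 1) * Real.log q := by
    have := (Nat.ceil_lt_add_one (a := 4 * Real.log q / δ) (by positivity)).le
    rw [← hJ] at this
    have e1 : (4 / δ + 1) * Real.log q = 4 * Real.log q / δ + Real.log q := by ring
    linarith
  obtain ⟨A, hA⟩ : ∃ A : ℝ, A = 15 * r * K * (4 / δ + 1) + 2 * K := ⟨_, rfl⟩
  have hA0 : 0 < A := by rw [hA]; positivity
  obtain ⟨t, ht⟩ : ∃ t, t = ⌈2 * A * y * Real.log q ^ 2⌉₊ + 1 := ⟨_, rfl⟩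
  have ht1 : 2 * A * y * Real.log q ^ 2 + 1 ≤ t := by
    rw [ht]; push_cast; linarith [Nat.le_ceil (2 * A * y * Real.log q ^ 2)]
  have ht2 : (t : ℝ) ≤ (2 * A + 2) * y * Real.log q ^ 2 := by
    have h1 := (Nat.ceil_lt_add_one (a := 2 * A * y * Real.log q ^ 2) (by positivity)).le
    have h2 : 1 ≤ y * Real.log q ^ 2 := one_le_mul_of_one_le_of_one_le hy1 (one_le_pow₀ hlog)
    rw [ht]; push_cast; linarith
  refine ⟨s, J, t, ?_, ?_, ?_, ?_, ?_, ?_⟩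
  · have : (0 : ℝ) < s := by
      refine lt_of_lt_of_le ?_ hs1
      positivity
    exact_mod_cast this
  · have : (2 * K * (q : ℝ) ^ 2) ^ r ≤ q * (s : ℝ) ^ r := by
      calc (2 * K * (q : ℝ) ^ 2) ^ r = q * (2 * K * y) ^ r := by
            rw [mul_pow, mul_pow _ y, ← hyr]; ring
        _ ≤ _ := by gcongr
    exact_mod_cast this
  · calc (s : ℝ) ≤ 3 * K * y := hs2
      _ ≤ κ * (q : ℝ) ^ (1 / (r : ℝ)) * y := by gcongr
      _ = κ * q ^ 2 := by rw [← hy2]; ring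
  · have h1 : (1 - δ) ^ J ≤ Real.exp (-(4 * Real.log q)) := by
      calc (1 - δ) ^ J ≤ Real.exp (-δ) ^ J :=
            pow_le_pow_left₀ (by linarith) (by linarith [Real.add_one_le_exp (-δ)]) _
        _ = Real.exp (J * (-δ)) := by rw [Real.exp_nat_mul]
        _ ≤ _ := by
          rw [Real.exp_le_exp]
          rw [div_le_iff₀ hδ] at hJ1
          linarith
    have h2 : (q : ℝ) ^ 4 = Real.exp (4 * Real.log q) := by
      have := Real.exp_nat_mul (Real.log q) 4
      rw [Real.exp_log hq0] at this
      rw [← this]; norm_num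
    calc (1 - δ) ^ J * (q : ℝ) ^ 4 ≤ Real.exp (-(4 * Real.log q)) * Real.exp (4 * Real.log q) := by
          rw [h2]; gcongr
      _ = 1 := by rw [← Real.exp_add]; simp
  · have h1 : 5 * r * s * J * Real.log q ≤ 15 * r * K * (4 / δ + 1) * (y * Real.log q ^ 2) := by
      calc 5 * r * s * J * Real.log q
          ≤ 5 * r * (3 * K * y) * ((4 / δ + 1) * Real.log q) * Real.log q := by gcongr
        _ = _ := by ring
    have h2 : 2 * n * K / (q : ℝ) ^ 2 ≤ 2 * K * (y * Real.log q ^ 2) := by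
      have h3 : (n : ℝ) ≤ q ^ 2 * y := by
        refine hn.trans (le_of_eq ?_)
        rw [Real.rpow_add hq0, hy]; norm_num
      rw [div_le_iff₀ (by positivity)]
      have h4 : (1 : ℝ) ≤ Real.log q ^ 2 := one_le_pow₀ hlog
      calc 2 * (n : ℝ) * K ≤ 2 * (q ^ 2 * y) * K * 1 := by rw [mul_one]; gcongr
        _ ≤ 2 * (q ^ 2 * y) * K * Real.log q ^ 2 := by gcongr
        _ = _ := by ring
    have h3 : 5 * r * s * J * Real.log q + 2 * n * K / (q : ℝ) ^ 2 ≤ A * y * Real.log q ^ 2 := by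
      rw [hA]; linarith
    have h4 := Real.log_two_gt_d9
    have h5 : (0 : ℝ) ≤ A * y * Real.log q ^ 2 := by positivity
    nlinarith
  · rw [← hA, ← hy]; exact ht2

/-- Bertrand's postulate gives, for every large `n`, a prime `q` with `n ≤ q ^ E` and
`q ≤ 4 n ^ (1 / E)`. -/
lemma exists_prime_scale (E : ℝ) (hE : 3 ≤ E) (Q : ℕ) : ∃ N : ℕ, ∀ n : ℕ, n > N →
    ∃ q : ℕ, q.Prime ∧ Q ≤ q ∧ (n : ℝ) ≤ (q : ℝ) ^ E ∧ (q : ℝ) ≤ 4 * (n : ℝ) ^ (1 / E) ∧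
      Real.log q ≤ Real.log n ∧ 1 ≤ Real.log n := by
  have hE0 : 0 < E := by linarith
  have h1 : ∀ᶠ n : ℕ in atTop, max (Q : ℝ) 4 ≤ (n : ℝ) ^ (1 / E) :=
    ((tendsto_rpow_atTop (by positivity : 0 < 1 / E)).comp
      tendsto_natCast_atTop_atTop).eventually_ge_atTop _
  obtain ⟨N, hN⟩ := eventually_atTop.1 (h1.and (eventually_ge_atTop 3))
  refine ⟨N, fun n hn => ?_⟩
  obtain ⟨hx, hn3⟩ := hN n (le_of_lt hn)
  have hn3 : (3 : ℝ) ≤ n := by exact_mod_cast hn3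
  obtain ⟨x, hxd⟩ : ∃ x, x = (n : ℝ) ^ (1 / E) := ⟨_, rfl⟩
  rw [← hxd] at hx ⊢
  have hxQ := (le_max_left _ _).trans hx
  have hx4 := (le_max_right _ _).trans hx
  have hc1 := Nat.le_ceil x
  have hc2 := Nat.ceil_lt_add_one (a := x) (by linarith)
  have hc0 : ⌈x⌉₊ ≠ 0 := by
    intro h; rw [h] at hc1; norm_num at hc1; linarith
  obtain ⟨q, hq, hq1, hq2⟩ := Nat.exists_prime_lt_and_le_two_mul ⌈x⌉₊ hc0
  have hq1 : (⌈x⌉₊ : ℝ) < q := by exact_mod_cast hq1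
  have hq2 : (q : ℝ) ≤ 2 * ⌈x⌉₊ := by exact_mod_cast hq2
  have hxq : x ≤ q := by linarith
  have hq4 : (q : ℝ) ≤ 4 * x := by linarith
  refine ⟨q, hq, ?_, ?_, hq4, ?_, ?_⟩
  · exact_mod_cast hxQ.trans hxq
  · calc (n : ℝ) = x ^ E := by
          rw [hxd, ← Real.rpow_mul (by linarith), one_div_mul_cancel hE0.ne', Real.rpow_one]
      _ ≤ _ := Real.rpow_le_rpow (by linarith) hxq hE0.le
  · have hq0 : (0 : ℝ) < q := by linarith
    refine Real.log_le_log hq0 ?_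
    calc (q : ℝ) ≤ 4 * x := hq4
      _ ≤ x * x := by nlinarith
      _ = (n : ℝ) ^ (1 / E + 1 / E) := by rw [Real.rpow_add (by linarith), hxd]
      _ ≤ (n : ℝ) ^ (1 : ℝ) := by
        refine Real.rpow_le_rpow_of_exponent_le (by linarith) ?_
        rw [← add_div, div_le_one hE0]; linarith
      _ = n := Real.rpow_one _
  · rw [Real.le_log_iff_exp_le (by linarith)]
    linarith [Real.exp_one_lt_d9]

end Numerics

theorem stmt8 (a : ℕ) (ha : 0 < a) :
    ∃ (C : ℝ) (N : ℕ), 0 < C ∧ ∀ n : ℕ, n > N →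
      (minFIndep (completeBipartiteGraph (Fin a) (Fin a))
          (⊤ : SimpleGraph (Fin 4)) n : ℝ) ≤
        C * (n : ℝ) ^ ((1 : ℝ) / 2 - 1 / (16 * a - 10)) * Real.log n ^ 3 := by
  obtain ⟨δ, κ, hδ, hδ', hκ, H⟩ := minFIndep_le a ha
  obtain ⟨K, hK⟩ : ∃ K, K = 32 * a * 2 ^ (2 * a - 1) := ⟨_, rfl⟩
  obtain ⟨r, hr⟩ : ∃ r, r = 2 * a - 1 := ⟨_, rfl⟩
  have hK0 : 0 < K := by rw [hK]; positivity
  have hr0 : 0 < r := by omega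
  have hr1 : (1 : ℝ) ≤ r := by exact_mod_cast hr0
  have ha1 : (1 : ℝ) ≤ a := by exact_mod_cast ha
  have hra : (r : ℝ) = 2 * a - 1 := by
    have : r + 1 = 2 * a := by omega
    have : (r : ℝ) + 1 = 2 * a := by exact_mod_cast this
    linarith
  obtain ⟨e, he⟩ : ∃ e, e = 2 - 1 / (r : ℝ) := ⟨_, rfl⟩
  have he1 : 1 ≤ e ∧ e ≤ 2 := by
    have h1 : 1 / (r : ℝ) ≤ 1 := by rw [div_le_one (by linarith)]; exact hr1
    have h2 : 0 ≤ 1 / (r : ℝ) := by positivity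
    constructor <;> linarith
  obtain ⟨Q, hQ⟩ := eventually_large κ (3 * K) (1 / (r : ℝ)) hκ (by positivity)
  obtain ⟨N, hN⟩ := exists_prime_scale (2 + e) (by linarith) Q
  obtain ⟨D, hD⟩ : ∃ D : ℝ, D = 2 * (15 * r * K * (4 / δ + 1) + 2 * K) + 2 := ⟨_, rfl⟩
  have hD0 : 0 < D := by rw [hD]; positivity
  refine ⟨D * 16, N, by positivity, fun n hn => ?_⟩
  obtain ⟨q, hq, hqQ, hnq, hqn, hlog, hlog1⟩ := hN n hn
  obtain ⟨hq1, hqκ, hq3⟩ := hQ q hqQ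
  obtain ⟨s, J, t, hs, hs1, hs2, hJ, ht, htle⟩ :=
    parameters r K q n δ κ e hr0 hK0 hδ hδ' he hq3 hqκ hnq
  have hmain := H q s J n t hq hq1 hs (by rw [← hK, ← hr]; exact hs1) hs2 hJ
    (by rw [← hK, ← hr]; exact ht)
  have hn0 : (0 : ℝ) ≤ n := Nat.cast_nonneg _
  have hqe : (q : ℝ) ^ e ≤ 16 * (n : ℝ) ^ ((1 : ℝ) / 2 - 1 / (16 * a - 10)) := by
    calc (q : ℝ) ^ e ≤ (4 * (n : ℝ) ^ (1 / (2 + e))) ^ e :=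
          Real.rpow_le_rpow (Nat.cast_nonneg _) hqn (by linarith)
      _ = 4 ^ e * (n : ℝ) ^ (1 / (2 + e) * e) := by
        rw [Real.mul_rpow (by norm_num) (by positivity), ← Real.rpow_mul hn0]
      _ ≤ 4 ^ (2 : ℝ) * (n : ℝ) ^ (1 / (2 + e) * e) := by
        gcongr
        · norm_num
        · exact he1.2
      _ = _ := by
        have hexp : 1 / (2 + e) * e = (1 : ℝ) / 2 - 1 / (16 * a - 10) := by
          have h1 : (2 * (a : ℝ) - 1) ≠ 0 := by linarith
          have h2 : (8 * (a : ℝ) - 5) ≠ 0 := by linarith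
          have h3 : e = (4 * a - 3) / (2 * a - 1) := by
            rw [he, hra]; field_simp; ring
          have h4 : 2 + e = (8 * a - 5) / (2 * a - 1) := by
            rw [h3]; field_simp; ring
          rw [h4, h3, show (16 * (a : ℝ) - 10) = 2 * (8 * a - 5) by ring,
            one_div_div, mul_comm, div_mul_div_cancel₀ h1]
          obtain ⟨b, hb⟩ : ∃ b, b = 8 * (a : ℝ) - 5 := ⟨_, rfl⟩
          rw [← hb] at h2
          rw [← hb, show 4 * (a : ℝ) - 3 = (b - 1) / 2 by linarith]
          field_simp
        rw [hexp]; norm_num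
  have hlogq : 0 ≤ Real.log q := Real.log_natCast_nonneg _
  calc (minFIndep (completeBipartiteGraph (Fin a) (Fin a))
          (⊤ : SimpleGraph (Fin 4)) n : ℝ) ≤ t := by exact_mod_cast hmain
    _ ≤ D * (q : ℝ) ^ e * Real.log q ^ 2 := by rw [hD]; exact htle
    _ ≤ D * (16 * (n : ℝ) ^ ((1 : ℝ) / 2 - 1 / (16 * a - 10))) * Real.log n ^ 2 := by gcongr
    _ ≤ D * (16 * (n : ℝ) ^ ((1 : ℝ) / 2 - 1 / (16 * a - 10))) * Real.log n ^ 3 := by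
      gcongr
      norm_num
    _ = _ := by ring
end

section
/- There exists a constant C > 0 such that for every sequence p = p(n) with p ≥ n^{−1/3}(log n)^{8/3}, with high probability (probability tending to 1 as n → ∞), ex(G(n,p), C_4) ≤ C · p^{1/2} · n^{3/2}. -/
open MeasureTheory in
/-- The Bernoulli measure on `Bool` with success probability `p`. -/
noncomputable def bernoulliMeasure (p : ℝ) : Measure Bool :=
  ENNReal.ofReal p • Measure.dirac true + ENNReal.ofReal (1 - p) • Measure.dirac false

open MeasureTheory in
/-- The law of the Erdős–Rényi random graph `G(n,p)`, realized as the product Bernoulli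
measure on indicator functions of (potential) edges. -/
noncomputable def gnp (n : ℕ) (p : ℝ) : Measure (Sym2 (Fin n) → Bool) :=
  Measure.pi fun _ => bernoulliMeasure p

/-- The graph on `Fin n` associated to a configuration `ω` of edge indicators. -/
def graphOf {n : ℕ} (ω : Sym2 (Fin n) → Bool) : SimpleGraph (Fin n) :=
  SimpleGraph.fromEdgeSet {e | ω e = true}

/-- `ex(Γ, F)`: the maximum number of edges in an `F`-free subgraph of `Γ`. -/
noncomputable def relTuranNum {V α : Type*} (Γ : SimpleGraph V) (F : SimpleGraph α) : ℕ :=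
  sSup {k | ∃ G' : SimpleGraph V, G' ≤ Γ ∧ ¬ ContainsCopy F G' ∧ k = Nat.card G'.edgeSet}

namespace KW
open Finset
open scoped Classical

variable {V : Type*}

/-! ### Weighted counting of independent sets -/

/-- The `j`-element subsets of `U` no two (possibly equal) elements of which are related by `A`:
the independent `j`-sets of the graph `A` inside `U`. -/
noncomputable def indepSets (A : V → V → Prop) (U : Finset V) (j : ℕ) : Finset (Finset V) :=
  {I ∈ U.powersetCard j | ∀ u ∈ I, ∀ w ∈ I, ¬ A u w}

lemma mem_indepSets {A : V → V → Prop} {U I : Finset V} {j : ℕ} :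
    I ∈ indepSets A U j ↔ (I ⊆ U ∧ #I = j) ∧ ∀ u ∈ I, ∀ w ∈ I, ¬ A u w := by
  simp [indepSets, mem_powersetCard]

lemma card_indepSets_le (A : V → V → Prop) (U : Finset V) (j : ℕ) :
    #(indepSets A U j) ≤ (#U).choose j := by
  rw [← card_powersetCard]
  exact card_filter_le _ _

/-- An independent set either avoids `u`, or consists of `u` and an independent set among the
non-neighbours of `u`. -/
lemma card_indepSets_succ_le (A : V → V → Prop) (U : Finset V) (u : V) (j : ℕ) :
    #(indepSets A U (j + 1)) ≤
      #(indepSets A (U.erase u) (j + 1)) + #(indepSets A ({w ∈ U.erase u | ¬ A u w}) j) := by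
  rw [← card_filter_add_card_filter_not (s := indepSets A U (j + 1)) (fun I => u ∉ I)]
  refine Nat.add_le_add (card_le_card ?_) ?_
  · intro I hI
    rw [mem_filter, mem_indepSets] at hI
    obtain ⟨⟨⟨h1, h2⟩, h3⟩, h4⟩ := hI
    exact mem_indepSets.2 ⟨⟨subset_erase.2 ⟨h1, h4⟩, h2⟩, h3⟩
  · refine card_le_card_of_injOn (fun I => I.erase u) ?_ ?_
    · intro I hI
      rw [mem_coe, mem_filter, mem_indepSets, not_not] at hI
      obtain ⟨⟨⟨h1, h2⟩, h3⟩, h4⟩ := hI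
      refine mem_coe.2 (mem_indepSets.2 ⟨⟨?_, ?_⟩, ?_⟩)
      · intro w hw
        exact mem_filter.2 ⟨erase_subset_erase _ h1 hw, h3 u h4 w (mem_of_mem_erase hw)⟩
      · rw [card_erase_of_mem h4, h2]; rfl
      · exact fun a ha b hb => h3 a (mem_of_mem_erase ha) b (mem_of_mem_erase hb)
    · intro I hI J hJ hIJ
      simp only [coe_filter, Set.mem_ofPred_eq, not_not] at hI hJ
      have : insert u (I.erase u) = insert u (J.erase u) := by
        simp only at hIJ; rw [hIJ]
      rwa [insert_erase hI.2, insert_erase hJ.2] at this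

/-- The Kleitman–Winston bound in weighted form. If every subset of `S` with more than `R`
elements has a vertex whose non-neighbours make up at most a `γ`-fraction of it, and `t` such
shrinkings bring `U` down to size `R`, then at most `t` elements of an independent set are chosen
freely in `U`, and the remaining ones lie in a set of size at most `R`. -/
lemma card_indepSets_mul_pow_le (A : V → V → Prop) (S : Finset V) {x M R γ : ℝ} {d : ℕ}
    (hx : 0 ≤ x) (hγ : 0 ≤ γ) (hR : 0 ≤ R)
    (hM : ∀ i ≤ d, ∀ s : ℕ, (s : ℝ) ≤ R → (s.choose i : ℝ) * x ^ i ≤ M)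
    (hstep : ∀ U ⊆ S, R < #U → ∃ u ∈ U, (#{w ∈ U | ¬ A u w} : ℝ) ≤ γ * #U)
    (U : Finset V) (hU : U ⊆ S) (j : ℕ) (hj : j ≤ d) (t : ℕ) (ht : γ ^ t * #U ≤ R) :
    (#(indepSets A U j) : ℝ) * x ^ j ≤ M * (1 + #U * x) ^ t := by
  have hM1 : 1 ≤ M := by simpa using hM 0 (Nat.zero_le _) 0 (by simpa using hR)
  induction hk : #U using Nat.strong_induction_on generalizing U j t with
  | _ k ih =>
  subst hk
  have hpow : (1 : ℝ) ≤ (1 + #U * x) ^ t :=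
    one_le_pow₀ (le_add_of_nonneg_right (by positivity))
  by_cases hs : (#U : ℝ) ≤ R
  · calc (#(indepSets A U j) : ℝ) * x ^ j ≤ ((#U).choose j : ℝ) * x ^ j := by
          gcongr; exact card_indepSets_le A U j
      _ ≤ M := hM j hj _ hs
      _ ≤ _ := le_mul_of_one_le_right (by linarith) hpow
  push Not at hs
  obtain ⟨u, hu, hdeg⟩ := hstep U hU hs
  cases t with
  | zero => simp at ht; linarith
  | succ t =>
  cases j with
  | zero =>
    have h1 : (#(indepSets A U 0) : ℝ) ≤ 1 := by
      exact_mod_cast (card_indepSets_le A U 0).trans (by simp)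
    calc (#(indepSets A U 0) : ℝ) * x ^ 0 ≤ M := by simpa using h1.trans hM1
      _ ≤ _ := le_mul_of_one_le_right (by linarith) hpow
  | succ j =>
    set U₁ := U.erase u
    set U₂ := {w ∈ U.erase u | ¬ A u w}
    have hc1 : #U₁ + 1 = #U := card_erase_add_one hu
    have hc1' : (#U₁ : ℝ) + 1 = #U := by exact_mod_cast hc1
    have hc2 : #U₂ ≤ #U₁ := card_filter_le _ _
    have hc2' : (#U₂ : ℝ) ≤ #U₁ := by exact_mod_cast hc2
    have hc3 : (#U₂ : ℝ) ≤ γ * #U := by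
      refine le_trans ?_ hdeg
      exact_mod_cast card_le_card (filter_subset_filter _ (erase_subset _ _))
    have hs1 : U₁ ⊆ S := (erase_subset _ _).trans hU
    have e1 := ih #U₁ (by omega) U₁ hs1 (j + 1) hj (t + 1) (by
      refine le_trans ?_ ht
      have : (#U₁ : ℝ) ≤ #U := by linarith
      gcongr) rfl
    have e2 := ih #U₂ (by omega) U₂ ((filter_subset _ _).trans hs1) j (by omega) t (by
      calc γ ^ t * #U₂ ≤ γ ^ t * (γ * #U) := by gcongr
        _ = γ ^ (t + 1) * #U := by ring
        _ ≤ R := ht) rfl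
    have hsplit : (#(indepSets A U (j + 1)) : ℝ) ≤
        #(indepSets A U₁ (j + 1)) + #(indepSets A U₂ j) := by
      exact_mod_cast card_indepSets_succ_le A U u j
    have ha : 0 ≤ (#U₁ : ℝ) * x := by positivity
    calc (#(indepSets A U (j + 1)) : ℝ) * x ^ (j + 1)
        ≤ (#(indepSets A U₁ (j + 1)) + #(indepSets A U₂ j)) * x ^ (j + 1) := by gcongr
      _ = #(indepSets A U₁ (j + 1)) * x ^ (j + 1) + (#(indepSets A U₂ j) * x ^ j) * x := by ring
      _ ≤ M * (1 + #U₁ * x) ^ (t + 1) + (M * (1 + #U₂ * x) ^ t) * x := by gcongr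
      _ ≤ M * (1 + #U₁ * x) ^ (t + 1) + (M * (1 + #U₁ * x) ^ t) * x := by gcongr
      _ = M * ((1 + #U * x) * (1 + #U₁ * x) ^ t) := by rw [← hc1']; ring
      _ ≤ M * ((1 + #U * x) * (1 + #U * x) ^ t) := by
          have hle : (#U₁ : ℝ) ≤ #U := by linarith
          gcongr
      _ = M * (1 + #U * x) ^ (t + 1) := by ring

/-! ### The linking graph of a `C₄`-free graph -/

/-- `G` has no 4-cycle, phrased through codegrees: two distinct vertices have at most one common
neighbour. -/
def C4Free (G : SimpleGraph V) : Prop :=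
  ∀ u w a b, u ≠ w → G.Adj u a → G.Adj w a → G.Adj u b → G.Adj w b → a = b

lemma c4Free_of_not_containsCopy {G : SimpleGraph V}
    (h : ¬ ContainsCopy (SimpleGraph.cycleGraph 4) G) : C4Free G := by
  intro u w a b huw hua hwa hub hwb
  by_contra hab
  refine h ⟨![u, a, w, b], ?_, ?_⟩
  · have := hua.ne; have := hub.ne; have := hwa.ne; have := hwb.ne
    intro i j hij
    fin_cases i <;> fin_cases j <;> simp_all
  · have := hua.symm; have := hub.symm; have := hwa.symm; have := hwb.symm
    intro i j hij
    have hcyc : ∀ i j : Fin 4, (SimpleGraph.cycleGraph 4).Adj i j → j = i + 1 ∨ i = j + 1 := by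
      simp only [SimpleGraph.cycleGraph_adj']; decide
    rcases hcyc i j hij with rfl | rfl
    · fin_cases i <;> assumption
    · fin_cases j <;> assumption

/-- Distinct vertices with a common neighbour. -/
def Linked (G : SimpleGraph V) (u w : V) : Prop := u ≠ w ∧ ∃ a, G.Adj u a ∧ G.Adj w a

/-- Supersaturation: in a `C₄`-free graph a large vertex set `U` of large degrees contains many
linked pairs, because by convexity it spans many cherries and distinct cherries give distinct
pairs. -/
lemma exists_many_linked [Fintype V] {G : SimpleGraph V} (hG : C4Free G) {U : Finset V} {δ : ℝ}
    (hδ : 0 < δ) (hdeg : ∀ u ∈ U, δ ≤ G.degree u) (hU : U.Nonempty)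
    (hlarge : 2 * (Fintype.card V : ℝ) ≤ #U * δ) :
    ∃ u ∈ U, δ ^ 2 / (2 * Fintype.card V) * #U ≤ (#{w ∈ U | Linked G u w} : ℝ) := by
  set n : ℝ := (Fintype.card V : ℝ)
  have hn0 : 0 < n := by
    obtain ⟨u, -⟩ := hU
    have : Nonempty V := ⟨u⟩
    exact Nat.cast_pos.2 Fintype.card_pos
  let I : V → V → ℝ := fun u a => if G.Adj u a then 1 else 0
  have hdegI : ∀ u, (G.degree u : ℝ) = ∑ a, I u a := by
    intro u
    simp [I, ← SimpleGraph.card_neighborFinset_eq_degree, SimpleGraph.neighborFinset_eq_filter]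
  set X : ℝ := ∑ a, ∑ u ∈ U, I u a with hX
  have hX1 : X = ∑ u ∈ U, (G.degree u : ℝ) := by
    rw [hX, sum_comm]; exact sum_congr rfl fun u _ => (hdegI u).symm
  have hX2 : #U * δ ≤ X := by
    rw [hX1, ← nsmul_eq_mul]; exact card_nsmul_le_sum _ _ _ hdeg
  have hcs : X ^ 2 ≤ n * ∑ a, (∑ u ∈ U, I u a) ^ 2 := by
    simpa using sq_sum_le_card_mul_sum_sq (s := (univ : Finset V)) (f := fun a => ∑ u ∈ U, I u a)
  have hcod : ∀ u ∈ U, ∑ w ∈ U, ∑ a, I u a * I w a ≤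
      G.degree u + (#{w ∈ U | Linked G u w} : ℝ) := by
    intro u hu
    rw [← add_sum_erase _ _ hu]
    have h1 : ∑ a, I u a * I u a = G.degree u := by
      rw [hdegI]; exact sum_congr rfl fun a _ => by simp [I]
    rw [h1]
    gcongr
    calc ∑ w ∈ U.erase u, ∑ a, I u a * I w a
        ≤ ∑ w ∈ U.erase u, (if Linked G u w then 1 else 0 : ℝ) := by
          refine sum_le_sum fun w hw => ?_
          have hne : u ≠ w := (ne_of_mem_erase hw).symm
          have h2 : ∑ a, I u a * I w a = (#{a | G.Adj u a ∧ G.Adj w a} : ℝ) := by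
            rw [card_filter]; push_cast
            refine sum_congr rfl fun a _ => ?_
            simp only [I]; split_ifs <;> simp_all
          rw [h2]
          split_ifs with hl
          · have : #{a | G.Adj u a ∧ G.Adj w a} ≤ 1 := by
              refine card_le_one.2 fun a ha b hb => ?_
              simp only [mem_filter, mem_univ, true_and] at ha hb
              exact hG u w a b hne ha.1 ha.2 hb.1 hb.2
            exact_mod_cast this
          · have : #{a | G.Adj u a ∧ G.Adj w a} = 0 := by
              refine card_eq_zero.2 (filter_eq_empty_iff.2 fun a _ ha => hl ⟨hne, a, ha⟩)
            simp [this]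
      _ ≤ ∑ w ∈ U, (if Linked G u w then 1 else 0 : ℝ) :=
          sum_le_sum_of_subset_of_nonneg (erase_subset _ _) fun _ _ _ => by split_ifs <;> simp
      _ = (#{w ∈ U | Linked G u w} : ℝ) := by simp
  have hsq : ∑ a, (∑ u ∈ U, I u a) ^ 2 = ∑ u ∈ U, ∑ w ∈ U, ∑ a, I u a * I w a := by
    simp_rw [sq, sum_mul_sum]
    rw [sum_comm]
    exact sum_congr rfl fun u _ => sum_comm
  have htot : X ^ 2 / n - X ≤ ∑ u ∈ U, (#{w ∈ U | Linked G u w} : ℝ) := by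
    have h3 := sum_le_sum hcod
    rw [← hsq, sum_add_distrib, ← hX1] at h3
    have : X ^ 2 / n ≤ ∑ a, (∑ u ∈ U, I u a) ^ 2 := by
      rw [div_le_iff₀ hn0]; linarith
    linarith
  refine exists_le_of_sum_le hU ?_
  calc ∑ _u ∈ U, δ ^ 2 / (2 * n) * #U = (#U * δ) ^ 2 / (2 * n) := by
        rw [sum_const, nsmul_eq_mul]; ring
    _ ≤ X ^ 2 / (2 * n) := by gcongr
    _ ≤ X ^ 2 / n - X := by
        have h4 : X * (2 * n) ≤ X ^ 2 := by nlinarith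
        have h5 : X ≤ X ^ 2 / (2 * n) := by rwa [le_div_iff₀ (by positivity)]
        have h6 : X ^ 2 / n = 2 * (X ^ 2 / (2 * n)) := by field_simp
        linarith
    _ ≤ _ := htot

/-! ### Peeling off vertices of minimum degree -/

/-- The `C₄`-free graphs all of whose edges lie inside `S`. -/
noncomputable def graphsOn [Fintype V] (S : Finset V) : Finset (SimpleGraph V) :=
  {G | C4Free G ∧ ∀ u w, G.Adj u w → u ∈ S}

lemma mem_graphsOn [Fintype V] {S : Finset V} {G : SimpleGraph V} :
    G ∈ graphsOn S ↔ C4Free G ∧ ∀ u w, G.Adj u w → u ∈ S := by simp [graphsOn]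

lemma C4Free.mono {G H : SimpleGraph V} (hG : C4Free G) (h : H ≤ G) : C4Free H :=
  fun u w a b huw h1 h2 h3 h4 => hG u w a b huw (h h1) (h h2) (h h3) (h h4)

/-- The neighbourhood of `v` in a `C₄`-free graph `G` is independent in the linking graph of
`G - v`. -/
lemma neighborFinset_mem_indepSets [Fintype V] {S : Finset V} {G : SimpleGraph V}
    (hG : G ∈ graphsOn S) (v : V) :
    G.neighborFinset v ∈
      indepSets (Linked (G.deleteIncidenceSet v)) (S.erase v) (G.degree v) := by
  rw [mem_graphsOn] at hG
  refine mem_indepSets.2 ⟨⟨fun u hu => ?_, rfl⟩, ?_⟩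
  · rw [SimpleGraph.mem_neighborFinset] at hu
    exact mem_erase.2 ⟨hu.ne', hG.2 _ _ hu.symm⟩
  · rintro u hu w hw ⟨hne, a, hua, hwa⟩
    rw [SimpleGraph.mem_neighborFinset] at hu hw
    rw [SimpleGraph.deleteIncidenceSet_adj] at hua hwa
    exact hua.2.2 (hG.1 u w a v hne hua.1 hwa.1 hu.symm hw.symm)

lemma degree_le_degree_deleteIncidenceSet [Fintype V] (G : SimpleGraph V) {u v : V} (h : u ≠ v) :
    G.degree u ≤ (G.deleteIncidenceSet v).degree u + 1 := by
  refine le_trans (card_le_card (t := insert v ((G.deleteIncidenceSet v).neighborFinset u)) ?_)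
    (card_insert_le _ _)
  intro w hw
  rw [mem_insert, SimpleGraph.mem_neighborFinset, SimpleGraph.deleteIncidenceSet_adj]
  rw [SimpleGraph.mem_neighborFinset] at hw
  tauto

lemma eq_of_deleteIncidenceSet_eq {G G' : SimpleGraph V} {v : V}
    (h : G.deleteIncidenceSet v = G'.deleteIncidenceSet v) (hN : ∀ w, G.Adj v w ↔ G'.Adj v w) :
    G = G' := by
  ext a b
  by_cases ha : a = v
  · rw [ha]; exact hN b
  by_cases hb : b = v
  · rw [hb, G.adj_comm, G'.adj_comm]; exact hN a
  have := congrArg (fun H : SimpleGraph V => H.Adj a b) h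
  simpa [SimpleGraph.deleteIncidenceSet_adj, ha, hb] using this

/-- The contribution to the weighted count of `C₄`-free graphs on `S` of those in which `v` is a
vertex of minimum degree `d`. -/
lemma sum_minDegree_le [Fintype V] {x Y : ℝ} (hx : 0 ≤ x)
    (hY : ∀ (H : SimpleGraph V) (S : Finset V) (d : ℕ), C4Free H → d ≤ Fintype.card V →
      (∀ u ∈ S, (d : ℝ) - 1 ≤ H.degree u) → (#(indepSets (Linked H) S d) : ℝ) * x ^ d ≤ Y)
    (hY0 : 0 ≤ Y) (S : Finset V) (v : V) (d : ℕ) (hd : d ≤ Fintype.card V) :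
    ∑ G ∈ graphsOn S with G.degree v = d ∧ ∀ u ∈ S, G.degree v ≤ G.degree u, x ^ #G.edgeFinset ≤
      (∑ H ∈ graphsOn (S.erase v), x ^ #H.edgeFinset) * Y := by
  rw [← sum_fiberwise_of_maps_to (t := graphsOn (S.erase v))
    (g := fun G : SimpleGraph V => G.deleteIncidenceSet v), sum_mul]
  swap
  · intro G hG
    obtain ⟨hG, -⟩ := mem_filter.1 hG
    rw [mem_graphsOn] at hG ⊢
    refine ⟨hG.1.mono (G.deleteIncidenceSet_le v), fun u w huw => ?_⟩
    rw [SimpleGraph.deleteIncidenceSet_adj] at huw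
    exact mem_erase.2 ⟨huw.2.1, hG.2 u w huw.1⟩
  refine sum_le_sum fun H hH => ?_
  rw [filter_filter]
  set 𝒢 : Finset (SimpleGraph V) := {G ∈ graphsOn S |
    (G.degree v = d ∧ ∀ u ∈ S, G.degree v ≤ G.degree u) ∧ G.deleteIncidenceSet v = H} with h𝒢
  have hmem : ∀ G ∈ 𝒢, G ∈ graphsOn S ∧ (G.degree v = d ∧ ∀ u ∈ S, G.degree v ≤ G.degree u) ∧
      G.deleteIncidenceSet v = H := fun G hG => mem_filter.1 hG
  have hterm : ∀ G ∈ 𝒢, x ^ #G.edgeFinset = x ^ #H.edgeFinset * x ^ d := by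
    intro G hG
    obtain ⟨-, ⟨h1, -⟩, h3⟩ := hmem G hG
    have h4 : #H.edgeFinset = #G.edgeFinset - G.degree v := by
      subst h3
      convert G.card_edgeFinset_deleteIncidenceSet v
    have h5 : G.degree v ≤ #G.edgeFinset := by
      rw [← G.card_incidenceFinset_eq_degree]
      exact card_le_card (G.incidenceFinset_subset v)
    rw [← pow_add]; congr 1; omega
  rw [sum_congr rfl hterm, sum_const, nsmul_eq_mul]
  rcases 𝒢.eq_empty_or_nonempty with h | ⟨G, hG⟩
  · rw [h]; simp; positivity
  have hcard : #𝒢 ≤ #(indepSets (Linked H) (S.erase v) d) := by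
    refine card_le_card_of_injOn (fun G => G.neighborFinset v) ?_ ?_
    · intro G hG
      obtain ⟨h0, ⟨rfl, -⟩, rfl⟩ := hmem G hG
      exact neighborFinset_mem_indepSets h0 v
    · intro G hG G' hG' heq
      refine eq_of_deleteIncidenceSet_eq (v := v) ?_ ?_
      · rw [(hmem G hG).2.2, (hmem G' hG').2.2]
      · intro w
        simpa using congrArg (fun N => w ∈ N) heq
  have hbound := hY H (S.erase v) d (mem_graphsOn.1 hH).1 hd (by
    intro u hu
    obtain ⟨-, ⟨h1, h2⟩, h⟩ := hmem G hG
    have h3 := h2 u (mem_of_mem_erase hu)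
    have h4 : G.degree u ≤ H.degree u + 1 := by
      subst h
      convert degree_le_degree_deleteIncidenceSet G (ne_of_mem_erase hu)
    have h6 : (d : ℝ) ≤ H.degree u + 1 := by exact_mod_cast (by omega : d ≤ H.degree u + 1)
    linarith)
  calc (#𝒢 : ℝ) * (x ^ #H.edgeFinset * x ^ d)
      ≤ #(indepSets (Linked H) (S.erase v) d) * (x ^ #H.edgeFinset * x ^ d) := by gcongr
    _ = x ^ #H.edgeFinset * (#(indepSets (Linked H) (S.erase v) d) * x ^ d) := by ring
    _ ≤ x ^ #H.edgeFinset * Y := by gcongr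

/-- Peeling off vertices of minimum degree one at a time bounds the weighted number of `C₄`-free
graphs; each vertex costs a factor `|V|` for its choice, `|V| + 1` for its degree and `Y` for its
neighbourhood. -/
lemma sum_graphsOn_le [Fintype V] {x Y : ℝ} (hx : 0 ≤ x)
    (hY : ∀ (H : SimpleGraph V) (S : Finset V) (d : ℕ), C4Free H → d ≤ Fintype.card V →
      (∀ u ∈ S, (d : ℝ) - 1 ≤ H.degree u) → (#(indepSets (Linked H) S d) : ℝ) * x ^ d ≤ Y)
    (hY0 : 0 ≤ Y) (S : Finset V) :
    ∑ G ∈ graphsOn S, x ^ #G.edgeFinset ≤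
      (Fintype.card V * (Fintype.card V + 1) * Y) ^ #S := by
  induction S using Finset.strongInduction with
  | H S ih =>
  rcases S.eq_empty_or_nonempty with rfl | hS
  · have : graphsOn (∅ : Finset V) ⊆ {⊥} := by
      intro G hG
      rw [mem_graphsOn] at hG
      rw [mem_singleton, SimpleGraph.eq_bot_iff_forall_not_adj]
      exact fun a b hab => by simpa using hG.2 a b hab
    have hterm : ∀ G ∈ graphsOn (∅ : Finset V), x ^ #G.edgeFinset ≤ 1 := by
      intro G hG
      have hG0 : G = ⊥ := by simpa using this hG
      rw [card_eq_zero.2 (SimpleGraph.edgeFinset_eq_empty.2 hG0), pow_zero]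
    refine (sum_le_card_nsmul _ _ 1 hterm).trans ?_
    have hcard := card_le_card this
    simpa using hcard
  set N := Fintype.card V
  have hcover : ∀ G ∈ graphsOn S, x ^ #G.edgeFinset ≤
      ∑ q ∈ S ×ˢ range (N + 1), if G.degree q.1 = q.2 ∧ ∀ u ∈ S, G.degree q.1 ≤ G.degree u
        then x ^ #G.edgeFinset else 0 := by
    intro G _
    obtain ⟨v, hv, hmin⟩ := exists_min_image S (fun u => G.degree u) hS
    refine le_trans ?_ (single_le_sum (a := (v, G.degree v)) ?_ ?_)
    · rw [if_pos ⟨rfl, hmin⟩]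
    · intro q _; split_ifs <;> positivity
    · exact mem_product.2 ⟨hv, mem_range.2 (by
        have := G.degree_lt_card_verts v; omega)⟩
  calc ∑ G ∈ graphsOn S, x ^ #G.edgeFinset
      ≤ ∑ G ∈ graphsOn S, ∑ q ∈ S ×ˢ range (N + 1),
          if G.degree q.1 = q.2 ∧ ∀ u ∈ S, G.degree q.1 ≤ G.degree u
            then x ^ #G.edgeFinset else 0 := sum_le_sum hcover
    _ = ∑ q ∈ S ×ˢ range (N + 1), ∑ G ∈ graphsOn S with
          G.degree q.1 = q.2 ∧ ∀ u ∈ S, G.degree q.1 ≤ G.degree u, x ^ #G.edgeFinset := by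
        rw [sum_comm]; exact sum_congr rfl fun q _ => (sum_filter _ _).symm
    _ ≤ ∑ _q ∈ S ×ˢ range (N + 1), (N * (N + 1) * Y) ^ (#S - 1) * Y := by
        refine sum_le_sum fun q hq => ?_
        obtain ⟨h1, h2⟩ := mem_product.1 hq
        refine (sum_minDegree_le hx hY hY0 S q.1 q.2 (by simpa [Nat.lt_succ_iff] using h2)).trans ?_
        have := ih (S.erase q.1) (erase_ssubset h1)
        rw [card_erase_of_mem h1] at this
        gcongr
    _ = #S * (N + 1) * ((N * (N + 1) * Y) ^ (#S - 1) * Y) := by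
        rw [sum_const, card_product, card_range, nsmul_eq_mul]; push_cast; ring
    _ ≤ N * (N + 1) * ((N * (N + 1) * Y) ^ (#S - 1) * Y) := by
        gcongr; exact card_le_univ S
    _ = (N * (N + 1) * Y) ^ (#S - 1 + 1) := by ring
    _ = _ := by rw [Nat.sub_add_cancel hS.card_pos]

/-! ### The weight of the possible neighbourhoods -/

/-- The single-vertex estimate. Here `a = n ^ (1/3)`, `l = (log n) ^ (1/3)` and
`D = (p n) ^ (1/2)`, so that the lower bound on `p` reads `l ^ 8 ≤ p * a` and gives
`a * l ^ 4 ≤ D`. -/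
lemma card_indepSets_linked_le [Fintype V] {a l p D : ℝ} (ha : 3 ≤ a) (hl : 1 ≤ l) (hp : p ≤ 1)
    (hp0 : 0 ≤ p) (hn : (Fintype.card V : ℝ) = a ^ 3) (hlog : Real.exp (l ^ 3) = a ^ 3)
    (hD0 : 0 ≤ D) (hD : D ^ 2 = p * a ^ 3) (hpa : l ^ 8 ≤ p * a)
    (H : SimpleGraph V) (S : Finset V) (d : ℕ) (hH : C4Free H) (hd : d ≤ Fintype.card V)
    (hdeg : ∀ u ∈ S, (d : ℝ) - 1 ≤ H.degree u) :
    (#(indepSets (Linked H) S d) : ℝ) * (Real.exp 1 * p) ^ d ≤ Real.exp (26 * D) := by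
  have hDl : a * l ^ 4 ≤ D := by
    refine le_of_sq_le_sq ?_ hD0
    rw [hD]
    calc (a * l ^ 4) ^ 2 = a ^ 2 * l ^ 8 := by ring
      _ ≤ a ^ 2 * (p * a) := by gcongr
      _ = p * a ^ 3 := by ring
  have hl3 : 1 ≤ l ^ 3 := one_le_pow₀ hl
  have he1 : 0 < Real.exp 1 := Real.exp_pos 1
  have hdn : (d : ℝ) ≤ a ^ 3 := by rw [← hn]; exact_mod_cast hd
  have hSn : (#S : ℝ) ≤ a ^ 3 := by rw [← hn]; exact_mod_cast card_le_univ S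
  rcases le_or_gt (d : ℝ) (a * l) with hsmall | hbig
  · calc (#(indepSets (Linked H) S d) : ℝ) * (Real.exp 1 * p) ^ d
        ≤ (Real.exp (l ^ 3)) ^ d * (Real.exp 1 * 1) ^ d := by
          gcongr
          rw [hlog]
          calc (#(indepSets (Linked H) S d) : ℝ) ≤ ((#S) ^ d : ℕ) := by
                exact_mod_cast (card_indepSets_le _ _ _).trans (Nat.choose_le_pow _ _)
            _ ≤ (a ^ 3) ^ d := by push_cast; gcongr
      _ = Real.exp (d * (l ^ 3 + 1)) := by
          rw [mul_one, ← mul_pow, ← Real.exp_add, ← Real.exp_nat_mul]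
      _ ≤ Real.exp (26 * D) := by
          refine Real.exp_le_exp.2 ?_
          calc (d : ℝ) * (l ^ 3 + 1) ≤ (a * l) * (l ^ 3 + l ^ 3) := by gcongr
            _ = 2 * (a * l ^ 4) := by ring
            _ ≤ 26 * D := by linarith
  have hal : 3 ≤ a * l := by nlinarith
  set δ : ℝ := d - 1 with hδ
  have hδ2 : (d : ℝ) / 2 ≤ δ := by linarith
  have hd0 : 0 < (d : ℝ) := by linarith
  have hδ0 : 0 < δ := by linarith
  set β : ℝ := δ ^ 2 / (2 * a ^ 3) with hβ
  have hβ0 : 0 < β := by positivity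
  set R : ℝ := 2 * a ^ 3 / δ with hR
  have hR0 : 1 ≤ R := by rw [hR, le_div_iff₀ hδ0]; linarith
  set x : ℝ := Real.exp 1 * p with hx
  have hx0 : 0 ≤ x := by positivity
  have hx3 : x ≤ 3 * p := by
    rw [hx]; gcongr; linarith [Real.exp_one_lt_d9]
  clear_value x
  set t : ℕ := ⌈l ^ 3 / β⌉₊ with ht
  have key := card_indepSets_mul_pow_le (Linked H) S (x := x) (M := Real.exp (8 * D)) (R := R)
    (γ := Real.exp (-β)) (d := d) hx0 (Real.exp_pos _).le (by linarith) ?_ ?_ S subset_rfl d le_rfl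
    t ?_
  · refine key.trans ?_
    have ht9 : (t : ℝ) ≤ 9 * (a * l) := by
      calc (t : ℝ) ≤ l ^ 3 / β + 1 := (Nat.ceil_lt_add_one (by positivity)).le
        _ = 2 * a ^ 3 * l ^ 3 / δ ^ 2 + 1 := by rw [hβ]; field_simp
        _ ≤ 2 * a ^ 3 * l ^ 3 / (a * l / 2) ^ 2 + 1 := by gcongr; linarith
        _ = 8 * (a * l) + 1 := by field_simp; ring
        _ ≤ _ := by linarith
    have hbase : 1 + #S * x ≤ Real.exp (2 * l ^ 3) := by
      have h1 : (#S : ℝ) * x ≤ a ^ 3 * (3 * 1) := by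
        gcongr; linarith
      have h2 : 27 ≤ a ^ 3 := by
        calc (27 : ℝ) = 3 ^ 3 := by norm_num
          _ ≤ _ := by gcongr
      rw [two_mul, Real.exp_add, hlog]
      nlinarith
    calc Real.exp (8 * D) * (1 + #S * x) ^ t
        ≤ Real.exp (8 * D) * Real.exp (2 * l ^ 3) ^ t := by gcongr
      _ = Real.exp (8 * D + t * (2 * l ^ 3)) := by rw [← Real.exp_nat_mul, ← Real.exp_add]
      _ ≤ Real.exp (26 * D) := by
          gcongr
          have : (t : ℝ) * (2 * l ^ 3) ≤ 9 * (a * l) * (2 * l ^ 3) := by gcongr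
          nlinarith
  · -- A set of size at most `R ≤ 4 n / d` contributes at most `(R x) ^ i / i!`, where
    -- `R x i ≤ (4 D) ^ 2`; since `i! ≤ i ^ i` this is at most `((4 D) ^ i / i!) ^ 2`.
    intro i hi s hs
    have hRxi : R * x * i ≤ (4 * D) ^ 2 := by
      have hi' : (i : ℝ) ≤ d := by exact_mod_cast hi
      calc R * x * i ≤ (2 * a ^ 3 / (d / 2)) * (3 * p) * d := by rw [hR]; gcongr
        _ = 12 * (p * a ^ 3) := by field_simp; ring
        _ ≤ (4 * D) ^ 2 := by rw [mul_pow, hD]; nlinarith [sq_nonneg D]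
    have hfac : ((i.factorial : ℕ) : ℝ) ≤ (i : ℝ) ^ i := by exact_mod_cast Nat.factorial_le_pow i
    have hf0 : (0 : ℝ) < i.factorial := by exact_mod_cast Nat.factorial_pos i
    calc (s.choose i : ℝ) * x ^ i ≤ (s ^ i / i.factorial : ℝ) * x ^ i := by
          gcongr; exact Nat.choose_le_pow_div i s
      _ ≤ (R ^ i / i.factorial) * x ^ i := by gcongr
      _ = (R * x) ^ i * i.factorial / (i.factorial : ℝ) ^ 2 := by
          rw [mul_pow R x i]; field_simp
      _ ≤ (R * x) ^ i * (i : ℝ) ^ i / (i.factorial : ℝ) ^ 2 := by gcongr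
      _ = (R * x * i) ^ i / (i.factorial : ℝ) ^ 2 := by rw [← mul_pow]
      _ ≤ ((4 * D) ^ 2) ^ i / (i.factorial : ℝ) ^ 2 := by gcongr
      _ = ((4 * D) ^ i / i.factorial) ^ 2 := by
          rw [← pow_mul, mul_comm 2 i, pow_mul, div_pow]
      _ ≤ Real.exp (4 * D) ^ 2 := by
          gcongr; exact Real.pow_div_factorial_le_exp _ (by positivity) i
      _ = Real.exp (8 * D) := by rw [← Real.exp_nat_mul]; congr 1; push_cast; ring
  · intro U hU hRU
    have hU0 : U.Nonempty := by
      rw [← card_pos]; exact_mod_cast (by linarith : (0 : ℝ) < #U)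
    obtain ⟨u, hu, h⟩ := exists_many_linked hH hδ0 (fun u hu => hdeg u (hU hu)) hU0 (by
      rw [hn]; exact ((div_lt_iff₀ hδ0).1 hRU).le)
    refine ⟨u, hu, ?_⟩
    rw [hn] at h
    have hsum : (#{w ∈ U | Linked H u w} : ℝ) + #{w ∈ U | ¬ Linked H u w} = #U := by
      exact_mod_cast card_filter_add_card_filter_not (s := U) (fun w => Linked H u w)
    have h1 : 1 - β ≤ Real.exp (-β) := by linarith [Real.add_one_le_exp (-β)]
    calc (#{w ∈ U | ¬ Linked H u w} : ℝ) ≤ (1 - β) * #U := by linarith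
      _ ≤ _ := by gcongr
  · calc Real.exp (-β) ^ t * #S ≤ Real.exp (-β) ^ t * Real.exp (l ^ 3) := by
          rw [hlog]; gcongr
      _ = Real.exp (l ^ 3 - t * β) := by
          rw [← Real.exp_nat_mul, ← Real.exp_add]; congr 1; ring
      _ ≤ Real.exp 0 := by
          gcongr
          have := (div_le_iff₀ hβ0).1 (Nat.le_ceil (l ^ 3 / β))
          linarith
      _ ≤ R := by simpa using hR0

/-! ### The first moment bound -/

lemma isProbabilityMeasure_gnp (n : ℕ) {p : ℝ} (h0 : 0 ≤ p) (h1 : p ≤ 1) :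
    MeasureTheory.IsProbabilityMeasure (gnp n p) := by
  have : MeasureTheory.IsProbabilityMeasure (bernoulliMeasure p) := by
    refine ⟨?_⟩
    simp only [bernoulliMeasure, MeasureTheory.Measure.coe_add, MeasureTheory.Measure.coe_smul,
      Pi.add_apply, Pi.smul_apply, MeasureTheory.measure_univ, smul_eq_mul, mul_one]
    rw [← ENNReal.ofReal_add h0 (by linarith)]
    simp
  unfold gnp
  infer_instance

/-- The probability that all pairs in `E` are edges. -/
lemma gnp_forall_mem (n : ℕ) {p : ℝ} (h0 : 0 ≤ p) (h1 : p ≤ 1) (E : Finset (Sym2 (Fin n))) :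
    gnp n p {ω | ∀ e ∈ E, ω e = true} = ENNReal.ofReal (p ^ #E) := by
  have hset : {ω : Sym2 (Fin n) → Bool | ∀ e ∈ E, ω e = true} =
      Set.univ.pi fun e => if e ∈ E then {true} else Set.univ := by
    ext ω
    simp only [Set.mem_pi, Set.mem_univ, true_imp_iff, Set.mem_ofPred_eq]
    refine forall_congr' fun e => ?_
    split_ifs with h <;> simp [h]
  have hfin : MeasureTheory.IsFiniteMeasure (bernoulliMeasure p) := by
    refine ⟨?_⟩
    simp [bernoulliMeasure]
  rw [hset, gnp, MeasureTheory.Measure.pi_pi]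
  have hval : ∀ e, bernoulliMeasure p (if e ∈ E then {true} else Set.univ) =
      if e ∈ E then ENNReal.ofReal p else 1 := by
    intro e
    split_ifs
    · simp [bernoulliMeasure]
    · simp only [bernoulliMeasure, MeasureTheory.Measure.coe_add, MeasureTheory.Measure.coe_smul,
        Pi.add_apply, Pi.smul_apply, MeasureTheory.measure_univ, smul_eq_mul, mul_one]
      rw [← ENNReal.ofReal_add h0 (by linarith)]
      simp
  simp_rw [hval]
  rw [prod_ite_mem, univ_inter, prod_const, ENNReal.ofReal_pow h0]

lemma exists_of_lt_relTuranNum {n : ℕ} {ω : Sym2 (Fin n) → Bool} {m : ℝ} (hm : 0 ≤ m)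
    (h : m < relTuranNum (graphOf ω) (SimpleGraph.cycleGraph 4)) :
    ∃ G ∈ graphsOn (univ : Finset (Fin n)), m < #G.edgeFinset ∧ ∀ e ∈ G.edgeFinset, ω e = true := by
  unfold relTuranNum at h
  set K := {k | ∃ G' : SimpleGraph (Fin n), G' ≤ graphOf ω ∧
    ¬ ContainsCopy (SimpleGraph.cycleGraph 4) G' ∧ k = Nat.card G'.edgeSet}
  have hne : K.Nonempty := by
    by_contra hK
    rw [Set.not_nonempty_iff_eq_empty.1 hK] at h
    simp at h; linarith
  have hbdd : BddAbove K := by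
    refine ⟨Nat.card (Sym2 (Fin n)), ?_⟩
    rintro k ⟨G, -, -, rfl⟩
    exact Nat.card_le_card_of_injective _ Subtype.val_injective
  obtain ⟨G, hle, hfree, hcard⟩ := Nat.sSup_mem hne hbdd
  refine ⟨G, mem_graphsOn.2 ⟨c4Free_of_not_containsCopy hfree, fun _ _ _ => mem_univ _⟩, ?_, ?_⟩
  · rwa [hcard, Nat.card_eq_fintype_card, ← SimpleGraph.edgeFinset_card] at h
  · intro e he
    have h1 := SimpleGraph.edgeSet_mono hle (SimpleGraph.mem_edgeFinset.1 he)
    rw [graphOf, SimpleGraph.edgeSet_fromEdgeSet] at h1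
    exact h1.1

/-- First moment bound, with `a`, `l`, `D` as in `card_indepSets_linked_le`. -/
lemma gnp_relTuranNum_le {n : ℕ} {a l p D : ℝ} (ha : 3 ≤ a) (hl : 1 ≤ l) (hp : p ≤ 1)
    (hp0 : 0 ≤ p) (hn : (n : ℝ) = a ^ 3) (hlog : Real.exp (l ^ 3) = a ^ 3)
    (hD0 : 0 ≤ D) (hD : D ^ 2 = p * a ^ 3) (hpa : l ^ 8 ≤ p * a) :
    gnp n p {ω | 28 * D * n < relTuranNum (graphOf ω) (SimpleGraph.cycleGraph 4)} ≤
      ENNReal.ofReal (Real.exp (-n)) := by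
  have hDl : a * l ^ 4 ≤ D := by
    refine le_of_sq_le_sq ?_ hD0
    rw [hD]
    calc (a * l ^ 4) ^ 2 = a ^ 2 * l ^ 8 := by ring
      _ ≤ a ^ 2 * (p * a) := by gcongr
      _ = p * a ^ 3 := by ring
  have hl3 : 1 ≤ l ^ 3 := one_le_pow₀ hl
  have hDl3 : 3 * l ^ 3 ≤ D := by
    calc 3 * l ^ 3 ≤ a * (l ^ 3 * l) := by gcongr; exact le_mul_of_one_le_right (by positivity) hl
      _ = a * l ^ 4 := by ring
      _ ≤ D := hDl
  have ha27 : 27 ≤ a ^ 3 := by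
    calc (27 : ℝ) = 3 ^ 3 := by norm_num
      _ ≤ _ := by gcongr
  have hZ := sum_graphsOn_le (V := Fin n) (x := Real.exp 1 * p) (Y := Real.exp (26 * D))
    (by positivity)
    (fun H S d hH hd hdeg => card_indepSets_linked_le ha hl hp hp0 (by simpa using hn) hlog hD0 hD
      hpa H S d hH hd hdeg) (Real.exp_pos _).le univ
  rw [card_univ, Fintype.card_fin] at hZ
  have hY : (n : ℝ) * (n + 1) * Real.exp (26 * D) ≤ Real.exp (27 * D) := by
    calc (n : ℝ) * (n + 1) * Real.exp (26 * D) ≤ Real.exp (3 * l ^ 3) * Real.exp (26 * D) := by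
          gcongr
          have h3 : Real.exp (3 * l ^ 3) = (n : ℝ) ^ 3 := by
            rw [hn, ← hlog, ← Real.exp_nat_mul]; norm_num
          have h27 : 27 ≤ (n : ℝ) := by rw [hn]; exact ha27
          rw [h3, pow_succ', sq]
          gcongr
          nlinarith
      _ ≤ Real.exp D * Real.exp (26 * D) := by gcongr
      _ = Real.exp (27 * D) := by rw [← Real.exp_add]; congr 1; ring
  set 𝒢 : Finset (SimpleGraph (Fin n)) := {G ∈ graphsOn univ | 28 * D * n < #G.edgeFinset}
  calc gnp n p {ω | 28 * D * n < relTuranNum (graphOf ω) (SimpleGraph.cycleGraph 4)}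
      ≤ gnp n p (⋃ G ∈ 𝒢, {ω | ∀ e ∈ G.edgeFinset, ω e = true}) := by
        refine MeasureTheory.measure_mono fun ω hω => ?_
        obtain ⟨G, h1, h2, h3⟩ := exists_of_lt_relTuranNum (by positivity) hω
        exact Set.mem_biUnion (mem_coe.2 (mem_filter.2 ⟨h1, h2⟩)) h3
    _ ≤ ∑ G ∈ 𝒢, gnp n p {ω | ∀ e ∈ G.edgeFinset, ω e = true} :=
        MeasureTheory.measure_biUnion_finset_le _ _
    _ = ENNReal.ofReal (∑ G ∈ 𝒢, p ^ #G.edgeFinset) := by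
        rw [ENNReal.ofReal_sum_of_nonneg fun _ _ => by positivity]
        exact sum_congr rfl fun G _ => gnp_forall_mem n hp0 hp _
    _ ≤ ENNReal.ofReal (Real.exp (-n)) := by
        refine ENNReal.ofReal_le_ofReal ?_
        calc ∑ G ∈ 𝒢, p ^ #G.edgeFinset
            ≤ ∑ G ∈ 𝒢, Real.exp (-(28 * D * n)) * (Real.exp 1 * p) ^ #G.edgeFinset := by
              refine sum_le_sum fun G hG => ?_
              have h1 := (mem_filter.1 hG).2
              rw [mul_pow, ← mul_assoc, ← Real.exp_nat_mul, ← Real.exp_add]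
              refine le_mul_of_one_le_left (by positivity) (Real.one_le_exp ?_)
              linarith
          _ ≤ ∑ G ∈ graphsOn univ, Real.exp (-(28 * D * n)) * (Real.exp 1 * p) ^ #G.edgeFinset :=
              sum_le_sum_of_subset_of_nonneg (filter_subset _ _) fun _ _ _ => by positivity
          _ ≤ Real.exp (-(28 * D * n)) * Real.exp (27 * D) ^ n := by
              rw [← mul_sum]
              gcongr
              exact hZ.trans (by gcongr)
          _ = Real.exp (-(D * n)) := by
              rw [← Real.exp_nat_mul, ← Real.exp_add]; congr 1; ring
          _ ≤ Real.exp (-n) := by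
              gcongr
              exact le_mul_of_one_le_left (by positivity) (by linarith)

end KW

theorem stmt9 :
    ∃ C : ℝ, 0 < C ∧ ∀ p : ℕ → ℝ,
      (∀ᶠ n : ℕ in Filter.atTop,
        (n : ℝ) ^ (-(1 : ℝ) / 3) * Real.log n ^ ((8 : ℝ) / 3) ≤ p n ∧ p n ≤ 1) →
      Filter.Tendsto
        (fun n : ℕ => gnp n (p n)
          {ω | (relTuranNum (graphOf ω) (SimpleGraph.cycleGraph 4) : ℝ) ≤
            C * p n ^ ((1 : ℝ) / 2) * (n : ℝ) ^ ((3 : ℝ) / 2)})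
        Filter.atTop (nhds 1) := by
  refine ⟨28, by norm_num, fun p hp => ?_⟩
  have hbad : ∀ᶠ n : ℕ in Filter.atTop, 1 - ENNReal.ofReal (Real.exp (-n)) ≤ gnp n (p n)
      {ω | (relTuranNum (graphOf ω) (SimpleGraph.cycleGraph 4) : ℝ) ≤
        28 * p n ^ ((1 : ℝ) / 2) * (n : ℝ) ^ ((3 : ℝ) / 2)} ∧ gnp n (p n)
      {ω | (relTuranNum (graphOf ω) (SimpleGraph.cycleGraph 4) : ℝ) ≤
        28 * p n ^ ((1 : ℝ) / 2) * (n : ℝ) ^ ((3 : ℝ) / 2)} ≤ 1 := by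
    filter_upwards [hp, Filter.eventually_ge_atTop 27] with n ⟨hlow, hp1⟩ hn
    have hn27 : (27 : ℝ) ≤ n := by exact_mod_cast hn
    have hn0 : (0 : ℝ) < n := by linarith
    have hlog1 : 1 ≤ Real.log n := by
      rw [Real.le_log_iff_exp_le hn0]
      linarith [Real.exp_one_lt_d9]
    have hp0 : 0 ≤ p n := le_trans (by positivity) hlow
    have ha3 : ((n : ℝ) ^ ((1 : ℝ) / 3)) ^ 3 = n := by
      rw [← Real.rpow_natCast, ← Real.rpow_mul hn0.le]; norm_num
    have hl3 : (Real.log n ^ ((1 : ℝ) / 3)) ^ 3 = Real.log n := by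
      rw [← Real.rpow_natCast, ← Real.rpow_mul (by linarith)]; norm_num
    have hl8 : (Real.log n ^ ((1 : ℝ) / 3)) ^ 8 = Real.log n ^ ((8 : ℝ) / 3) := by
      rw [← Real.rpow_natCast, ← Real.rpow_mul (by linarith)]; norm_num
    have hD2 : (p n ^ ((1 : ℝ) / 2) * (n : ℝ) ^ ((1 : ℝ) / 2)) ^ 2 = p n * n := by
      rw [mul_pow, ← Real.rpow_natCast, ← Real.rpow_natCast, ← Real.rpow_mul hp0,
        ← Real.rpow_mul hn0.le]
      norm_num
    have hn32 : (n : ℝ) ^ ((3 : ℝ) / 2) = (n : ℝ) ^ ((1 : ℝ) / 2) * n := by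
      rw [← Real.rpow_add_one hn0.ne']; norm_num
    have key := KW.gnp_relTuranNum_le (n := n) (a := (n : ℝ) ^ ((1 : ℝ) / 3))
      (l := Real.log n ^ ((1 : ℝ) / 3)) (p := p n)
      (D := p n ^ ((1 : ℝ) / 2) * (n : ℝ) ^ ((1 : ℝ) / 2))
      (by
        refine le_of_pow_le_pow_left₀ three_ne_zero (by positivity) ?_
        rw [ha3]; exact le_trans (by norm_num) hn27)
      (Real.one_le_rpow hlog1 (by norm_num)) hp1 hp0 ha3.symm
      (by rw [hl3, ha3, Real.exp_log hn0]) (by positivity) (by rw [hD2, ha3])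
      (by
        rw [hl8]
        have h1 : (n : ℝ) ^ (-(1 : ℝ) / 3) = ((n : ℝ) ^ ((1 : ℝ) / 3))⁻¹ := by
          rw [← Real.rpow_neg hn0.le]; norm_num
        rw [h1, inv_mul_le_iff₀ (by positivity)] at hlow
        linarith)
    have := KW.isProbabilityMeasure_gnp n hp0 hp1
    refine ⟨?_, MeasureTheory.prob_le_one⟩
    rw [tsub_le_iff_right]
    refine le_trans ?_ (add_le_add_right key _)
    rw [← MeasureTheory.measure_univ (μ := gnp n (p n))]
    refine le_trans (MeasureTheory.measure_mono fun ω _ => ?_) (MeasureTheory.measure_union_le _ _)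
    rw [Set.mem_union, Set.mem_ofPred_eq, Set.mem_ofPred_eq, hn32]
    rcases le_or_gt (relTuranNum (graphOf ω) (SimpleGraph.cycleGraph 4) : ℝ)
      (28 * (p n ^ ((1 : ℝ) / 2) * (n : ℝ) ^ ((1 : ℝ) / 2)) * n) with h | h
    · left; linarith
    · right; exact h
  have hlim : Filter.Tendsto (fun n : ℕ => 1 - ENNReal.ofReal (Real.exp (-n))) Filter.atTop
      (nhds 1) := by
    have h1 : Filter.Tendsto (fun n : ℕ => ENNReal.ofReal (Real.exp (-n))) Filter.atTop
        (nhds 0) := by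
      rw [← ENNReal.ofReal_zero]
      exact (ENNReal.continuous_ofReal.tendsto 0).comp
        (Real.tendsto_exp_neg_atTop_nhds_zero.comp tendsto_natCast_atTop_atTop)
    simpa using ENNReal.Tendsto.sub (tendsto_const_nhds (x := (1 : ENNReal))) h1
      (Or.inl ENNReal.one_ne_top)
  exact tendsto_of_tendsto_of_tendsto_of_le_of_le' hlim tendsto_const_nhds
    (hbad.mono fun _ h => h.1) (hbad.mono fun _ h => h.2)
end

section
/- Let F be a graph and let d, r be positive real numbers. Let G be an n-vertex graph such that e(G[A]) ≥ d·|A|² for every vertex subset A with |A| > r. Then there is a function g assigning to every triple (S_h, T, k), where S_h, T ⊆ V(G) and k is a positive integer, a set g(S_h,T,k) ⊆ V(G), such that for every F-independent subset S ⊆ V(G) with ex(|S|,F)·d ≥ log n there exist S_h, T ⊆ V(G) with, writing C := g(S_h, T, |S|): (i) S_h ∪ T ⊆ S and S \ (S_h ∪ T) ⊆ C; (ii) |S_h| ≤ 2·(ex(|S|,F)·(log n)/d)^{1/2}; (iii) |T| ≤ 32·(ex(|S|,F)·(log n)/d)^{1/2}; (iv) |C| ≤ r. -/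
/-- The number of neighbours of `u` in `P`. -/
noncomputable def nbrCount {V : Type*} (G : SimpleGraph V) (P : Finset V) (u : V) : ℕ :=
  open Classical in (P.filter (G.Adj u)).card

/-- The potential `∑_{u ∈ A} (K - |N(u) ∩ P|)`: how many more selected neighbours the candidates in
`A` can absorb before all of them are dropped. -/
noncomputable def potential {V : Type*} (G : SimpleGraph V) (K : ℕ) (A P : Finset V) : ℝ :=
  ∑ u ∈ A, ((K : ℝ) - nbrCount G P u)

lemma nbrCount_mono {V : Type*} (G : SimpleGraph V) {P Q : Finset V} (h : P ⊆ Q) (u : V) :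
    nbrCount G P u ≤ nbrCount G Q u := by
  classical
  exact Finset.card_le_card (Finset.filter_subset_filter _ h)

lemma nbrCount_insert {V : Type*} [DecidableEq V] (G : SimpleGraph V) {P : Finset V} {v : V}
    (h : v ∉ P) (u : V) [Decidable (G.Adj v u)] :
    nbrCount G (insert v P) u = nbrCount G P u + if G.Adj v u then 1 else 0 := by
  classical
  unfold nbrCount
  rw [Finset.filter_insert]
  by_cases hv : G.Adj v u
  · rw [if_pos hv.symm, if_pos hv]
    convert Finset.card_insert_of_notMem (s := P.filter (G.Adj u)) (a := v) (by simp [h]) using 2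
  · rw [if_neg (fun h => hv h.symm), if_neg hv]
    simp

lemma sum_nbrCount {V : Type*} [Fintype V] (G : SimpleGraph V) (A : Finset V) :
    ∑ u ∈ A, nbrCount G A u = 2 * Nat.card (G.induce (A : Set V)).edgeSet := by
  classical
  have h := (G.induce (A : Set V)).sum_degrees_eq_twice_card_edges
  rw [Nat.card_eq_fintype_card, ← SimpleGraph.edgeFinset_card, ← h,
    ← Finset.sum_coe_sort A]
  refine Finset.sum_congr rfl fun u _ => ?_
  unfold nbrCount
  rw [← SimpleGraph.card_neighborFinset_eq_degree]
  symm
  refine Finset.card_bij (fun x _ => x.1) ?_ ?_ ?_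
  · intro x hx
    simpa using hx
  · intro x _ y _ hxy
    exact Subtype.ext hxy
  · intro y hy
    rw [Finset.mem_filter] at hy
    exact ⟨⟨y, hy.1⟩, by simpa using hy.2, rfl⟩

lemma card_le_potential {V : Type*} (G : SimpleGraph V) (K : ℕ) (A P : Finset V)
    (h : ∀ u ∈ A, nbrCount G P u < K) : (A.card : ℝ) ≤ potential G K A P := by
  unfold potential
  rw [Finset.card_eq_sum_ones]
  push_cast
  refine Finset.sum_le_sum fun u hu => ?_
  have : ((nbrCount G P u + 1 : ℕ) : ℝ) ≤ K := by exact_mod_cast h u hu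
  push_cast at this
  linarith

lemma potential_le {V : Type*} (G : SimpleGraph V) (K : ℕ) (A P : Finset V) :
    potential G K A P ≤ K * A.card := by
  unfold potential
  rw [mul_comm, ← nsmul_eq_mul, ← Finset.sum_const]
  refine Finset.sum_le_sum fun u _ => ?_
  have : (0 : ℝ) ≤ nbrCount G P u := Nat.cast_nonneg _
  linarith

lemma potential_mono {V : Type*} (G : SimpleGraph V) (K : ℕ) {A B : Finset V} (P : Finset V)
    (hAB : A ⊆ B) (h : ∀ u ∈ B, nbrCount G P u ≤ K) :
    potential G K A P ≤ potential G K B P := by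
  refine Finset.sum_le_sum_of_subset_of_nonneg hAB fun u hu _ => ?_
  have : (nbrCount G P u : ℝ) ≤ K := by exact_mod_cast h u hu
  linarith

lemma potential_insert {V : Type*} [DecidableEq V] (G : SimpleGraph V) (K : ℕ) (A P : Finset V)
    {v : V} (hv : v ∉ P) :
    potential G K A (insert v P) = potential G K A P - nbrCount G A v := by
  classical
  have h : (nbrCount G A v : ℝ) = ∑ u ∈ A, if G.Adj v u then (1 : ℝ) else 0 := by
    unfold nbrCount
    rw [Finset.sum_boole]
  unfold potential
  rw [h, ← Finset.sum_sub_distrib]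
  refine Finset.sum_congr rfl fun u _ => ?_
  rw [nbrCount_insert G hv]
  push_cast
  ring

/-- The selection process started from candidates `A` and selected vertices `P`. The map `h` sends the
vertices `T` still to be selected to the final candidate set, so the container depends on `T` only. -/
lemma exists_container {V : Type*} [Fintype V] [DecidableEq V] (G : SimpleGraph V) (d r : ℝ)
    (hd : 0 < d) (hr : 0 < r)
    (hG : ∀ A : Finset V, (A.card : ℝ) > r →
      (Nat.card (G.induce (A : Set V)).edgeSet : ℝ) ≥ d * (A.card : ℝ) ^ 2) (K : ℕ) (hK : 0 < K)
    (A P : Finset V) (hAP : Disjoint A P) (hA : ∀ u ∈ A, nbrCount G P u < K) :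
    ∃ h : Finset V → Finset V, (∀ T, ((h T).card : ℝ) ≤ r) ∧
      ∀ X : Finset V, P ⊆ X → (∀ u ∈ X, nbrCount G X u < K) →
        ∃ T ⊆ X ∩ A, (X ∩ A) \ T ⊆ h T ∧
          ∀ N : ℕ, T.card = N + 1 → Real.exp (2 * d / K * N) ≤ potential G K A P := by
  induction hs : A.card using Nat.strong_induction_on generalizing A P with
  | _ s ih =>
  subst hs
  by_cases hAr : (A.card : ℝ) ≤ r
  · refine ⟨fun _ => A, fun _ => hAr, fun X _ _ => ⟨∅, by simp, by simp, by simp⟩⟩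
  push Not at hAr
  have hA0 : A.Nonempty := by
    rw [← Finset.card_pos]
    exact_mod_cast hr.trans hAr
  -- A vertex of at least average degree in `G[A]`.
  obtain ⟨v, hvA, hv⟩ : ∃ v ∈ A, 2 * d * A.card ≤ (nbrCount G A v : ℝ) := by
    apply Finset.exists_le_of_sum_le hA0
    have h1 := sum_nbrCount G A
    have h2 := hG A hAr
    have h3 : (∑ u ∈ A, (nbrCount G A u : ℝ))
        = 2 * (Nat.card (G.induce (A : Set V)).edgeSet : ℝ) := by
      exact_mod_cast h1
    rw [h3, Finset.sum_const, nsmul_eq_mul]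
    nlinarith
  have hvP : v ∉ P := Finset.disjoint_left.1 hAP hvA
  have hlt : (A.erase v).card < A.card := Finset.card_erase_lt_of_mem hvA
  obtain ⟨h₁, hr₁, hX₁⟩ := ih _ hlt (A.erase v) P
    (hAP.mono_left (Finset.erase_subset _ _)) (fun u hu => hA u (Finset.mem_of_mem_erase hu)) rfl
  set B := (A.erase v).filter (fun u => nbrCount G (insert v P) u < K) with hB
  have hBA : B ⊆ A := (Finset.filter_subset _ _).trans (Finset.erase_subset _ _)
  have hvB : v ∉ B := by simp [hB]
  obtain ⟨h₂, hr₂, hX₂⟩ := ih _ ((Finset.card_le_card (Finset.filter_subset _ _)).trans_lt hlt)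
    B (insert v P)
    (Finset.disjoint_insert_right.2 ⟨hvB, hAP.mono_left hBA⟩)
    (fun u hu => (Finset.mem_filter.1 hu).2) rfl
  have hφ1 : (1 : ℝ) ≤ potential G K A P :=
    le_trans (by exact_mod_cast hA0.card_pos) (card_le_potential G K A P hA)
  have hKR : (0 : ℝ) < K := by exact_mod_cast hK
  have hφ2 : potential G K B (insert v P) ≤ Real.exp (-(2 * d / K)) * potential G K A P := by
    have e1 : potential G K B (insert v P) ≤ potential G K A (insert v P) := by
      classical
      refine potential_mono G K _ hBA fun u hu => ?_
      rw [nbrCount_insert G hvP]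
      have := hA u hu
      split_ifs <;> omega
    rw [potential_insert G K A P hvP] at e1
    have e2 : 2 * d / K * potential G K A P ≤ 2 * d * A.card := by
      calc 2 * d / K * potential G K A P ≤ 2 * d / K * (K * A.card) := by
            gcongr
            exact potential_le G K A P
        _ = 2 * d * A.card := by field_simp
    have e3 := Real.add_one_le_exp (-(2 * d / K))
    nlinarith
  refine ⟨fun T => if v ∈ T then h₂ (T.erase v) else h₁ T, fun T => ?_, fun X hPX hX => ?_⟩
  · dsimp only
    split_ifs
    exacts [hr₂ _, hr₁ _]
  by_cases hvX : v ∈ X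
  · obtain ⟨T, hT, hTc, hTN⟩ := hX₂ X (Finset.insert_subset hvX hPX) hX
    have hvT : v ∉ T := fun h => hvB (Finset.mem_inter.1 (hT h)).2
    refine ⟨insert v T, ?_, ?_, ?_⟩
    · exact Finset.insert_subset (Finset.mem_inter.2 ⟨hvX, hvA⟩)
        (hT.trans (Finset.inter_subset_inter_left hBA))
    · dsimp only
      rw [if_pos (Finset.mem_insert_self _ _), Finset.erase_insert hvT]
      intro u hu
      simp only [Finset.mem_sdiff, Finset.mem_inter, Finset.mem_insert, not_or] at hu
      obtain ⟨⟨huX, huA⟩, huv, huT⟩ := hu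
      refine hTc (Finset.mem_sdiff.2 ⟨Finset.mem_inter.2 ⟨huX, ?_⟩, huT⟩)
      exact Finset.mem_filter.2 ⟨Finset.mem_erase.2 ⟨huv, huA⟩,
        (nbrCount_mono G (Finset.insert_subset hvX hPX) u).trans_lt (hX u huX)⟩
    · intro N hN
      rw [Finset.card_insert_of_notMem hvT] at hN
      rcases N with _ | N
      · simpa using hφ1
      · have h3 := (hTN N (by omega)).trans hφ2
        rw [Real.exp_neg, inv_mul_eq_div, le_div_iff₀ (Real.exp_pos _), ← Real.exp_add] at h3
        have h4 : 2 * d / K * ((N + 1 : ℕ) : ℝ) = 2 * d / K * N + 2 * d / K := by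
          push_cast
          ring
        rwa [h4]
  · obtain ⟨T, hT, hTc, hTN⟩ := hX₁ X hPX hX
    have hvT : v ∉ T := fun h => hvX (Finset.mem_inter.1 (hT h)).1
    refine ⟨T, hT.trans (Finset.inter_subset_inter_left (Finset.erase_subset _ _)), ?_, ?_⟩
    · dsimp only
      rw [if_neg hvT]
      intro u hu
      simp only [Finset.mem_sdiff, Finset.mem_inter] at hu
      obtain ⟨⟨huX, huA⟩, huT⟩ := hu
      exact hTc (by
        simpa [huX, huA, huT] using fun h : u = v => hvX (h ▸ huX))
    · intro N hN
      exact (hTN N hN).trans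
        (potential_mono G K P (Finset.erase_subset _ _) fun u hu => (hA u hu).le)

lemma card_edgeSet_le_turanNum {W V : Type*} [Fintype V] (F : SimpleGraph W) (G : SimpleGraph V)
    (S : Finset V) (hS : ¬ ContainsCopy F (G.induce (S : Set V))) :
    Nat.card (G.induce (S : Set V)).edgeSet ≤ turanNum S.card F := by
  classical
  unfold turanNum
  refine le_csSup ?_ ?_
  · refine ⟨Nat.card (Sym2 (Fin S.card)), ?_⟩
    rintro k ⟨H, -, rfl⟩
    exact Nat.card_le_card_of_injective _ Subtype.val_injective
  · let φ : Fin S.card ≃ (S : Set V) := S.equivFin.symm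
    let e : (G.induce (S : Set V)).comap φ ≃g G.induce (S : Set V) :=
      SimpleGraph.Iso.comap φ _
    refine ⟨(G.induce (S : Set V)).comap φ, ?_, ?_⟩
    · rintro ⟨f, hf, hadj⟩
      exact hS ⟨fun a => φ (f a), φ.injective.comp hf, fun a b hab => hadj hab⟩
    · exact (Nat.card_congr e.mapEdgeSet).symm

theorem stmt10 {W V : Type*} [Fintype W] [Fintype V] [DecidableEq V]
    (F : SimpleGraph W) (d r : ℝ) (hd : 0 < d) (hr : 0 < r) (n : ℕ)
    (G : SimpleGraph V) (hn : Fintype.card V = n)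
    (hG : ∀ A : Finset V, (A.card : ℝ) > r →
      (Nat.card (G.induce (A : Set V)).edgeSet : ℝ) ≥ d * (A.card : ℝ) ^ 2) :
    ∃ g : Finset V → Finset V → ℕ → Finset V,
      ∀ S : Finset V, ¬ ContainsCopy F (G.induce (S : Set V)) →
        (turanNum S.card F : ℝ) * d ≥ Real.log n →
        ∃ Sh T : Finset V,
          Sh ∪ T ⊆ S ∧
          ↑(S \ (Sh ∪ T)) ⊆ (↑(g Sh T S.card) : Set V) ∧
          (Sh.card : ℝ) ≤ 2 * ((turanNum S.card F : ℝ) * Real.log n / d) ^ ((1 : ℝ) / 2) ∧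
          (T.card : ℝ) ≤ 32 * ((turanNum S.card F : ℝ) * Real.log n / d) ^ ((1 : ℝ) / 2) ∧
          ((g Sh T S.card).card : ℝ) ≤ r := by
  classical
  by_cases hnr : (n : ℝ) ≤ r
  · refine ⟨fun _ _ _ => Finset.univ, fun S _ _ => ⟨∅, ∅, by simp, by simp, ?_, ?_, ?_⟩⟩
    · simp only [Finset.card_empty, Nat.cast_zero]
      have := Real.log_natCast_nonneg n
      positivity
    · simp only [Finset.card_empty, Nat.cast_zero]
      have := Real.log_natCast_nonneg n
      positivity
    · rwa [Finset.card_univ, hn]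
  push Not at hnr
  have hn0 : (0 : ℝ) < n := hr.trans hnr
  -- The hypothesis for `A = V` bounds `d` through `2 e(G) ≤ n (n - 1)`, which also forces `n ≥ 2`.
  have hdn : 2 * d * n ≤ n - 1 := by
    have h1 := hG Finset.univ (by rwa [Finset.card_univ, hn])
    have h2 := sum_nbrCount G Finset.univ
    have h3 : ∑ u : V, nbrCount G Finset.univ u ≤ n * (n - 1) := by
      calc ∑ u : V, nbrCount G Finset.univ u ≤ ∑ _u : V, (n - 1) := by
            refine Finset.sum_le_sum fun u _ => ?_
            have : nbrCount G Finset.univ u < n := by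
              rw [← hn, ← Finset.card_univ]
              exact Finset.card_lt_card (Finset.filter_ssubset.2 ⟨u, by simp, by simp⟩)
            omega
        _ = n * (n - 1) := by simp [hn]
    rw [h2] at h3
    have h4 : 2 * (Nat.card (G.induce ((Finset.univ : Finset V) : Set V)).edgeSet : ℝ)
        ≤ n * ((n : ℝ) - 1) := by
      have hn1 : 1 ≤ n := by exact_mod_cast hn0
      have := (Nat.cast_le (α := ℝ)).2 h3
      push_cast [Nat.cast_sub hn1] at this
      exact this
    rw [Finset.card_univ, hn] at h1
    refine le_of_mul_le_mul_left ?_ hn0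
    nlinarith
  have hn2 : 2 ≤ n := by
    have : (1 : ℝ) < n := by nlinarith [mul_pos hd hn0]
    exact_mod_cast this
  have hd2 : d ≤ 1 / 2 := by
    by_contra h
    push Not at h
    nlinarith
  have hlog : 1 / 2 ≤ Real.log n := by
    have h1 := Real.log_two_gt_d9
    have h2 : Real.log 2 ≤ Real.log n :=
      Real.log_le_log (by norm_num) (by exact_mod_cast hn2)
    linarith
  have hlog0 : 0 < Real.log n := by linarith
  set L := Real.log n with hL
  let R : ℕ → ℝ := fun k => ((turanNum k F : ℝ) * L / d) ^ ((1 : ℝ) / 2)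
  let D : ℕ → ℝ := fun k => R k * d / L
  let K : ℕ → ℕ := fun k => ⌈D k⌉₊ + 1
  have key := fun k => exists_container G d r hd hr hG (K k) (Nat.succ_pos _)
    Finset.univ ∅ (by simp) (by simp [nbrCount, K])
  choose h hhr hhX using key
  refine ⟨fun _ T k => h k T, fun S hS hSd => ?_⟩
  have hm := card_edgeSet_le_turanNum F G S hS
  set k := S.card with hk
  have hR0 : 0 ≤ R k := by positivity
  have hR2 : R k * R k = turanNum k F * L / d := by
    simp only [R]
    rw [← Real.sqrt_eq_rpow]
    exact Real.mul_self_sqrt (by positivity)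
  have hRD : R k * D k = turanNum k F := by
    simp only [D]
    rw [← mul_div_assoc, ← mul_assoc, hR2]
    field_simp
  have hDL : D k * L = R k * d := by
    simp only [D]
    field_simp
  have hD1 : 1 ≤ D k := by
    have hD0 : 0 ≤ D k := by positivity
    have : L ≤ D k * D k * L := by
      calc L ≤ turanNum k F * d := hSd
        _ = D k * D k * L := by rw [mul_assoc, hDL, ← hRD]; ring
    by_contra hlt
    push Not at hlt
    nlinarith [mul_pos hlog0 (sub_pos.2 hlt), mul_nonneg hD0 hlog0.le]
  have hDR : D k ≤ R k := by
    simp only [D]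
    rw [div_le_iff₀ hlog0]
    exact mul_le_mul_of_nonneg_left (hd2.trans hlog) hR0
  have hKD : (K k : ℝ) ≤ 3 * D k := by
    have := Nat.ceil_lt_add_one (zero_le_one.trans hD1)
    simp only [K]
    push_cast
    linarith
  by_cases hKn : n < K k
  · refine ⟨∅, S, by simp, by simp, ?_, ?_, hhr k S⟩
    · simp only [Finset.card_empty, Nat.cast_zero]
      exact mul_nonneg zero_le_two hR0
    · have h1 : (k : ℝ) ≤ n := by
        rw [hk, ← hn]
        exact_mod_cast Finset.card_le_univ S
      have h2 : (n : ℝ) < K k := by exact_mod_cast hKn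
      change (k : ℝ) ≤ 32 * R k
      linarith
  push Not at hKn
  let Sh := S.filter (fun u => D k ≤ nbrCount G S u)
  have hX : ∀ u ∈ S \ Sh, nbrCount G (S \ Sh) u < K k := by
    intro u hu
    have h1 : (nbrCount G S u : ℝ) < D k := by
      simp only [Sh, Finset.mem_sdiff, Finset.mem_filter, not_and, not_le] at hu
      exact hu.2 hu.1
    refine (nbrCount_mono G Finset.sdiff_subset u).trans_lt ?_
    have h2 : (nbrCount G S u : ℝ) < ⌈D k⌉₊ := h1.trans_le (Nat.le_ceil _)
    have h3 : nbrCount G S u < ⌈D k⌉₊ := by exact_mod_cast h2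
    exact h3.trans (Nat.lt_succ_self _)
  obtain ⟨T, hT, hTc, hTN⟩ := hhX k (S \ Sh) (by simp) hX
  rw [Finset.inter_univ] at hT hTc
  refine ⟨Sh, T, ?_, ?_, ?_, ?_, hhr k T⟩
  · exact Finset.union_subset (Finset.filter_subset _ _) (hT.trans Finset.sdiff_subset)
  · rw [Finset.coe_subset]
    intro u hu
    apply hTc
    simp only [Finset.mem_sdiff, Finset.mem_union] at hu ⊢
    tauto
  · change (Sh.card : ℝ) ≤ 2 * R k
    have h1 : (Sh.card : ℝ) * D k ≤ ∑ u ∈ S, (nbrCount G S u : ℝ) := by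
      rw [← nsmul_eq_mul]
      refine (Finset.card_nsmul_le_sum Sh _ _ fun u hu => (Finset.mem_filter.1 hu).2).trans ?_
      exact Finset.sum_le_sum_of_subset_of_nonneg (Finset.filter_subset _ _)
        fun _ _ _ => Nat.cast_nonneg _
    have h2 : ∑ u ∈ S, (nbrCount G S u : ℝ) ≤ 2 * turanNum k F := by
      have := sum_nbrCount G S
      exact_mod_cast this.trans_le (Nat.mul_le_mul_left 2 hm)
    refine le_of_mul_le_mul_right ?_ (zero_lt_one.trans_le hD1)
    nlinarith
  · change (T.card : ℝ) ≤ 32 * R k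
    rcases hTcard : T.card with _ | N
    · simpa using hR0
    have h1 := hTN N hTcard
    have h2 := h1.trans (potential_le G (K k) Finset.univ ∅)
    rw [Finset.card_univ, hn] at h2
    have hK0 : (0 : ℝ) < K k := by exact_mod_cast Nat.succ_pos _
    have hKn' : (K k : ℝ) ≤ n := by exact_mod_cast hKn
    have h3 : 2 * d / K k * N ≤ 2 * L := by
      rw [← Real.le_log_iff_exp_le (by positivity), Real.log_mul hK0.ne' hn0.ne'] at h2
      have := Real.log_le_log hK0 hKn'
      linarith
    have h4 : d * N ≤ K k * L := by
      rw [div_mul_eq_mul_div, div_le_iff₀ hK0] at h3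
      linarith
    have h5 : (N : ℝ) ≤ 3 * R k := by
      refine le_of_mul_le_mul_left ?_ hd
      nlinarith [mul_le_mul_of_nonneg_right hKD hlog0.le]
    push_cast
    linarith
end
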